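/- Preservation of positivity, evenness and monotonicity for the CCF equation (Lemma ccfmon): Let 0 ≤ α < 1/2 and let θ : ℝ × [0,T] → ℝ be a smooth bounded solution, with all spatial derivatives bounded, of ∂_t θ = (Hθ) ∂_x θ − L_α θ, where H is the Hilbert transform in x and L_α f(x) = P.V. ∫_ℝ (f(x) − f(x+y))/|y|^{1+2α} dy (L_0 = 0 when α = 0). Suppose the initial data θ₀ = θ(·,0) is smooth, bounded, positive, even, and strictly monotone decaying on (0,∞) (θ₀'(x) < 0 for x > 0). Then for every t ∈ [0,T], θ(·,t) remains positive, even, and monotone decaying on (0,∞). -/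

import Mathlib

open Set MeasureTheory Filter Topology

/-- `HilbertPVAt f x v` says that the iterated principal value
`lim_{R→∞} lim_{ε→0+} ∫_{ε<|x−y|<R} f(y)/(x−y) dy` exists and equals `v`
(so that the Hilbert transform of `f` at `x` is `v/π`). -/
def HilbertPVAt (f : ℝ → ℝ) (x v : ℝ) : Prop :=
  ∃ g : ℝ → ℝ,
    (∀ R, 0 < R → Tendsto (fun ε => ∫ y in {y : ℝ | ε < |x - y| ∧ |x - y| < R}, f y / (x - y))
      (nhdsWithin 0 (Ioi 0)) (nhds (g R))) ∧
    Tendsto g atTop (nhds v)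

/-!
The solution itself does not decay, so all energies are `L²` integrals against a decaying weight,
truncated at a radius `R`. Folding the Hilbert transform about the point of evaluation shows that
the drift `Hθ` has a bounded derivative and that `Hθ(x,t) - Hθ(0,t)` grows more slowly than any
power of `x`. Once `Hθ(0,t)` is bounded too, transport, the reaction term `(∂ₓHθ) ∂ₓθ` and, by
convexity and duality, the dissipation cost only a multiple of the energy, and Gronwall's
inequality applies.

* Evenness: the odd part of `θ` solves the equation with a source `w ∂ₓθ`, where `w` is the even
  part of `Hθ`, that is, the Hilbert transform of the odd part. As `∂ₓθ` is square integrable at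
  time `0`, a weighted estimate of the folded transform bounds the source by the energy itself. On a
  short time interval a bound `E` on the energy improves to `E / 2`, so the energy vanishes.
  Evenness then continues in time: `Hθ(0,t) = 0` as long as `θ` is even, and after that the
  equation at a point where `∂ₓθ ≠ 0` bounds the drift for a little longer.
* Monotonicity: for even `θ` the slope is odd, and the part of it having the wrong sign starts from
  zero. For an odd function the kernel of the dissipation compares `x` with both `y` and `-y`, of
  which the one on the same side is nearer, so this part also has a Gronwall bound.
* Positivity: the energies of `max (1 - n θ) 0 ^ 2` tend to zero at time `0` as `n → ∞`, hence
  also later, which gives `0 < θ` almost everywhere; monotonicity upgrades this to every point.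
-/

/-! ### Weights -/

lemma one_le_one_add_sq (x : ℝ) : 1 ≤ 1 + x ^ 2 := le_add_of_nonneg_right (sq_nonneg x)

lemma one_add_sq_pos (x : ℝ) : 0 < 1 + x ^ 2 := one_pos.trans_le (one_le_one_add_sq x)

lemma continuous_one_add_sq_rpow (p : ℝ) : Continuous fun x : ℝ => (1 + x ^ 2) ^ p :=
  Continuous.rpow_const (by fun_prop) fun x => Or.inl (one_add_sq_pos x).ne'

lemma one_le_one_add_sq_rpow {p : ℝ} (hp : 0 ≤ p) (x : ℝ) : 1 ≤ (1 + x ^ 2) ^ p :=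
  Real.one_le_rpow (one_le_one_add_sq x) hp

lemma integrable_one_add_sq_rpow {p : ℝ} (hp : p < -(1 / 2)) :
    Integrable fun x : ℝ => (1 + x ^ 2) ^ p := by
  have := integrable_rpow_neg_one_add_norm_sq (E := ℝ) (μ := volume) (r := -2 * p)
    (by simp; linarith)
  refine this.congr (ae_of_all _ fun x => ?_)
  simp only [Real.norm_eq_abs, sq_abs]
  congr 1; ring

lemma one_add_sq_le_of_abs_sub_le_one {x z : ℝ} (h : |x - z| ≤ 1) :
    1 + x ^ 2 ≤ 4 * (1 + z ^ 2) := by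
  have := abs_le.1 h
  nlinarith [sq_nonneg (x - 2 * z), sq_nonneg (x + z)]

/-- The weights of the energy estimates, indexed by a small exponent `e`: radially decreasing,
decaying no faster than `(1 + x ^ 2) ^ (-(1 / 2 + 2 * e))`, the tail allowed for a kernel in
`IsLevyKernel`, and integrable against `(1 + x ^ 2) ^ (e / 2)`, the growth allowed for the drift. -/
structure IsWeight (e : ℝ) (φ : ℝ → ℝ) : Prop where
  exponent_pos : 0 < e
  exponent_le : e ≤ 1 / 4
  pos : ∀ x, 0 < φ x
  anti : ∀ x z, |x| ≤ |z| → φ z ≤ φ x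
  growth : ∀ x z, |x| ≤ |z| →
    φ x * (1 + x ^ 2) ^ (1 / 2 + 2 * e) ≤ φ z * (1 + z ^ 2) ^ (1 / 2 + 2 * e)
  differentiable : Differentiable ℝ φ
  deriv_le : ∀ x, |deriv φ x| * (1 + x ^ 2) ^ (1 / 2 : ℝ) ≤ 2 * φ x
  integrable_mul : Integrable (fun x => (1 + x ^ 2) ^ (e / 2) * φ x)

namespace IsWeight

variable {e : ℝ} {φ : ℝ → ℝ}

lemma nonneg (hφ : IsWeight e φ) (x : ℝ) : 0 ≤ φ x := (hφ.pos x).le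

lemma continuous (hφ : IsWeight e φ) : Continuous φ := hφ.differentiable.continuous

lemma apply_neg (hφ : IsWeight e φ) (x : ℝ) : φ (-x) = φ x :=
  le_antisymm (hφ.anti _ _ (abs_neg x).ge) (hφ.anti _ _ (abs_neg x).le)

lemma integral_comp_neg_mul (hφ : IsWeight e φ) (f : ℝ → ℝ) :
    ∫ x, f (-x) * φ x = ∫ x, f x * φ x := by
  simpa only [hφ.apply_neg] using integral_neg_eq_self (fun x => f x * φ x) volume

lemma le_mul_of_one_add_sq_le (hφ : IsWeight e φ) {x z q : ℝ} (hq : 1 ≤ q)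
    (h : 1 + x ^ 2 ≤ q * (1 + z ^ 2)) : φ z ≤ q * φ x := by
  rcases le_total |x| |z| with hxz | hxz
  · nlinarith [hφ.anti x z hxz, hφ.pos x]
  have he := hφ.exponent_pos
  have he' := hφ.exponent_le
  have hz := one_add_sq_pos z
  have hrpow : (1 + x ^ 2) ^ (1 / 2 + 2 * e) ≤ q * (1 + z ^ 2) ^ (1 / 2 + 2 * e) :=
    calc (1 + x ^ 2) ^ (1 / 2 + 2 * e) ≤ (q * (1 + z ^ 2)) ^ (1 / 2 + 2 * e) :=
          Real.rpow_le_rpow (one_add_sq_pos x).le h (by linarith)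
      _ = q ^ (1 / 2 + 2 * e) * (1 + z ^ 2) ^ (1 / 2 + 2 * e) :=
          Real.mul_rpow (by linarith) hz.le
      _ ≤ q * (1 + z ^ 2) ^ (1 / 2 + 2 * e) := by
          gcongr
          exact Real.rpow_le_self_of_one_le hq (by linarith)
  refine le_of_mul_le_mul_right ?_ (Real.rpow_pos_of_pos hz (1 / 2 + 2 * e))
  calc _ ≤ φ x * (1 + x ^ 2) ^ (1 / 2 + 2 * e) := hφ.growth z x hxz
    _ ≤ φ x * (q * (1 + z ^ 2) ^ (1 / 2 + 2 * e)) := by gcongr; exact hφ.nonneg x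
    _ = _ := by ring

lemma le_four_mul_of_abs_sub_le_one (hφ : IsWeight e φ) {x z : ℝ} (h : |x - z| ≤ 1) :
    φ z ≤ 4 * φ x :=
  hφ.le_mul_of_one_add_sq_le (by norm_num) (one_add_sq_le_of_abs_sub_le_one h)

lemma abs_deriv_le (hφ : IsWeight e φ) (x : ℝ) : |deriv φ x| ≤ 2 * φ x :=
  (le_mul_of_one_le_right (abs_nonneg _) (one_le_one_add_sq_rpow (by norm_num) x)).trans
    (hφ.deriv_le x)

lemma abs_sub_le (hφ : IsWeight e φ) {x z : ℝ} (h : |x - z| ≤ 1) :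
    |φ z - φ x| ≤ 8 * |z - x| * φ x := by
  have hderiv : ∀ y ∈ uIcc x z, ‖deriv φ y‖ ≤ 8 * φ x := fun y hy => by
    have hxy : |x - y| ≤ 1 := by
      rw [abs_sub_comm] at h ⊢
      exact (abs_sub_left_of_mem_uIcc hy).trans h
    rw [Real.norm_eq_abs]
    linarith [hφ.abs_deriv_le y, hφ.le_four_mul_of_abs_sub_le_one hxy]
  have := (convex_uIcc x z).norm_image_sub_le_of_norm_deriv_le
    (fun y _ => hφ.differentiable y) hderiv left_mem_uIcc right_mem_uIcc
  rw [Real.norm_eq_abs, Real.norm_eq_abs] at this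
  linarith

lemma integrable (hφ : IsWeight e φ) : Integrable φ := by
  refine hφ.integrable_mul.mono' hφ.continuous.aestronglyMeasurable (ae_of_all _ fun x => ?_)
  rw [Real.norm_eq_abs, abs_of_pos (hφ.pos x)]
  exact le_mul_of_one_le_left (hφ.nonneg x)
    (one_le_one_add_sq_rpow (half_pos hφ.exponent_pos).le x)

end IsWeight

/-- The weights actually used: `R` is a truncation radius to be sent to infinity, and the decay
`(1 + x ^ 2) ^ (-ρ)` inside that radius is switched off by `ρ = 0`. -/
noncomputable def polyWeight (e ρ R x : ℝ) : ℝ :=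
  (1 + x ^ 2) ^ (-ρ) * (1 + (x / R) ^ 2) ^ (-(1 / 2 + e))

section PolyWeight

variable {e ρ R : ℝ}

lemma polyWeight_pos (e ρ R x : ℝ) : 0 < polyWeight e ρ R x :=
  mul_pos (Real.rpow_pos_of_pos (one_add_sq_pos _) _) (Real.rpow_pos_of_pos (one_add_sq_pos _) _)

lemma polyWeight_zero_le_one (he : 0 < e) (R x : ℝ) : polyWeight e 0 R x ≤ 1 := by
  rw [polyWeight, neg_zero, Real.rpow_zero, one_mul]
  exact Real.rpow_le_one_of_one_le_of_nonpos (one_le_one_add_sq _) (by linarith)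

lemma rpow_mul_polyWeight (e R x : ℝ) :
    (1 + x ^ 2) ^ e * polyWeight e e R x = polyWeight e 0 R x := by
  rw [polyWeight, polyWeight, ← mul_assoc, ← Real.rpow_add (one_add_sq_pos x), add_neg_cancel,
    neg_zero]

lemma rpow_le_two_mul_polyWeight {x : ℝ} (he : 0 < e) (he' : e ≤ 1 / 4) (hR : 1 ≤ R)
    (hx : |x| ≤ R) : (1 + x ^ 2) ^ (-ρ) ≤ 2 * polyWeight e ρ R x := by
  have hxR : 1 + (x / R) ^ 2 ≤ 2 := by
    have : |x / R| ≤ 1 := by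
      rw [abs_div, abs_of_pos (by linarith : 0 < R)]
      exact div_le_one_of_le₀ hx (by linarith)
    linarith [(sq_le_one_iff_abs_le_one _).2 this]
  have hone : 1 ≤ 2 * (1 + (x / R) ^ 2) ^ (-(1 / 2 + e)) :=
    calc (1 : ℝ) = 2 * 2 ^ (-1 : ℝ) := by norm_num [Real.rpow_neg_one]
      _ ≤ 2 * 2 ^ (-(1 / 2 + e)) := by gcongr <;> linarith
      _ ≤ _ := mul_le_mul_of_nonneg_left
          (Real.rpow_le_rpow_of_nonpos (one_add_sq_pos _) hxR (by linarith)) two_pos.le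
  rw [polyWeight, mul_left_comm]
  exact le_mul_of_one_le_right (Real.rpow_nonneg (one_add_sq_pos x).le _) hone

lemma hasDerivAt_polyWeight (e ρ : ℝ) (hR : R ≠ 0) (x : ℝ) :
    HasDerivAt (polyWeight e ρ R)
      (polyWeight e ρ R x *
        (-(2 * ρ * x / (1 + x ^ 2)) - (1 + 2 * e) * x / (R ^ 2 + x ^ 2))) x := by
  have hx : HasDerivAt (fun x : ℝ => 1 + x ^ 2) (2 * x) x := by
    simpa using (hasDerivAt_pow 2 x).const_add 1
  have hxR : HasDerivAt (fun x : ℝ => 1 + (x / R) ^ 2) (2 * (x / R) * (1 / R)) x := by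
    simpa using (((hasDerivAt_id x).div_const R).pow 2).const_add 1
  refine ((hx.rpow_const (p := -ρ) (Or.inl (one_add_sq_pos x).ne')).mul
    (hxR.rpow_const (p := -(1 / 2 + e)) (Or.inl (one_add_sq_pos (x / R)).ne'))).congr_deriv ?_
  rw [polyWeight, Real.rpow_sub_one (one_add_sq_pos x).ne',
    Real.rpow_sub_one (one_add_sq_pos (x / R)).ne']
  have hne : R ^ 2 + x ^ 2 ≠ 0 := by positivity
  have hne' := (one_add_sq_pos x).ne'
  generalize (1 + (x / R) ^ 2) ^ (-(1 / 2 + e)) = B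
  generalize (1 + x ^ 2) ^ (-ρ) = A
  rw [show 1 + (x / R) ^ 2 = (R ^ 2 + x ^ 2) / R ^ 2 by field_simp]
  field_simp
  ring

lemma polyWeight_le_polyWeight (he : 0 < e) (hρ : 0 ≤ ρ) {x z : ℝ} (h : |x| ≤ |z|) :
    polyWeight e ρ R z ≤ polyWeight e ρ R x := by
  have hsq : x ^ 2 ≤ z ^ 2 := sq_le_sq.2 h
  have hsqR : (x / R) ^ 2 ≤ (z / R) ^ 2 := by rw [div_pow, div_pow]; gcongr
  refine mul_le_mul ?_ ?_ (Real.rpow_nonneg (one_add_sq_pos _).le _)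
    (Real.rpow_nonneg (one_add_sq_pos _).le _)
  · exact Real.rpow_le_rpow_of_nonpos (one_add_sq_pos _) (by linarith) (by linarith)
  · exact Real.rpow_le_rpow_of_nonpos (one_add_sq_pos _) (by linarith) (by linarith)

lemma polyWeight_mul_rpow (e ρ R x : ℝ) :
    polyWeight e ρ R x * (1 + x ^ 2) ^ (1 / 2 + 2 * e)
      = (1 + x ^ 2) ^ (e - ρ) * ((1 + x ^ 2) / (1 + (x / R) ^ 2)) ^ (1 / 2 + e) := by
  have hx := one_add_sq_pos x
  have hxR := one_add_sq_pos (x / R)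
  have hne := (Real.rpow_pos_of_pos hx ρ).ne'
  rw [Real.div_rpow hx.le hxR.le, polyWeight, Real.rpow_neg hxR.le (1 / 2 + e),
    show (1 / 2 + 2 * e : ℝ) = ρ + (e - ρ) + (1 / 2 + e) by ring, Real.rpow_add hx,
    Real.rpow_add hx, Real.rpow_neg hx.le]
  field_simp

lemma polyWeight_mul_rpow_le (he : 0 < e) (hρe : ρ ≤ e) (hR : 1 ≤ R) {x z : ℝ}
    (h : |x| ≤ |z|) : polyWeight e ρ R x * (1 + x ^ 2) ^ (1 / 2 + 2 * e)
      ≤ polyWeight e ρ R z * (1 + z ^ 2) ^ (1 / 2 + 2 * e) := by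
  have hsq : x ^ 2 ≤ z ^ 2 := sq_le_sq.2 h
  have hRinv : (R ^ 2)⁻¹ ≤ 1 := inv_le_one_of_one_le₀ (by nlinarith)
  rw [polyWeight_mul_rpow, polyWeight_mul_rpow]
  refine mul_le_mul ?_ ?_ (by positivity) (by positivity)
  · exact Real.rpow_le_rpow (one_add_sq_pos _).le (by linarith) (by linarith)
  · refine Real.rpow_le_rpow (by positivity) ?_ (by linarith)
    rw [div_le_div_iff₀ (one_add_sq_pos _) (one_add_sq_pos _), div_pow, div_pow,
      div_eq_mul_inv, div_eq_mul_inv]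
    nlinarith

lemma abs_div_one_add_sq_mul_rpow_le (x : ℝ) :
    |x| / (1 + x ^ 2) * (1 + x ^ 2) ^ (1 / 2 : ℝ) ≤ 1 := by
  have hx := one_add_sq_pos x
  have hsqrt : |x| ≤ √(1 + x ^ 2) := Real.abs_le_sqrt (by linarith)
  rw [← Real.sqrt_eq_rpow, div_mul_eq_mul_div, div_le_one hx]
  nlinarith [Real.mul_self_sqrt hx.le, Real.sqrt_nonneg (1 + x ^ 2)]

lemma abs_deriv_polyWeight_mul_rpow_le (he : 0 < e) (he' : e ≤ 1 / 4) (hρ : 0 ≤ ρ) (hρe : ρ ≤ e)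
    (hR : 1 ≤ R) (x : ℝ) :
    |deriv (polyWeight e ρ R) x| * (1 + x ^ 2) ^ (1 / 2 : ℝ) ≤ 2 * polyWeight e ρ R x := by
  have hw := polyWeight_pos e ρ R x
  have hx := one_add_sq_pos x
  have hfirst : |-(2 * ρ * x / (1 + x ^ 2))| = 2 * ρ * (|x| / (1 + x ^ 2)) := by
    rw [abs_neg, abs_div, abs_mul, abs_of_pos hx, abs_of_nonneg (by linarith : 0 ≤ 2 * ρ)]
    ring
  have hsecond : |(1 + 2 * e) * x / (R ^ 2 + x ^ 2)| ≤ (1 + 2 * e) * (|x| / (1 + x ^ 2)) := by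
    rw [abs_div, abs_mul, abs_of_pos (by linarith : 0 < 1 + 2 * e),
      abs_of_pos (by positivity : 0 < R ^ 2 + x ^ 2), mul_div_assoc]
    have : 0 ≤ 1 + 2 * e := by linarith
    gcongr
    nlinarith
  have hlog : |-(2 * ρ * x / (1 + x ^ 2)) - (1 + 2 * e) * x / (R ^ 2 + x ^ 2)|
      ≤ 2 * (|x| / (1 + x ^ 2)) := by
    have : 0 ≤ |x| / (1 + x ^ 2) := by positivity
    refine (abs_sub _ _).trans ?_
    nlinarith
  rw [(hasDerivAt_polyWeight e ρ (by linarith) x).deriv, abs_mul, abs_of_pos hw]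
  calc _ ≤ polyWeight e ρ R x * (2 * (|x| / (1 + x ^ 2))) * (1 + x ^ 2) ^ (1 / 2 : ℝ) := by gcongr
    _ = 2 * polyWeight e ρ R x * (|x| / (1 + x ^ 2) * (1 + x ^ 2) ^ (1 / 2 : ℝ)) := by ring
    _ ≤ 2 * polyWeight e ρ R x :=
        mul_le_of_le_one_right (by positivity) (abs_div_one_add_sq_mul_rpow_le x)

lemma one_add_div_sq_rpow_neg_le {p : ℝ} (hp : 0 ≤ p) (hR : 1 ≤ R) (x : ℝ) :
    (1 + (x / R) ^ 2) ^ (-p) ≤ (R ^ 2) ^ p * (1 + x ^ 2) ^ (-p) := by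
  have hle : (1 + x ^ 2) / R ^ 2 ≤ 1 + (x / R) ^ 2 := by
    rw [div_le_iff₀ (by positivity), div_pow]
    field_simp
    nlinarith
  calc _ ≤ ((1 + x ^ 2) / R ^ 2) ^ (-p) :=
        Real.rpow_le_rpow_of_nonpos (by positivity) hle (by linarith)
    _ = _ := by
        rw [Real.div_rpow (one_add_sq_pos x).le (by positivity),
          Real.rpow_neg (by positivity : 0 ≤ R ^ 2)]
        field_simp

lemma integrable_rpow_mul_polyWeight (he : 0 < e) (hρ : 0 ≤ ρ) (hR : 1 ≤ R) :
    Integrable fun x => (1 + x ^ 2) ^ (e / 2) * polyWeight e ρ R x := by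
  have hdom := (integrable_one_add_sq_rpow (p := e / 2 - (1 / 2 + e)) (by linarith)).const_mul
    ((R ^ 2) ^ (1 / 2 + e))
  refine hdom.mono' (Continuous.aestronglyMeasurable ((continuous_one_add_sq_rpow _).mul ?_))
    (ae_of_all _ fun x => ?_)
  · exact continuous_iff_continuousAt.2 fun x =>
      (hasDerivAt_polyWeight e ρ (by linarith) x).continuousAt
  have hx := one_add_sq_pos x
  rw [Real.norm_eq_abs, abs_of_nonneg (mul_nonneg (by positivity) (polyWeight_pos _ _ _ _).le)]
  have hinner : (1 + x ^ 2) ^ (-ρ) ≤ 1 :=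
    Real.rpow_le_one_of_one_le_of_nonpos (one_le_one_add_sq x) (by linarith)
  calc _ ≤ (1 + x ^ 2) ^ (e / 2)
        * (1 * ((R ^ 2) ^ (1 / 2 + e) * (1 + x ^ 2) ^ (-(1 / 2 + e)))) := by
        rw [polyWeight]
        gcongr
        exact one_add_div_sq_rpow_neg_le (by linarith) hR x
    _ = _ := by rw [Real.rpow_sub hx, Real.rpow_neg hx.le]; field_simp

lemma isWeight_polyWeight (he : 0 < e) (he' : e ≤ 1 / 4) (hρ : 0 ≤ ρ) (hρe : ρ ≤ e)
    (hR : 1 ≤ R) : IsWeight e (polyWeight e ρ R) where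
  exponent_pos := he
  exponent_le := he'
  pos := polyWeight_pos e ρ R
  anti _ _ h := polyWeight_le_polyWeight he hρ h
  growth _ _ h := polyWeight_mul_rpow_le he hρe hR h
  differentiable x := (hasDerivAt_polyWeight e ρ (by linarith) x).differentiableAt
  deriv_le := abs_deriv_polyWeight_mul_rpow_le he he' hρ hρe hR
  integrable_mul := integrable_rpow_mul_polyWeight he hρ hR

end PolyWeight

/-! ### Bounded Lipschitz functions -/

/-- `f` is bounded by `A` and `A`-Lipschitz; sharing one constant keeps the estimates short. -/
structure IsBddLipschitz (f : ℝ → ℝ) (A : ℝ) : Prop where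
  abs_le : ∀ x, |f x| ≤ A
  abs_sub_le : ∀ x z, |f x - f z| ≤ A * |x - z|

namespace IsBddLipschitz

variable {f g f' φ : ℝ → ℝ} {A B : ℝ}

lemma nonneg (hf : IsBddLipschitz f A) : 0 ≤ A := (abs_nonneg _).trans (hf.abs_le 0)

lemma lipschitzWith (hf : IsBddLipschitz f A) : LipschitzWith A.toNNReal f :=
  LipschitzWith.of_dist_le_mul fun x z => by
    rw [Real.dist_eq, Real.dist_eq, Real.coe_toNNReal _ hf.nonneg]
    exact hf.abs_sub_le x z

lemma continuous (hf : IsBddLipschitz f A) : Continuous f := hf.lipschitzWith.continuous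

lemma of_hasDerivAt (hb : ∀ x, |f x| ≤ A) (hd : ∀ x, HasDerivAt f (f' x) x)
    (hb' : ∀ x, |f' x| ≤ A) : IsBddLipschitz f A where
  abs_le := hb
  abs_sub_le x z := by
    simpa using convex_univ.norm_image_sub_le_of_norm_hasDerivWithin_le
      (fun y _ => (hd y).hasDerivWithinAt) (fun y _ => hb' y) (mem_univ z) (mem_univ x)

lemma abs_deriv_le (hf : IsBddLipschitz f A) (hd : ∀ x, HasDerivAt f (f' x) x) (x : ℝ) :
    |f' x| ≤ A := by
  simpa [(hd x).deriv, hf.nonneg] using norm_deriv_le_of_lipschitz (x₀ := x) hf.lipschitzWith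

lemma mono (hf : IsBddLipschitz f A) (h : A ≤ B) : IsBddLipschitz f B where
  abs_le x := (hf.abs_le x).trans h
  abs_sub_le x z := (hf.abs_sub_le x z).trans (by gcongr)

lemma neg (hf : IsBddLipschitz f A) : IsBddLipschitz (fun x => -f x) A where
  abs_le x := (abs_neg _).trans_le (hf.abs_le x)
  abs_sub_le x z := by
    rw [neg_sub_neg, abs_sub_comm]
    exact hf.abs_sub_le x z

lemma comp_neg (hf : IsBddLipschitz f A) : IsBddLipschitz (fun x => f (-x)) A where
  abs_le x := hf.abs_le _
  abs_sub_le x z := by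
    simpa only [neg_sub_neg, abs_sub_comm z x] using hf.abs_sub_le (-x) (-z)

lemma sub (hf : IsBddLipschitz f A) (hg : IsBddLipschitz g B) :
    IsBddLipschitz (fun x => f x - g x) (A + B) where
  abs_le x := (abs_sub _ _).trans (add_le_add (hf.abs_le x) (hg.abs_le x))
  abs_sub_le x z := by
    rw [sub_sub_sub_comm]
    linarith [abs_sub (f x - f z) (g x - g z), hf.abs_sub_le x z, hg.abs_sub_le x z]

lemma mul (hf : IsBddLipschitz f A) (hg : IsBddLipschitz g B) :
    IsBddLipschitz (fun x => f x * g x) (2 * A * B) where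
  abs_le x := by
    rw [abs_mul]
    nlinarith [mul_le_mul (hf.abs_le x) (hg.abs_le x) (abs_nonneg _) hf.nonneg,
      mul_nonneg hf.nonneg hg.nonneg]
  abs_sub_le x z := by
    rw [show f x * g x - f z * g z = f x * (g x - g z) + (f x - f z) * g z by ring]
    refine (abs_add_le _ _).trans ?_
    rw [abs_mul, abs_mul]
    linarith [mul_le_mul (hf.abs_le x) (hg.abs_sub_le x z) (abs_nonneg _) hf.nonneg,
      mul_le_mul (hf.abs_sub_le x z) (hg.abs_le z) (abs_nonneg _)
        (mul_nonneg hf.nonneg (abs_nonneg _))]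

lemma sq (hf : IsBddLipschitz f A) : IsBddLipschitz (fun x => f x ^ 2) (2 * A * A) := by
  simpa only [pow_two] using hf.mul hf

lemma abs_sub_add_le (hf : IsBddLipschitz f A) (x y : ℝ) :
    |f x - f (x + y)| ≤ 2 * A * min |y| 1 := by
  have hlip := hf.abs_sub_le x (x + y)
  rw [sub_add_cancel_left, abs_neg] at hlip
  rcases le_total |y| 1 with h | h
  · rw [min_eq_left h]
    nlinarith [abs_nonneg y, hf.nonneg]
  · rw [min_eq_right h]
    linarith [abs_sub (f x) (f (x + y)), hf.abs_le x, hf.abs_le (x + y)]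

lemma integrable_mul (hf : IsBddLipschitz f A) (hφ : Integrable φ) :
    Integrable fun x => f x * φ x :=
  hφ.bdd_mul hf.continuous.aestronglyMeasurable (ae_of_all _ hf.abs_le)

end IsBddLipschitz

/-! ### The nonlocal operator -/

/-- Even, radially decreasing kernels of Lévy type: the singularity at the origin is integrable
against Lipschitz increments, and the decay at infinity is at least `|y| ^ (-(1 + 4 * e))`. -/
structure IsLevyKernel (e : ℝ) (κ : ℝ → ℝ) : Prop where
  measurable : Measurable κ
  nonneg : ∀ y, 0 ≤ κ y
  even : ∀ y, κ (-y) = κ y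
  anti : ∀ y z, y ≠ 0 → |y| ≤ |z| → κ z ≤ κ y
  tail : ∀ y, 1 ≤ |y| → κ y ≤ 2 * (1 + y ^ 2) ^ (-(1 / 2 + 2 * e))
  integrable : Integrable fun y => min |y| 1 * κ y

/-- The nonlocal operator with kernel `κ`, as an absolutely convergent integral: for kernels in
`IsLevyKernel` and bounded Lipschitz functions no principal value is needed. -/
noncomputable def levyOp (κ f : ℝ → ℝ) (x : ℝ) : ℝ := ∫ y, (f x - f (x + y)) * κ y

section LevyOp

variable {e : ℝ} {κ f f' g φ : ℝ → ℝ} {A B : ℝ}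

lemma IsLevyKernel.integral_nonneg (hκ : IsLevyKernel e κ) : 0 ≤ ∫ y, min |y| 1 * κ y :=
  MeasureTheory.integral_nonneg fun y => mul_nonneg (by positivity) (hκ.nonneg y)

lemma IsBddLipschitz.abs_sub_mul_kernel_le (hf : IsBddLipschitz f A) (hκ : IsLevyKernel e κ)
    (x y : ℝ) : |(f x - f (x + y)) * κ y| ≤ 2 * A * (min |y| 1 * κ y) := by
  rw [abs_mul, abs_of_nonneg (hκ.nonneg y), ← mul_assoc]
  exact mul_le_mul_of_nonneg_right (hf.abs_sub_add_le x y) (hκ.nonneg y)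

lemma IsBddLipschitz.integrable_sub_mul_kernel (hf : IsBddLipschitz f A) (hκ : IsLevyKernel e κ)
    (x : ℝ) : Integrable fun y => (f x - f (x + y)) * κ y := by
  refine (hκ.integrable.const_mul (2 * A)).mono' ?_ (ae_of_all _ (hf.abs_sub_mul_kernel_le hκ x))
  have := hf.continuous
  exact ((by fun_prop : Continuous fun y => f x - f (x + y)).measurable.mul
    hκ.measurable).aestronglyMeasurable

lemma IsBddLipschitz.abs_levyOp_le (hf : IsBddLipschitz f A) (hκ : IsLevyKernel e κ) (x : ℝ) :
    |levyOp κ f x| ≤ 2 * A * ∫ y, min |y| 1 * κ y := by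
  rw [← integral_const_mul, ← Real.norm_eq_abs]
  exact norm_integral_le_of_norm_le (hκ.integrable.const_mul (2 * A))
    (ae_of_all _ (hf.abs_sub_mul_kernel_le hκ x))

lemma IsBddLipschitz.continuous_levyOp (hf : IsBddLipschitz f A) (hκ : IsLevyKernel e κ) :
    Continuous (levyOp κ f) := by
  have hfc := hf.continuous
  refine continuous_of_dominated (fun x => (hf.integrable_sub_mul_kernel hκ x).aestronglyMeasurable)
    (fun x => ae_of_all _ fun y => hf.abs_sub_mul_kernel_le hκ x y)
    (hκ.integrable.const_mul (2 * A)) (ae_of_all _ fun y => ?_)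
  fun_prop

lemma levyOp_sub (hκ : IsLevyKernel e κ) (hf : IsBddLipschitz f A) (hg : IsBddLipschitz g B)
    (x : ℝ) : levyOp κ (fun x => f x - g x) x = levyOp κ f x - levyOp κ g x := by
  simp only [levyOp]
  rw [← integral_sub (hf.integrable_sub_mul_kernel hκ x) (hg.integrable_sub_mul_kernel hκ x)]
  congr 1 with y
  ring

lemma levyOp_comp_neg (hκ : IsLevyKernel e κ) (f : ℝ → ℝ) (x : ℝ) :
    levyOp κ (fun x => f (-x)) x = levyOp κ f (-x) := by
  simp only [levyOp]
  rw [← integral_neg_eq_self (fun y => (f (-x) - f (-x + y)) * κ y)]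
  simp only [hκ.even, neg_add]

lemma hasDerivAt_levyOp (hκ : IsLevyKernel e κ) (hf : IsBddLipschitz f A)
    (hf' : IsBddLipschitz f' B) (hd : ∀ x, HasDerivAt f (f' x) x) (x : ℝ) :
    HasDerivAt (levyOp κ f) (levyOp κ f' x) x := by
  refine (hasDerivAt_integral_of_dominated_loc_of_deriv_le (s := univ)
    (F := fun x y => (f x - f (x + y)) * κ y) (F' := fun x y => (f' x - f' (x + y)) * κ y) univ_mem
    (Eventually.of_forall fun x => (hf.integrable_sub_mul_kernel hκ x).aestronglyMeasurable)
    (hf.integrable_sub_mul_kernel hκ x) (hf'.integrable_sub_mul_kernel hκ x).aestronglyMeasurable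
    (ae_of_all _ fun y x _ => hf'.abs_sub_mul_kernel_le hκ x y)
    (hκ.integrable.const_mul (2 * B)) (ae_of_all _ fun y x _ => ?_)).2
  exact ((hd x).sub ((hd (x + y)).comp_add_const x y)).mul_const _

-- For convex `F`, the hypothesis holds with `g = F ∘ f` and `p = F' (f x)`.
lemma levyOp_le_mul_levyOp (hκ : IsLevyKernel e κ) (hf : IsBddLipschitz f A)
    (hg : IsBddLipschitz g B) {x p : ℝ} (h : ∀ z, g x - g z ≤ p * (f x - f z)) :
    levyOp κ g x ≤ p * levyOp κ f x := by
  simp only [levyOp]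
  rw [← integral_const_mul]
  refine integral_mono (hg.integrable_sub_mul_kernel hκ x)
    ((hf.integrable_sub_mul_kernel hκ x).const_mul p) fun y => ?_
  simpa [mul_assoc] using mul_le_mul_of_nonneg_right (h (x + y)) (hκ.nonneg y)

namespace IsWeight

lemma mul_kernel_le_of_le_two_mul_abs_sub (hφ : IsWeight e φ) (hκ : IsLevyKernel e κ) {x y : ℝ}
    (h : |x| ≤ 2 * |x - y|) : φ (x - y) * κ y ≤ 4 * (φ x * κ y) := by
  have hsq : x ^ 2 ≤ (2 * (x - y)) ^ 2 := sq_le_sq.2 (by rwa [abs_mul, abs_two])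
  rw [← mul_assoc]
  exact mul_le_mul_of_nonneg_right (hφ.le_mul_of_one_add_sq_le (by norm_num) (by linarith))
    (hκ.nonneg y)

lemma mul_kernel_le_of_two_mul_abs_sub_le (hφ : IsWeight e φ) (hκ : IsLevyKernel e κ) {x y : ℝ}
    (hy : 1 ≤ |y|) (h : 2 * |x - y| ≤ |x|) :
    φ (x - y) * κ y ≤ 8 * (φ x * (1 + (x - y) ^ 2) ^ (-(1 / 2 + 2 * e))) := by
  have he := hφ.exponent_pos
  have he' := hφ.exponent_le
  have hsq : x ^ 2 ≤ (2 * y) ^ 2 := sq_le_sq.2 (by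
    rw [abs_mul, abs_two]
    linarith [abs_sub_abs_le_abs_sub x y])
  have hgrowth := hφ.growth (x - y) x (by linarith [abs_nonneg (x - y)])
  have htail := hκ.tail y hy
  set p : ℝ := 1 / 2 + 2 * e with hp
  rw [Real.rpow_neg (one_add_sq_pos y).le] at htail
  rw [Real.rpow_neg (one_add_sq_pos (x - y)).le]
  have hpz := Real.rpow_pos_of_pos (one_add_sq_pos (x - y)) p
  have hratio : (1 + x ^ 2) ^ p * ((1 + y ^ 2) ^ p)⁻¹ ≤ 4 := by
    rw [← div_eq_mul_inv, ← Real.div_rpow (one_add_sq_pos x).le (one_add_sq_pos y).le]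
    calc ((1 + x ^ 2) / (1 + y ^ 2)) ^ p ≤ 4 ^ p := by
          refine Real.rpow_le_rpow (by positivity) ?_ (by linarith)
          rw [div_le_iff₀ (one_add_sq_pos y)]
          linarith
      _ ≤ 4 := Real.rpow_le_self_of_one_le (by norm_num) (by linarith)
  have hφx := hφ.nonneg x
  calc φ (x - y) * κ y
      ≤ (φ x * (1 + x ^ 2) ^ p * ((1 + (x - y) ^ 2) ^ p)⁻¹) * (2 * ((1 + y ^ 2) ^ p)⁻¹) := by
        refine mul_le_mul ?_ htail (hκ.nonneg y) (by positivity)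
        rwa [← div_eq_mul_inv, le_div_iff₀ hpz]
    _ = 2 * (φ x * ((1 + (x - y) ^ 2) ^ p)⁻¹) * ((1 + x ^ 2) ^ p * ((1 + y ^ 2) ^ p)⁻¹) := by ring
    _ ≤ 2 * (φ x * ((1 + (x - y) ^ 2) ^ p)⁻¹) * 4 := by gcongr
    _ = _ := by ring

lemma abs_sub_mul_kernel_le (hφ : IsWeight e φ) (hκ : IsLevyKernel e κ) (x y : ℝ) :
    |(φ (x - y) - φ x) * κ y|
      ≤ φ x * (8 * (min |y| 1 * κ y) + 8 * (1 + (x - y) ^ 2) ^ (-(1 / 2 + 2 * e))) := by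
  have hκy := hκ.nonneg y
  have htail : 0 ≤ φ x * (1 + (x - y) ^ 2) ^ (-(1 / 2 + 2 * e)) :=
    mul_nonneg (hφ.nonneg x) (by positivity)
  have hφκ := mul_nonneg (hφ.nonneg x) hκy
  rw [abs_mul, abs_of_nonneg hκy]
  rcases le_total |y| 1 with hy | hy
  · have := hφ.abs_sub_le (x := x) (z := x - y) (by simpa using hy)
    rw [sub_sub_cancel_left, abs_neg] at this
    rw [min_eq_left hy]
    linarith [mul_le_mul_of_nonneg_right this hκy]
  · have hsub : |φ (x - y) - φ x| ≤ φ (x - y) + φ x :=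
      (abs_sub _ _).trans_eq (by rw [abs_of_pos (hφ.pos _), abs_of_pos (hφ.pos _)])
    have hsub_mul := mul_le_mul_of_nonneg_right hsub hκy
    rw [min_eq_right hy, one_mul]
    rcases le_total |x| (2 * |x - y|) with h | h
    · linarith [hφ.mul_kernel_le_of_le_two_mul_abs_sub hκ h]
    · linarith [hφ.mul_kernel_le_of_two_mul_abs_sub_le hκ hy h]

end IsWeight

/-- The factor lost when `levyOp κ` is moved onto a weight by duality. -/
noncomputable def kernelConst (e : ℝ) (κ : ℝ → ℝ) : ℝ :=
  8 * (∫ y, min |y| 1 * κ y) + 8 * ∫ y : ℝ, (1 + y ^ 2) ^ (-(1 / 2 + 2 * e))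

lemma IsLevyKernel.kernelConst_nonneg (hκ : IsLevyKernel e κ) : 0 ≤ kernelConst e κ := by
  have := hκ.integral_nonneg
  rw [kernelConst]
  positivity

namespace IsWeight

lemma integrable_tail (hφ : IsWeight e φ) :
    Integrable fun y : ℝ => (1 + y ^ 2) ^ (-(1 / 2 + 2 * e)) :=
  integrable_one_add_sq_rpow (by linarith [hφ.exponent_pos])

lemma integrable_kernel_bound (hφ : IsWeight e φ) (hκ : IsLevyKernel e κ) (x : ℝ) : Integrable
    fun y => φ x * (8 * (min |y| 1 * κ y) + 8 * (1 + (x - y) ^ 2) ^ (-(1 / 2 + 2 * e))) :=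
  ((hκ.integrable.const_mul 8).add
    ((hφ.integrable_tail.comp_sub_left x).const_mul 8)).const_mul (φ x)

lemma integral_abs_sub_mul_kernel_le (hφ : IsWeight e φ) (hκ : IsLevyKernel e κ) (x : ℝ) :
    ∫ y, |(φ (x - y) - φ x) * κ y| ≤ kernelConst e κ * φ x :=
  calc _ ≤ ∫ y, φ x * (8 * (min |y| 1 * κ y) + 8 * (1 + (x - y) ^ 2) ^ (-(1 / 2 + 2 * e))) :=
        integral_mono_of_nonneg (ae_of_all _ fun y => abs_nonneg _)
          (hφ.integrable_kernel_bound hκ x) (ae_of_all _ (hφ.abs_sub_mul_kernel_le hκ x))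
    _ = kernelConst e κ * φ x := by
        rw [integral_const_mul, integral_add (hκ.integrable.const_mul 8)
          ((hφ.integrable_tail.comp_sub_left x).const_mul 8), integral_const_mul,
          integral_const_mul,
          integral_sub_left_eq_self (fun y : ℝ => (1 + y ^ 2) ^ (-(1 / 2 + 2 * e))) volume x,
          kernelConst, mul_comm]

lemma integrable_prod_mul_kernel (hφ : IsWeight e φ) (hκ : IsLevyKernel e κ)
    (hf : IsBddLipschitz f A) :
    Integrable fun p : ℝ × ℝ => f p.1 * ((φ (p.1 - p.2) - φ p.1) * κ p.2) := by
  have hfc := hf.continuous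
  have hφc := hφ.continuous
  have htail : Integrable fun p : ℝ × ℝ =>
      φ p.1 * (1 + (p.1 - p.2) ^ 2) ^ (-(1 / 2 + 2 * e)) := by
    refine (hφ.integrable.convolution_integrand (ContinuousLinearMap.mul ℝ ℝ)
      hφ.integrable_tail).swap.congr (ae_of_all _ fun p => ?_)
    simp only [Function.comp, Prod.fst_swap, Prod.snd_swap, ContinuousLinearMap.mul_apply']
    rw [sub_sq_comm]
  refine (((hφ.integrable.mul_prod (hκ.integrable.const_mul 8)).add
    (htail.const_mul 8)).const_mul A).mono' ?_ (ae_of_all _ fun p => ?_)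
  · have hsub : Measurable fun p : ℝ × ℝ => φ (p.1 - p.2) - φ p.1 :=
      Continuous.measurable (by fun_prop)
    exact ((hfc.measurable.comp measurable_fst).mul
      (hsub.mul (hκ.measurable.comp measurable_snd))).aestronglyMeasurable
  · rw [Real.norm_eq_abs, abs_mul]
    refine (mul_le_mul (hf.abs_le _) (hφ.abs_sub_mul_kernel_le hκ p.1 p.2) (abs_nonneg _)
      hf.nonneg).trans_eq ?_
    simp only [Pi.add_apply]
    ring

lemma integrable_prod_sub_mul_kernel (hφ : IsWeight e φ) (hκ : IsLevyKernel e κ)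
    (hf : IsBddLipschitz f A) :
    Integrable fun p : ℝ × ℝ => (f p.1 - f (p.1 + p.2)) * κ p.2 * φ p.1 := by
  have hfc := hf.continuous
  refine ((hφ.integrable.mul_prod hκ.integrable).const_mul (2 * A)).mono' ?_
    (ae_of_all _ fun p => ?_)
  · have : Measurable fun p : ℝ × ℝ => f p.1 - f (p.1 + p.2) := Continuous.measurable (by fun_prop)
    exact ((this.mul (hκ.measurable.comp measurable_snd)).mul
      (hφ.continuous.measurable.comp measurable_fst)).aestronglyMeasurable
  · rw [Real.norm_eq_abs, abs_mul, abs_of_pos (hφ.pos _)]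
    linarith [mul_le_mul_of_nonneg_right (hf.abs_sub_mul_kernel_le hκ p.1 p.2) (hφ.nonneg p.1)]

lemma integrable_levyOp_mul (hφ : IsWeight e φ) (hκ : IsLevyKernel e κ)
    (hf : IsBddLipschitz f A) : Integrable fun x => levyOp κ f x * φ x :=
  (hφ.integrable_prod_sub_mul_kernel hκ hf).integral_prod_left.congr
    (ae_of_all _ fun x => integral_mul_const (φ x) fun y => (f x - f (x + y)) * κ y)

end IsWeight

lemma IsBddLipschitz.integral_sub_shift_mul (hf : IsBddLipschitz f A) (hφ : Integrable φ) (y : ℝ) :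
    ∫ x, (f x - f (x + y)) * φ x = -∫ x, f x * (φ (x - y) - φ x) := by
  have hfc := hf.continuous
  have hfφ := hf.integrable_mul hφ
  have hshift : Integrable fun x => f (x + y) * φ x :=
    hφ.bdd_mul (by fun_prop : Continuous fun x => f (x + y)).aestronglyMeasurable
      (ae_of_all _ fun x => hf.abs_le (x + y))
  have htrans : ∫ x, f (x + y) * φ x = ∫ x, f x * φ (x - y) := by
    rw [← integral_add_right_eq_self (fun x => f x * φ (x - y)) y]
    simp only [add_sub_cancel_right]
  simp only [sub_mul, mul_sub]
  rw [integral_sub hfφ hshift, integral_sub (hf.integrable_mul (hφ.comp_sub_right y)) hfφ, htrans,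
    neg_sub]

lemma IsWeight.integral_levyOp_mul (hφ : IsWeight e φ) (hκ : IsLevyKernel e κ)
    (hf : IsBddLipschitz f A) :
    ∫ x, levyOp κ f x * φ x = -∫ x, f x * ∫ y, (φ (x - y) - φ x) * κ y := by
  have hslice (y : ℝ) : ∫ x, (f x - f (x + y)) * κ y * φ x
      = -∫ x, f x * ((φ (x - y) - φ x) * κ y) := by
    simp only [mul_right_comm _ (κ y), ← mul_assoc (f _)]
    rw [integral_mul_const, integral_mul_const, hf.integral_sub_shift_mul hφ.integrable, neg_mul]
  calc ∫ x, levyOp κ f x * φ x = ∫ x, ∫ y, (f x - f (x + y)) * κ y * φ x := by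
        simp only [levyOp, integral_mul_const]
    _ = -∫ y, ∫ x, f x * ((φ (x - y) - φ x) * κ y) := by
        rw [integral_integral_swap (hφ.integrable_prod_sub_mul_kernel hκ hf), ← integral_neg]
        simp only [hslice]
    _ = _ := by
        rw [← integral_integral_swap (hφ.integrable_prod_mul_kernel hκ hf)]
        simp only [integral_const_mul]

lemma IsWeight.neg_integral_levyOp_mul_le (hφ : IsWeight e φ) (hκ : IsLevyKernel e κ)
    (hf : IsBddLipschitz f A) (hf0 : ∀ x, 0 ≤ f x) :
    -∫ x, levyOp κ f x * φ x ≤ kernelConst e κ * ∫ x, f x * φ x := by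
  rw [hφ.integral_levyOp_mul hκ hf, neg_neg, ← integral_const_mul]
  refine integral_mono ((hφ.integrable_prod_mul_kernel hκ hf).integral_prod_left.congr
    (ae_of_all _ fun x => integral_const_mul (f x) fun y => (φ (x - y) - φ x) * κ y))
    ((hf.integrable_mul hφ.integrable).const_mul _) fun x => ?_
  calc f x * ∫ y, (φ (x - y) - φ x) * κ y ≤ f x * (kernelConst e κ * φ x) :=
        mul_le_mul_of_nonneg_left ((le_abs_self _).trans (abs_integral_le_integral_abs.trans
          (hφ.integral_abs_sub_mul_kernel_le hκ x))) (hf0 x)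
    _ = _ := by ring

end LevyOp

/-! ### Weighted energy estimates -/

lemma gronwall_of_deriv_le {E E' : ℝ → ℝ} {a b C S : ℝ} (hC : 0 ≤ C) (hS : 0 ≤ S)
    (hc : ContinuousOn E (Icc a b)) (hd : ∀ t ∈ Ioo a b, HasDerivAt E (E' t) t)
    (hle : ∀ t ∈ Ioo a b, E' t ≤ C * E t + S) {t : ℝ} (ht : t ∈ Icc a b) :
    E t ≤ Real.exp (C * (t - a)) * (E a + S * (t - a)) := by
  set D : ℝ → ℝ := fun t => Real.exp (-(C * (t - a))) * E t - S * (t - a) with hD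
  have hD' : ∀ t ∈ Ioo a b, HasDerivAt D
      (Real.exp (-(C * (t - a))) * (-C) * E t + Real.exp (-(C * (t - a))) * E' t - S) t := by
    intro t ht
    have hlin : HasDerivAt (fun t => -(C * (t - a))) (-C) t := by
      simpa using (((hasDerivAt_id t).sub_const a).const_mul C).fun_neg
    have hsource : HasDerivAt (fun t => S * (t - a)) S t := by
      simpa using ((hasDerivAt_id t).sub_const a).const_mul S
    exact (hlin.exp.mul (hd t ht)).sub hsource
  have hanti : AntitoneOn D (Icc a b) := by
    refine antitoneOn_of_deriv_nonpos (convex_Icc a b)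
      ((ContinuousOn.mul (by fun_prop) hc).sub (by fun_prop)) ?_ ?_ <;> rw [interior_Icc]
    · exact fun t ht => (hD' t ht).differentiableAt.differentiableWithinAt
    · intro t ht
      have hexp : Real.exp (-(C * (t - a))) ≤ 1 :=
        Real.exp_le_one_iff.2 (by nlinarith [ht.1])
      rw [(hD' t ht).deriv]
      nlinarith [mul_le_mul_of_nonneg_left (hle t ht) (Real.exp_pos (-(C * (t - a)))).le]
  have h := hanti (left_mem_Icc.2 (ht.1.trans ht.2)) ht ht.1
  simp only [hD, sub_self, mul_zero, neg_zero, Real.exp_zero, one_mul, sub_zero] at h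
  calc E t = Real.exp (C * (t - a)) * (Real.exp (-(C * (t - a))) * E t) := by
        rw [← mul_assoc, ← Real.exp_add]; simp
    _ ≤ _ := by gcongr; linarith

lemma measurable_of_hasDerivAt {f f' : ℝ → ℝ} (h : ∀ x, HasDerivAt f (f' x) x) :
    Measurable f' := by
  rw [show f' = deriv f from funext fun x => (h x).deriv.symm]
  exact measurable_deriv f

lemma continuous_of_hasDerivAt {f f' : ℝ → ℝ} (h : ∀ x, HasDerivAt f (f' x) x) : Continuous f :=
  continuous_iff_continuousAt.2 fun x => (h x).continuousAt

/-- A drift `b` with derivative `b'`, bounded and growing slowly, as the Hilbert transform of a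
bounded function does; one constant `K` serves both bounds. -/
structure IsDriftField (e K : ℝ) (b b' : ℝ → ℝ) : Prop where
  hasDerivAt : ∀ x, HasDerivAt b (b' x) x
  abs_le : ∀ x, |b x| ≤ K * (1 + x ^ 2) ^ (e / 2)
  abs_deriv_le : ∀ x, |b' x| ≤ K

namespace IsDriftField

variable {e K A : ℝ} {b b' Q Q' φ : ℝ → ℝ}

lemma nonneg (hb : IsDriftField e K b b') : 0 ≤ K := (abs_nonneg _).trans (hb.abs_deriv_le 0)

lemma continuous (hb : IsDriftField e K b b') : Continuous b :=
  continuous_of_hasDerivAt hb.hasDerivAt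

lemma integrable_mul (hb : IsDriftField e K b b') (hφ : IsWeight e φ) :
    Integrable fun x => b x * φ x := by
  refine (hφ.integrable_mul.const_mul K).mono'
    (hb.continuous.mul hφ.continuous).aestronglyMeasurable (ae_of_all _ fun x => ?_)
  rw [norm_mul, Real.norm_eq_abs, Real.norm_eq_abs, abs_of_pos (hφ.pos x), ← mul_assoc]
  exact mul_le_mul_of_nonneg_right (hb.abs_le x) (hφ.nonneg x)

lemma integrable_mul_mul_deriv (hb : IsDriftField e K b b') (hφ : IsWeight e φ)
    (hQ : IsBddLipschitz Q A) (hQ' : ∀ x, HasDerivAt Q (Q' x) x) :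
    Integrable fun x => b x * φ x * Q' x :=
  ((hb.integrable_mul hφ).bdd_mul (measurable_of_hasDerivAt hQ').aestronglyMeasurable
    (ae_of_all _ (hQ.abs_deriv_le hQ'))).congr (ae_of_all _ fun _ => mul_comm _ _)

lemma abs_deriv_mul_le (hb : IsDriftField e K b b') (hφ : IsWeight e φ) (x : ℝ) :
    |b' x * φ x + b x * deriv φ x| ≤ 3 * K * φ x := by
  have hK := hb.nonneg
  have hb'φ : |b' x * φ x| ≤ K * φ x := by
    rw [abs_mul, abs_of_pos (hφ.pos x)]
    exact mul_le_mul_of_nonneg_right (hb.abs_deriv_le x) (hφ.nonneg x)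
  have hbφ' : |b x * deriv φ x| ≤ 2 * K * φ x :=
    calc |b x * deriv φ x| ≤ K * (1 + x ^ 2) ^ (1 / 2 : ℝ) * |deriv φ x| := by
          rw [abs_mul]
          refine mul_le_mul_of_nonneg_right ((hb.abs_le x).trans ?_) (abs_nonneg _)
          gcongr
          · exact one_le_one_add_sq x
          · linarith [hφ.exponent_le]
      _ = K * (|deriv φ x| * (1 + x ^ 2) ^ (1 / 2 : ℝ)) := by ring
      _ ≤ K * (2 * φ x) := mul_le_mul_of_nonneg_left (hφ.deriv_le x) hK
      _ = _ := by ring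
  exact (abs_add_le _ _).trans (by linarith)

lemma integral_mul_mul_deriv_le (hb : IsDriftField e K b b') (hφ : IsWeight e φ)
    (hQ : IsBddLipschitz Q A) (hQ' : ∀ x, HasDerivAt Q (Q' x) x) (hQ0 : ∀ x, 0 ≤ Q x) :
    ∫ x, b x * φ x * Q' x ≤ 3 * K * ∫ x, Q x * φ x := by
  have hK := hb.nonneg
  have hQφ := hQ.integrable_mul hφ.integrable
  have hderiv : Integrable fun x => (b' x * φ x + b x * deriv φ x) * Q x := by
    refine (hφ.integrable.const_mul (3 * K * A)).mono' ?_ (ae_of_all _ fun x => ?_)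
    · exact ((((measurable_of_hasDerivAt hb.hasDerivAt).mul hφ.continuous.measurable).add
        (hb.continuous.measurable.mul (measurable_deriv φ))).mul
        hQ.continuous.measurable).aestronglyMeasurable
    · rw [Real.norm_eq_abs, abs_mul, mul_right_comm (3 * K)]
      have := hφ.nonneg x
      exact mul_le_mul (hb.abs_deriv_mul_le hφ x) (hQ.abs_le x) (abs_nonneg _) (by positivity)
  have hbQ : Integrable fun x => b x * φ x * Q x :=
    ((hb.integrable_mul hφ).bdd_mul hQ.continuous.aestronglyMeasurable
      (ae_of_all _ hQ.abs_le)).congr (ae_of_all _ fun _ => mul_comm _ _)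
  have hparts : ∫ x, b x * φ x * Q' x = -∫ x, (b' x * φ x + b x * deriv φ x) * Q x :=
    integral_mul_deriv_eq_deriv_mul_of_integrable
      (fun x _ => (hb.hasDerivAt x).mul (hφ.differentiable x).hasDerivAt) (fun x _ => hQ' x)
      (hb.integrable_mul_mul_deriv hφ hQ hQ') hderiv hbQ
  rw [hparts, ← integral_neg, ← integral_const_mul]
  refine integral_mono hderiv.neg (hQφ.const_mul _) fun x => ?_
  have := mul_le_mul_of_nonneg_right (neg_le.1 (neg_le_of_abs_le (hb.abs_deriv_mul_le hφ x)))
    (hQ0 x)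
  simp only
  linarith

end IsDriftField

/-- A nonnegative density `Q x t` with derivatives `Qx`, `Qt`, regular enough that its weighted
integrals may be differentiated in time. -/
structure IsEnergyDensity (e t₁ t₂ A B : ℝ) (Q Qx Qt : ℝ → ℝ → ℝ) : Prop where
  nonneg : ∀ t ∈ Icc t₁ t₂, ∀ x, 0 ≤ Q x t
  isBddLipschitz : ∀ t ∈ Icc t₁ t₂, IsBddLipschitz (fun x => Q x t) A
  continuousOn : ∀ x, ContinuousOn (fun t => Q x t) (Icc t₁ t₂)
  hasDerivAt_fst : ∀ t ∈ Ioo t₁ t₂, ∀ x, HasDerivAt (fun x => Q x t) (Qx x t) x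
  hasDerivAt_snd : ∀ t ∈ Ioo t₁ t₂, ∀ x, HasDerivAt (fun t => Q x t) (Qt x t) t
  measurable_deriv_snd : ∀ t ∈ Ioo t₁ t₂, Measurable fun x => Qt x t
  abs_deriv_snd_le : ∀ t ∈ Ioo t₁ t₂, ∀ x, |Qt x t| ≤ B * (1 + x ^ 2) ^ (e / 2)

namespace IsEnergyDensity

variable {e t₁ t₂ A B K : ℝ} {κ φ : ℝ → ℝ} {b b' Q Qx Qt : ℝ → ℝ → ℝ}

lemma integrable_mul (hQ : IsEnergyDensity e t₁ t₂ A B Q Qx Qt) (hφ : IsWeight e φ) {t : ℝ}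
    (ht : t ∈ Icc t₁ t₂) : Integrable fun x => Q x t * φ x :=
  (hQ.isBddLipschitz t ht).integrable_mul hφ.integrable

lemma continuousOn_integral (hQ : IsEnergyDensity e t₁ t₂ A B Q Qx Qt) (hφ : IsWeight e φ) :
    ContinuousOn (fun t => ∫ x, Q x t * φ x) (Icc t₁ t₂) := by
  intro t ht
  refine continuousWithinAt_of_dominated (bound := fun x => A * φ x) ?_ ?_
    (hφ.integrable.const_mul A) (ae_of_all _ fun x => (hQ.continuousOn x t ht).mul_const _)
  all_goals filter_upwards [self_mem_nhdsWithin] with s hs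
  · exact (hQ.integrable_mul hφ hs).aestronglyMeasurable
  · refine ae_of_all _ fun x => ?_
    rw [Real.norm_eq_abs, abs_mul, abs_of_pos (hφ.pos x)]
    exact mul_le_mul_of_nonneg_right ((hQ.isBddLipschitz s hs).abs_le x) (hφ.nonneg x)

lemma hasDerivAt_integral (hQ : IsEnergyDensity e t₁ t₂ A B Q Qx Qt) (hφ : IsWeight e φ) {t : ℝ}
    (ht : t ∈ Ioo t₁ t₂) : Integrable (fun x => Qt x t * φ x) ∧
      HasDerivAt (fun t => ∫ x, Q x t * φ x) (∫ x, Qt x t * φ x) t := by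
  refine hasDerivAt_integral_of_dominated_loc_of_deriv_le (F := fun t x => Q x t * φ x)
    (F' := fun t x => Qt x t * φ x) (Ioo_mem_nhds ht.1 ht.2) ?_
    (hQ.integrable_mul hφ (Ioo_subset_Icc_self ht)) ?_ (ae_of_all _ fun x s hs => ?_)
    (hφ.integrable_mul.const_mul B)
    (ae_of_all _ fun x s hs => (hQ.hasDerivAt_snd s hs x).mul_const _)
  · filter_upwards [Ioo_mem_nhds ht.1 ht.2] with s hs
    exact (hQ.integrable_mul hφ (Ioo_subset_Icc_self hs)).aestronglyMeasurable
  · exact ((hQ.measurable_deriv_snd t ht).mul hφ.continuous.measurable).aestronglyMeasurable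
  · rw [norm_mul, Real.norm_eq_abs, Real.norm_eq_abs, abs_of_pos (hφ.pos x), ← mul_assoc]
    exact mul_le_mul_of_nonneg_right (hQ.abs_deriv_snd_le s hs x) (hφ.nonneg x)

lemma integral_deriv_snd_le (hQ : IsEnergyDensity e t₁ t₂ A B Q Qx Qt) (hφ : IsWeight e φ)
    (hκ : IsLevyKernel e κ) {t : ℝ} (ht : t ∈ Ioo t₁ t₂)
    (hb : IsDriftField e K (fun x => b x t) (fun x => b' x t)) {ψ : ℝ → ℝ}
    (hψ : Integrable fun x => ψ x * φ x)
    (hle : ∀ x, Qt x t - b x t * Qx x t + levyOp κ (fun x => Q x t) x ≤ ψ x) :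
    ∫ x, Qt x t * φ x
      ≤ (kernelConst e κ + 3 * K) * (∫ x, Q x t * φ x) + ∫ x, ψ x * φ x := by
  have ht' := Ioo_subset_Icc_self ht
  have hlip := hQ.isBddLipschitz t ht'
  have hbQ := hb.integrable_mul_mul_deriv hφ hlip (hQ.hasDerivAt_fst t ht)
  have hlevy := hφ.integrable_levyOp_mul hκ hlip
  have hmono : ∫ x, Qt x t * φ x
      ≤ ∫ x, (b x t * φ x * Qx x t - levyOp κ (fun x => Q x t) x * φ x + ψ x * φ x) :=
    integral_mono (hQ.hasDerivAt_integral hφ ht).1 ((hbQ.sub' hlevy).add hψ) fun x => by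
      simp only
      linarith [mul_le_mul_of_nonneg_right (hle x) (hφ.nonneg x)]
  rw [integral_add (hbQ.sub' hlevy) hψ, integral_sub hbQ hlevy] at hmono
  linarith [hφ.neg_integral_levyOp_mul_le hκ hlip (hQ.nonneg t ht'),
    hb.integral_mul_mul_deriv_le hφ hlip (hQ.hasDerivAt_fst t ht) (hQ.nonneg t ht')]

theorem integral_le (hQ : IsEnergyDensity e t₁ t₂ A B Q Qx Qt) (hφ : IsWeight e φ)
    (hκ : IsLevyKernel e κ) {k S : ℝ} (hK : 0 ≤ K) (hk : 0 ≤ k) (hS : 0 ≤ S)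
    (hb : ∀ t ∈ Ioo t₁ t₂, IsDriftField e K (fun x => b x t) (fun x => b' x t))
    {ψ : ℝ → ℝ → ℝ} (hψ : ∀ t ∈ Ioo t₁ t₂, Integrable fun x => ψ x t * φ x)
    (hle : ∀ t ∈ Ioo t₁ t₂, ∀ x,
      Qt x t - b x t * Qx x t + levyOp κ (fun x => Q x t) x ≤ ψ x t)
    (hψ_le : ∀ t ∈ Ioo t₁ t₂, ∫ x, ψ x t * φ x ≤ k * (∫ x, Q x t * φ x) + S)
    {t : ℝ} (ht : t ∈ Icc t₁ t₂) :
    ∫ x, Q x t * φ x ≤ Real.exp ((kernelConst e κ + 3 * K + k) * (t - t₁))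
      * ((∫ x, Q x t₁ * φ x) + S * (t - t₁)) := by
  refine gronwall_of_deriv_le (by have := hκ.kernelConst_nonneg; positivity) hS
    (hQ.continuousOn_integral hφ) (fun t ht => (hQ.hasDerivAt_integral hφ ht).2)
    (fun t ht => ?_) ht
  linarith [hQ.integral_deriv_snd_le hφ hκ ht (hb t ht) (hψ t ht) (hle t ht), hψ_le t ht]

end IsEnergyDensity

/-! ### The folded Hilbert transform -/

/-- The integrand of the Hilbert transform of `f` at `x`, folded about `x`; this replaces the
principal value at `x` by an ordinary integral. -/
noncomputable def symQuot (f : ℝ → ℝ) (x s : ℝ) : ℝ := (f (x - s) - f (x + s)) / s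

/-- `v` is `π` times the Hilbert transform of `f` at `x`, written as the improper integral of
`symQuot f x`. -/
def HasFoldedHilbert (f : ℝ → ℝ) (x v : ℝ) : Prop :=
  Tendsto (fun R => ∫ s in (0 : ℝ)..R, symQuot f x s) atTop (𝓝 v)

section Hilbert

variable {f f' V : ℝ → ℝ} {A B a R : ℝ}

namespace IsBddLipschitz

lemma abs_symQuot_le (hf : IsBddLipschitz f A) (x s : ℝ) : |symQuot f x s| ≤ 2 * A := by
  rcases eq_or_ne s 0 with rfl | hs
  · simpa [symQuot] using hf.nonneg
  · rw [symQuot, abs_div, div_le_iff₀ (abs_pos.2 hs)]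
    have := hf.abs_sub_le (x - s) (x + s)
    rw [show x - s - (x + s) = -(2 * s) by ring, abs_neg, abs_mul, abs_two] at this
    linarith

lemma abs_symQuot_le_div (hf : IsBddLipschitz f A) (x : ℝ) {s : ℝ} (hs : 0 < s) :
    |symQuot f x s| ≤ 2 * A / s := by
  rw [symQuot, abs_div, abs_of_pos hs]
  gcongr
  exact (abs_sub _ _).trans (by linarith [hf.abs_le (x - s), hf.abs_le (x + s)])

lemma measurable_symQuot (hf : IsBddLipschitz f A) (x : ℝ) : Measurable (symQuot f x) := by
  have := hf.continuous
  exact (by fun_prop : Continuous fun s => f (x - s) - f (x + s)).measurable.div measurable_id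

lemma intervalIntegrable_symQuot (hf : IsBddLipschitz f A) (x a b : ℝ) :
    IntervalIntegrable (symQuot f x) volume a b :=
  (intervalIntegrable_const (c := 2 * A)).mono_fun (hf.measurable_symQuot x).aestronglyMeasurable
    (ae_of_all _ fun s => (hf.abs_symQuot_le x s).trans (le_abs_self _))

lemma abs_integral_symQuot_zero_one_le (hf : IsBddLipschitz f A) (x : ℝ) :
    |∫ s in (0 : ℝ)..1, symQuot f x s| ≤ 2 * A := by
  simpa using intervalIntegral.norm_integral_le_of_norm_le_const (a := (0 : ℝ)) (b := 1)
    (f := symQuot f x) fun s _ => hf.abs_symQuot_le x s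

lemma abs_integral_symQuot_le_log (hf : IsBddLipschitz f A) (x : ℝ) (hR : 1 ≤ R) :
    |∫ s in (0 : ℝ)..R, symQuot f x s| ≤ 2 * A + 2 * A * Real.log R := by
  have hzero : (0 : ℝ) ∉ uIcc 1 R := by simp [uIcc_of_le hR]
  have hinv : IntervalIntegrable (fun s : ℝ => 2 * A * s⁻¹) volume 1 R :=
    (intervalIntegral.intervalIntegrable_inv (fun s hs h => hzero (h ▸ hs))
      continuousOn_id).const_mul _
  have hfar := intervalIntegral.norm_integral_le_of_norm_le (f := symQuot f x) hR
    (ae_of_all _ fun s hs => (hf.abs_symQuot_le_div x (by linarith [hs.1])).trans_eq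
      (div_eq_mul_inv _ _)) hinv
  rw [intervalIntegral.integral_const_mul, integral_inv hzero, div_one] at hfar
  rw [← intervalIntegral.integral_add_adjacent_intervals
    (hf.intervalIntegrable_symQuot x 0 1) (hf.intervalIntegrable_symQuot x 1 R)]
  exact (abs_add_le _ _).trans (add_le_add (hf.abs_integral_symQuot_zero_one_le x) hfar)

end IsBddLipschitz

lemma annulus_eq_union_Ioo (x R : ℝ) {ε : ℝ} (hε : 0 < ε) :
    {y : ℝ | ε < |x - y| ∧ |x - y| < R} = Ioo (x - R) (x - ε) ∪ Ioo (x + ε) (x + R) := by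
  ext y
  simp only [mem_ofPred_eq, mem_union, mem_Ioo, lt_abs, abs_lt]
  grind

lemma intervalIntegrable_div_sub (hf : Continuous f) {x c d : ℝ} (hx : x ∉ uIcc c d) :
    IntervalIntegrable (fun y => f y / (x - y)) volume c d :=
  ContinuousOn.intervalIntegrable <| hf.continuousOn.div (by fun_prop) fun y hy h =>
    hx (by rwa [sub_eq_zero.1 h])

lemma setIntegral_annulus_eq (hf : Continuous f) (x : ℝ) {ε R : ℝ} (hε : 0 < ε) (hR : ε < R) :
    ∫ y in {y : ℝ | ε < |x - y| ∧ |x - y| < R}, f y / (x - y) = ∫ s in ε..R, symQuot f x s := by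
  have hleft : IntervalIntegrable (fun y => f y / (x - y)) volume (x - R) (x - ε) := by
    refine intervalIntegrable_div_sub hf ?_
    rw [uIcc_of_le (by linarith)]
    exact fun h => by linarith [h.2]
  have hright : IntervalIntegrable (fun y => f y / (x - y)) volume (x + ε) (x + R) := by
    refine intervalIntegrable_div_sub hf ?_
    rw [uIcc_of_le (by linarith)]
    exact fun h => by linarith [h.1]
  have hdisj : Disjoint (Ioo (x - R) (x - ε)) (Ioo (x + ε) (x + R)) :=
    Set.disjoint_left.2 fun y hy hy' => by linarith [hy.2, hy'.1]
  have hleft' := (hleft.comp_sub_left x).symm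
  have hright' := hright.comp_add_left x
  simp only [sub_sub_cancel, add_sub_cancel_left] at hleft' hright'
  rw [annulus_eq_union_Ioo x R hε, setIntegral_union hdisj measurableSet_Ioo
      ((intervalIntegrable_iff_integrableOn_Ioo_of_le (by linarith)).1 hleft)
      ((intervalIntegrable_iff_integrableOn_Ioo_of_le (by linarith)).1 hright),
    ← integral_Ioc_eq_integral_Ioo, ← integral_Ioc_eq_integral_Ioo,
    ← intervalIntegral.integral_of_le (by linarith),
    ← intervalIntegral.integral_of_le (by linarith),
    ← intervalIntegral.integral_comp_sub_left (fun y => f y / (x - y)) x,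
    ← intervalIntegral.integral_comp_add_left (fun y => f y / (x - y)) x,
    ← intervalIntegral.integral_add (by simpa using hleft') (by simpa using hright')]
  refine intervalIntegral.integral_congr fun s _ => ?_
  simp only [symQuot]
  rw [sub_sub_cancel, sub_add_cancel_left, div_neg, ← sub_eq_add_neg, sub_div]

lemma HilbertPVAt.hasFoldedHilbert (hf : IsBddLipschitz f A) {x v : ℝ} (h : HilbertPVAt f x v) :
    HasFoldedHilbert f x v := by
  obtain ⟨g, hg, hv⟩ := h
  refine hv.congr' ?_
  filter_upwards [eventually_gt_atTop 0] with R hR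
  have hpv : Tendsto (fun ε => ∫ s in ε..R, symQuot f x s) (𝓝[>] 0) (𝓝 (g R)) := by
    refine (hg R hR).congr' ?_
    filter_upwards [Ioo_mem_nhdsGT hR] with ε hε
    exact setIntegral_annulus_eq hf.continuous x hε.1 hε.2
  have hprimitive : Continuous fun ε => ∫ s in ε..R, symQuot f x s := by
    simp only [intervalIntegral.integral_symm R]
    exact (intervalIntegral.continuous_primitive
      (fun a b => hf.intervalIntegrable_symQuot x a b) R).neg
  exact tendsto_nhds_unique hpv ((hprimitive.tendsto 0).mono_left nhdsWithin_le_nhds)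

lemma hasDerivAt_integral_symQuot (hf : IsBddLipschitz f A) (hf' : IsBddLipschitz f' B)
    (hd : ∀ x, HasDerivAt f (f' x) x) (a R x : ℝ) :
    HasDerivAt (fun x => ∫ s in a..R, symQuot f x s) (∫ s in a..R, symQuot f' x s) x := by
  refine (intervalIntegral.hasDerivAt_integral_of_dominated_loc_of_deriv_le
    (F := symQuot f) (F' := symQuot f') (s := univ) (bound := fun _ => 2 * B) univ_mem
    (Eventually.of_forall fun x => (hf.measurable_symQuot x).aestronglyMeasurable)
    (hf.intervalIntegrable_symQuot x a R) (hf'.measurable_symQuot x).aestronglyMeasurable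
    (ae_of_all _ fun s _ x _ => hf'.abs_symQuot_le x s)
    intervalIntegrable_const (ae_of_all _ fun s _ x _ => ?_)).2
  exact (((hd (x - s)).comp_sub_const x s).sub ((hd (x + s)).comp_add_const x s)).div_const s

lemma ne_zero_of_mem_uIcc (ha : 0 < a) (haR : a ≤ R) {s : ℝ} (hs : s ∈ uIcc a R) : s ≠ 0 := by
  rw [uIcc_of_le haR] at hs
  exact (ha.trans_le hs.1).ne'

lemma integral_const_div_sq (c : ℝ) (ha : 0 < a) (haR : a ≤ R) :
    IntervalIntegrable (fun s => c / s ^ 2) volume a R ∧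
      ∫ s in a..R, c / s ^ 2 = c / a - c / R := by
  have hint : IntervalIntegrable (fun s => c / s ^ 2) volume a R :=
    ContinuousOn.intervalIntegrable <| continuousOn_const.div (by fun_prop) fun s hs =>
      pow_ne_zero 2 (ne_zero_of_mem_uIcc ha haR hs)
  refine ⟨hint, ?_⟩
  rw [intervalIntegral.integral_eq_sub_of_hasDerivAt (f := fun s => -c / s) (fun s hs => ?_) hint]
  · ring
  · refine ((hasDerivAt_const s (-c)).div (hasDerivAt_id s)
      (ne_zero_of_mem_uIcc ha haR hs)).congr_deriv ?_
    simp

lemma integral_symQuot_deriv_eq (hf : Continuous f) (hf' : IsBddLipschitz f' B)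
    (hd : ∀ x, HasDerivAt f (f' x) x) (x : ℝ) (ha : 0 < a) (haR : a ≤ R) :
    ∫ s in a..R, symQuot f' x s = (f (x - a) + f (x + a)) / a - (f (x - R) + f (x + R)) / R
      - ∫ s in a..R, (f (x - s) + f (x + s)) / s ^ 2 := by
  have hint : IntervalIntegrable (fun s => (f (x - s) + f (x + s)) / s ^ 2) volume a R :=
    ContinuousOn.intervalIntegrable <| (Continuous.continuousOn (by fun_prop)).div (by fun_prop)
      fun s hs => pow_ne_zero 2 (ne_zero_of_mem_uIcc ha haR hs)
  have hsymQuot := hf'.intervalIntegrable_symQuot x a R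
  have hfund : ∫ s in a..R, (symQuot f' x s + (f (x - s) + f (x + s)) / s ^ 2)
      = -(f (x - R) + f (x + R)) / R - -(f (x - a) + f (x + a)) / a := by
    refine intervalIntegral.integral_eq_sub_of_hasDerivAt
      (f := fun s => -(f (x - s) + f (x + s)) / s) (fun s hs => ?_) (hsymQuot.add hint)
    have hs0 := ne_zero_of_mem_uIcc ha haR hs
    refine ((((hd (x - s)).comp_const_sub x s).add ((hd (x + s)).comp_const_add x s)).fun_neg.div
      (hasDerivAt_id s) hs0).congr_deriv ?_
    simp only [symQuot, id, Pi.add_apply]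
    field_simp
    ring
  rw [intervalIntegral.integral_add hsymQuot hint] at hfund
  linear_combination hfund

lemma abs_integral_symQuot_deriv_le (hf : IsBddLipschitz f A) (hf' : IsBddLipschitz f' B)
    (hd : ∀ x, HasDerivAt f (f' x) x) (x : ℝ) (ha : 0 < a) (haR : a ≤ R) :
    |∫ s in a..R, symQuot f' x s| ≤ 4 * A / a := by
  have hsum (s : ℝ) : |f (x - s) + f (x + s)| ≤ 2 * A :=
    (abs_add_le _ _).trans (by linarith [hf.abs_le (x - s), hf.abs_le (x + s)])
  have hboundary {s : ℝ} (hs : 0 < s) : |(f (x - s) + f (x + s)) / s| ≤ 2 * A / s := by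
    rw [abs_div, abs_of_pos hs]
    gcongr
    exact hsum s
  obtain ⟨hint, hval⟩ := integral_const_div_sq (2 * A) ha haR
  have hbulk : |∫ s in a..R, (f (x - s) + f (x + s)) / s ^ 2| ≤ 2 * A / a - 2 * A / R := by
    rw [← hval]
    refine intervalIntegral.norm_integral_le_of_norm_le
      (f := fun s => (f (x - s) + f (x + s)) / s ^ 2) haR (ae_of_all _ fun s _ => ?_) hint
    rw [Real.norm_eq_abs, abs_div, abs_sq]
    gcongr
    exact hsum s
  rw [integral_symQuot_deriv_eq hf.continuous hf' hd x ha haR]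
  calc _ ≤ 2 * A / a + 2 * A / R + (2 * A / a - 2 * A / R) :=
        (abs_sub _ _).trans (add_le_add ((abs_sub _ _).trans
          (add_le_add (hboundary ha) (hboundary (ha.trans_le haR)))) hbulk)
    _ = _ := by ring

lemma tendsto_const_div_atTop_zero (c : ℝ) : Tendsto (fun a : ℝ => c / a) atTop (𝓝 0) :=
  tendsto_const_nhds.div_atTop tendsto_id

lemma abs_integral_symQuot_deriv_sub_le (hf : IsBddLipschitz f A) (hf' : IsBddLipschitz f' B)
    (hd : ∀ x, HasDerivAt f (f' x) x) (x : ℝ) (ha : 0 < a) (haR : a ≤ R) :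
    |(∫ s in (0 : ℝ)..R, symQuot f' x s) - ∫ s in (0 : ℝ)..a, symQuot f' x s| ≤ 4 * A / a := by
  rw [intervalIntegral.integral_interval_sub_left (hf'.intervalIntegrable_symQuot x 0 R)
    (hf'.intervalIntegrable_symQuot x 0 a)]
  exact abs_integral_symQuot_deriv_le hf hf' hd x ha haR

lemma exists_hasFoldedHilbert_deriv (hf : IsBddLipschitz f A) (hf' : IsBddLipschitz f' B)
    (hd : ∀ x, HasDerivAt f (f' x) x) (x : ℝ) : ∃ c, HasFoldedHilbert f' x c := by
  refine cauchySeq_tendsto_of_complete (Metric.cauchySeq_iff'.2 fun ε hε => ?_)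
  obtain ⟨N, hN0, hN⟩ := ((eventually_gt_atTop 0).and
    ((tendsto_const_div_atTop_zero (4 * A)).eventually_lt_const hε)).exists
  exact ⟨N, fun n hn => (abs_integral_symQuot_deriv_sub_le hf hf' hd x hN0 hn).trans_lt hN⟩

lemma HasFoldedHilbert.abs_sub_integral_le (hf : IsBddLipschitz f A) (hf' : IsBddLipschitz f' B)
    (hd : ∀ x, HasDerivAt f (f' x) x) {x c : ℝ} (hc : HasFoldedHilbert f' x c) (ha : 0 < a) :
    |c - ∫ s in (0 : ℝ)..a, symQuot f' x s| ≤ 4 * A / a := by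
  refine le_of_tendsto (hc.sub_const _).abs ?_
  filter_upwards [eventually_ge_atTop a] with R hR
  exact abs_integral_symQuot_deriv_sub_le hf hf' hd x ha hR

lemma exists_hasDerivAt_of_hasFoldedHilbert (hf : IsBddLipschitz f A) (hf' : IsBddLipschitz f' B)
    (hd : ∀ x, HasDerivAt f (f' x) x) (hV : ∀ x, HasFoldedHilbert f x (V x)) :
    ∃ V' : ℝ → ℝ, (∀ x, HasDerivAt V (V' x) x) ∧ ∀ x, |V' x| ≤ 4 * A + 2 * B := by
  choose V' hV' using exists_hasFoldedHilbert_deriv hf hf' hd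
  refine ⟨V', fun x => ?_, fun x => ?_⟩
  · refine hasDerivAt_of_tendstoUniformly (l := atTop)
      (f := fun R x => ∫ s in (0 : ℝ)..R, symQuot f x s)
      (f' := fun R x => ∫ s in (0 : ℝ)..R, symQuot f' x s) ?_
      (Eventually.of_forall fun R x => hasDerivAt_integral_symQuot hf hf' hd 0 R x) hV x
    refine Metric.tendstoUniformly_iff.2 fun ε hε => ?_
    filter_upwards [eventually_gt_atTop 0,
      (tendsto_const_div_atTop_zero (4 * A)).eventually_lt_const hε] with a ha hlt y
    exact ((hV' y).abs_sub_integral_le hf hf' hd ha).trans_lt hlt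
  · have hfar := (hV' x).abs_sub_integral_le hf hf' hd one_pos
    rw [div_one] at hfar
    calc |V' x| = |(V' x - ∫ s in (0 : ℝ)..1, symQuot f' x s)
          + ∫ s in (0 : ℝ)..1, symQuot f' x s| := by rw [sub_add_cancel]
      _ ≤ _ := (abs_add_le _ _).trans (add_le_add hfar (hf'.abs_integral_symQuot_zero_one_le x))

lemma abs_sub_apply_zero_le_log (hf : IsBddLipschitz f A) (hf' : IsBddLipschitz f' B)
    (hd : ∀ x, HasDerivAt f (f' x) x) (hV : ∀ x, HasFoldedHilbert f x (V x)) {x ρ : ℝ}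
    (hρ : 1 ≤ ρ) (hx : |x| ≤ ρ) : |V x - V 0| ≤ 8 * A + 4 * A * Real.log ρ := by
  have hA := hf.nonneg
  refine le_of_tendsto ((hV x).sub (hV 0)).abs ?_
  filter_upwards [eventually_ge_atTop ρ] with R hR
  have hfar : |(∫ s in ρ..R, symQuot f x s) - ∫ s in ρ..R, symQuot f 0 s| ≤ 4 * A :=
    calc _ ≤ 4 * A / ρ * |x - 0| :=
          convex_univ.norm_image_sub_le_of_norm_hasDerivWithin_le
            (f := fun x => ∫ s in ρ..R, symQuot f x s)
            (fun y _ => (hasDerivAt_integral_symQuot hf hf' hd ρ R y).hasDerivWithinAt)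
            (fun y _ => abs_integral_symQuot_deriv_le hf hf' hd y (by linarith) hR)
            (mem_univ 0) (mem_univ x)
      _ ≤ 4 * A := by
          rw [sub_zero, div_mul_eq_mul_div, div_le_iff₀ (by linarith)]
          gcongr
  have hsplit (y : ℝ) := intervalIntegral.integral_add_adjacent_intervals
    (hf.intervalIntegrable_symQuot y 0 ρ) (hf.intervalIntegrable_symQuot y ρ R)
  have hnear (y : ℝ) := abs_le.1 (hf.abs_integral_symQuot_le_log y hρ)
  rw [← hsplit x, ← hsplit 0]
  rw [abs_le] at hfar ⊢
  constructor <;> linarith [hnear x, hnear 0]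

lemma log_max_one_abs_le {e : ℝ} (he : 0 < e) (x : ℝ) :
    Real.log (max 1 |x|) ≤ (1 + x ^ 2) ^ (e / 2) / e := by
  have hsq : (max 1 |x|) ^ 2 ≤ 1 + x ^ 2 := by
    rcases max_choice 1 |x| with h | h <;> rw [h]
    · rw [one_pow]
      exact one_le_one_add_sq x
    · rw [sq_abs]
      linarith
  have hlog := (Real.log_le_log (by positivity) hsq).trans
    (Real.log_le_rpow_div (one_add_sq_pos x).le (half_pos he))
  rw [Real.log_pow, show (1 + x ^ 2) ^ (e / 2) / (e / 2) = 2 * ((1 + x ^ 2) ^ (e / 2) / e) by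
    field_simp] at hlog
  push_cast at hlog
  linarith

lemma abs_sub_apply_zero_le_rpow (hf : IsBddLipschitz f A) (hf' : IsBddLipschitz f' B)
    (hd : ∀ x, HasDerivAt f (f' x) x) (hV : ∀ x, HasFoldedHilbert f x (V x)) {e : ℝ} (he : 0 < e)
    (x : ℝ) : |V x - V 0| ≤ (8 * A + 4 * A / e) * (1 + x ^ 2) ^ (e / 2) := by
  have hA := hf.nonneg
  calc |V x - V 0| ≤ 8 * A + 4 * A * Real.log (max 1 |x|) :=
        abs_sub_apply_zero_le_log hf hf' hd hV (le_max_left _ _) (le_max_right _ _)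
    _ ≤ 8 * A * (1 + x ^ 2) ^ (e / 2) + 4 * A * ((1 + x ^ 2) ^ (e / 2) / e) := by
        refine add_le_add (le_mul_of_one_le_right (by positivity)
          (one_le_one_add_sq_rpow (by positivity) x)) ?_
        gcongr
        exact log_max_one_abs_le he x
    _ = _ := by ring

end Hilbert

/-! ### Solutions of the transport equation -/

namespace IsDriftField

lemma abs_mul_sub_levyOp_le {e K A : ℝ} {κ b b' f g : ℝ → ℝ} (hb : IsDriftField e K b b')
    (he : 0 < e) (hκ : IsLevyKernel e κ) (hf : IsBddLipschitz f A) (hg : ∀ x, |g x| ≤ A) (x : ℝ) :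
    |b x * g x - levyOp κ f x|
      ≤ (K * A + 2 * A * ∫ y, min |y| 1 * κ y) * (1 + x ^ 2) ^ (e / 2) := by
  have hA := hf.nonneg
  have hK := hb.nonneg
  have hI := hκ.integral_nonneg
  have hbg : |b x * g x| ≤ K * (1 + x ^ 2) ^ (e / 2) * A := by
    rw [abs_mul]
    exact mul_le_mul (hb.abs_le x) (hg x) (abs_nonneg _) (by positivity)
  have hlevy : |levyOp κ f x|
      ≤ 2 * A * (∫ y, min |y| 1 * κ y) * (1 + x ^ 2) ^ (e / 2) :=
    (hf.abs_levyOp_le hκ x).trans <|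
      le_mul_of_one_le_right (by positivity) (one_le_one_add_sq_rpow (by linarith) x)
  exact (abs_sub _ _).trans (by linarith)

lemma measurable_mul_sub_levyOp {e K A : ℝ} {κ b b' f g : ℝ → ℝ} (hb : IsDriftField e K b b')
    (hκ : IsLevyKernel e κ) (hf : IsBddLipschitz f A) (hg : Measurable g) :
    Measurable fun x => b x * g x - levyOp κ f x :=
  (hb.continuous.measurable.mul hg).sub (hf.continuous_levyOp hκ).measurable

end IsDriftField

/-- A bounded solution `θ` of `θ_t = b θ_x - L θ` on `[t₁, t₂]`, where `b` is the Hilbert transform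
of `θ` and `L` is the operator with kernel `κ`; `u`, `u'` and `b'` stand for the spatial derivatives
`θ_x`, `θ_xx` and `b_x`. -/
structure IsSmoothSolution (e : ℝ) (κ : ℝ → ℝ) (t₁ t₂ M : ℝ) (θ u u' b b' : ℝ → ℝ → ℝ) :
    Prop where
  exponent_pos : 0 < e
  exponent_le : e ≤ 1 / 4
  isLevyKernel : IsLevyKernel e κ
  continuousOn : ∀ x, ContinuousOn (fun t => θ x t) (Icc t₁ t₂)
  continuousOn_slope : ∀ x, ContinuousOn (fun t => u x t) (Icc t₁ t₂)
  hasDerivAt_fst : ∀ t ∈ Icc t₁ t₂, ∀ x, HasDerivAt (fun x => θ x t) (u x t) x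
  hasDerivAt_slope_fst : ∀ t ∈ Icc t₁ t₂, ∀ x, HasDerivAt (fun x => u x t) (u' x t) x
  isBddLipschitz : ∀ t ∈ Icc t₁ t₂, IsBddLipschitz (fun x => θ x t) M
  isBddLipschitz_slope : ∀ t ∈ Icc t₁ t₂, IsBddLipschitz (fun x => u x t) M
  hasFoldedHilbert : ∀ t ∈ Icc t₁ t₂, ∀ x,
    HasFoldedHilbert (fun x => θ x t) x (Real.pi * b x t)
  hasDerivAt_snd : ∀ t ∈ Ioo t₁ t₂, ∀ x,
    HasDerivAt (fun t => θ x t) (b x t * u x t - levyOp κ (fun x => θ x t) x) t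
  hasDerivAt_slope_snd : ∀ t ∈ Ioo t₁ t₂, ∀ x, HasDerivAt (fun t => u x t)
    (b' x t * u x t + (b x t * u' x t - levyOp κ (fun x => u x t) x)) t
  hasDerivAt_drift : ∀ t ∈ Ioo t₁ t₂, ∀ x, HasDerivAt (fun x => b x t) (b' x t) x
  abs_deriv_drift_le : ∀ t ∈ Ioo t₁ t₂, ∀ x, |b' x t| ≤ 6 * M
  exists_abs_deriv_snd_le : ∀ x, ∃ D, ∀ t ∈ Ioo t₁ t₂,
    |b x t * u x t - levyOp κ (fun x => θ x t) x| ≤ D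

/-- A smooth solution whose drift satisfies the bounds of `IsDriftField` uniformly in time. -/
structure IsControlledSolution (e : ℝ) (κ : ℝ → ℝ) (t₁ t₂ M K : ℝ) (θ u u' b b' : ℝ → ℝ → ℝ) :
    Prop extends IsSmoothSolution e κ t₁ t₂ M θ u u' b b' where
  nonneg : 0 ≤ K
  isDriftField : ∀ t ∈ Ioo t₁ t₂, IsDriftField e K (fun x => b x t) (fun x => b' x t)

lemma IsSmoothSolution.mono {e t₁ t₂ s₁ s₂ M : ℝ} {κ : ℝ → ℝ} {θ u u' b b' : ℝ → ℝ → ℝ}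
    (h : IsSmoothSolution e κ t₁ t₂ M θ u u' b b') (h₁ : t₁ ≤ s₁) (h₂ : s₂ ≤ t₂) :
    IsSmoothSolution e κ s₁ s₂ M θ u u' b b' := by
  have hI : Icc s₁ s₂ ⊆ Icc t₁ t₂ := Icc_subset_Icc h₁ h₂
  have hO : Ioo s₁ s₂ ⊆ Ioo t₁ t₂ := Ioo_subset_Ioo h₁ h₂
  exact
    { exponent_pos := h.exponent_pos
      exponent_le := h.exponent_le
      isLevyKernel := h.isLevyKernel
      continuousOn := fun x => (h.continuousOn x).mono hI
      continuousOn_slope := fun x => (h.continuousOn_slope x).mono hI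
      hasDerivAt_fst := fun t ht => h.hasDerivAt_fst t (hI ht)
      hasDerivAt_slope_fst := fun t ht => h.hasDerivAt_slope_fst t (hI ht)
      isBddLipschitz := fun t ht => h.isBddLipschitz t (hI ht)
      isBddLipschitz_slope := fun t ht => h.isBddLipschitz_slope t (hI ht)
      hasFoldedHilbert := fun t ht => h.hasFoldedHilbert t (hI ht)
      hasDerivAt_snd := fun t ht => h.hasDerivAt_snd t (hO ht)
      hasDerivAt_slope_snd := fun t ht => h.hasDerivAt_slope_snd t (hO ht)
      hasDerivAt_drift := fun t ht => h.hasDerivAt_drift t (hO ht)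
      abs_deriv_drift_le := fun t ht => h.abs_deriv_drift_le t (hO ht)
      exists_abs_deriv_snd_le := fun x =>
        (h.exists_abs_deriv_snd_le x).imp fun _ hD t ht => hD t (hO ht) }

namespace IsControlledSolution

variable {e t₁ t₂ M K : ℝ} {κ φ : ℝ → ℝ} {θ u u' b b' : ℝ → ℝ → ℝ}

lemma mono (h : IsControlledSolution e κ t₁ t₂ M K θ u u' b b') {s₁ s₂ : ℝ} (h₁ : t₁ ≤ s₁)
    (h₂ : s₂ ≤ t₂) : IsControlledSolution e κ s₁ s₂ M K θ u u' b b' where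
  toIsSmoothSolution := h.toIsSmoothSolution.mono h₁ h₂
  nonneg := h.nonneg
  isDriftField := fun t ht => h.isDriftField t (Ioo_subset_Ioo h₁ h₂ ht)

lemma abs_deriv_slope_snd_le (h : IsControlledSolution e κ t₁ t₂ M K θ u u' b b') {t : ℝ}
    (ht : t ∈ Ioo t₁ t₂) (x : ℝ) :
    |b' x t * u x t + (b x t * u' x t - levyOp κ (fun x => u x t) x)|
      ≤ (2 * K * M + 2 * M * ∫ y, min |y| 1 * κ y) * (1 + x ^ 2) ^ (e / 2) := by
  have ht' := Ioo_subset_Icc_self ht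
  have hu := h.isBddLipschitz_slope t ht'
  have hM := hu.nonneg
  have hK := h.nonneg
  have htransport := (h.isDriftField t ht).abs_mul_sub_levyOp_le h.exponent_pos h.isLevyKernel hu
    (hu.abs_deriv_le (h.hasDerivAt_slope_fst t ht')) x
  have hb'u : |b' x t * u x t| ≤ K * M := by
    rw [abs_mul]
    exact mul_le_mul ((h.isDriftField t ht).abs_deriv_le x) (hu.abs_le x) (abs_nonneg _) hK
  have hgrow : K * M ≤ K * M * (1 + x ^ 2) ^ (e / 2) :=
    le_mul_of_one_le_right (by positivity)
      (one_le_one_add_sq_rpow (by linarith [h.exponent_pos]) x)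
  exact (abs_add_le _ _).trans (by linarith)

lemma measurable_deriv_slope_snd (h : IsControlledSolution e κ t₁ t₂ M K θ u u' b b') {t : ℝ}
    (ht : t ∈ Ioo t₁ t₂) :
    Measurable fun x => b' x t * u x t + (b x t * u' x t - levyOp κ (fun x => u x t) x) := by
  have ht' := Ioo_subset_Icc_self ht
  have hu := h.isBddLipschitz_slope t ht'
  exact ((measurable_of_hasDerivAt (h.isDriftField t ht).hasDerivAt).mul
    hu.continuous.measurable).add ((h.isDriftField t ht).measurable_mul_sub_levyOp h.isLevyKernel
      hu (measurable_of_hasDerivAt (h.hasDerivAt_slope_fst t ht')))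

lemma exists_isEnergyDensity_sq_slope (h : IsControlledSolution e κ t₁ t₂ M K θ u u' b b') :
    ∃ B, IsEnergyDensity e t₁ t₂ (2 * M * M) B (fun x t => u x t ^ 2)
      (fun x t => 2 * u x t * u' x t)
      (fun x t => 2 * u x t * (b' x t * u x t + (b x t * u' x t - levyOp κ (fun x => u x t) x))) :=
  ⟨2 * M * (2 * K * M + 2 * M * ∫ y, min |y| 1 * κ y),
    { nonneg := fun _ _ _ => sq_nonneg _
      isBddLipschitz := fun t ht => (h.isBddLipschitz_slope t ht).sq
      continuousOn := fun x => (h.continuousOn_slope x).pow 2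
      hasDerivAt_fst := fun t ht x =>
        ((h.hasDerivAt_slope_fst t (Ioo_subset_Icc_self ht) x).pow 2).congr_deriv (by simp)
      hasDerivAt_snd := fun t ht x =>
        ((h.hasDerivAt_slope_snd t ht x).pow 2).congr_deriv (by simp)
      measurable_deriv_snd := fun t ht =>
        ((h.isBddLipschitz_slope t (Ioo_subset_Icc_self ht)).continuous.measurable.const_mul 2).mul
          (h.measurable_deriv_slope_snd ht)
      abs_deriv_snd_le := fun t ht x => by
        have hu := h.isBddLipschitz_slope t (Ioo_subset_Icc_self ht)
        have hM := hu.nonneg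
        rw [abs_mul, abs_mul, abs_two, mul_assoc (2 * M)]
        exact mul_le_mul (by linarith [hu.abs_le x]) (h.abs_deriv_slope_snd_le ht x) (abs_nonneg _)
          (by positivity) }⟩

theorem integral_sq_slope_le (h : IsControlledSolution e κ t₁ t₂ M K θ u u' b b')
    (hφ : IsWeight e φ) {t : ℝ} (ht : t ∈ Icc t₁ t₂) :
    ∫ x, u x t ^ 2 * φ x ≤ Real.exp ((kernelConst e κ + 3 * K + 2 * K) * (t - t₁))
      * ∫ x, u x t₁ ^ 2 * φ x := by
  obtain ⟨B, hQ⟩ := h.exists_isEnergyDensity_sq_slope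
  have henergy := hQ.integral_le hφ h.isLevyKernel (k := 2 * K) (S := 0)
    (ψ := fun x t => 2 * K * u x t ^ 2) h.nonneg (by linarith [h.nonneg]) le_rfl h.isDriftField
    (fun t ht => by
      simpa only [mul_assoc] using
        (hQ.integrable_mul hφ (Ioo_subset_Icc_self ht)).const_mul (2 * K))
    (fun t ht x => ?_)
    (fun t _ => by rw [← integral_const_mul, add_zero]; simp only [mul_assoc]; exact le_rfl) ht
  · simpa using henergy
  · have ht' := Ioo_subset_Icc_self ht
    have hlevy := levyOp_le_mul_levyOp (x := x) (p := 2 * u x t) h.isLevyKernel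
      (h.isBddLipschitz_slope t ht') (hQ.isBddLipschitz t ht')
      fun z => by nlinarith [sq_nonneg (u x t - u z t)]
    have hstretch := mul_le_mul_of_nonneg_right
      (le_of_abs_le ((h.isDriftField t ht).abs_deriv_le x)) (sq_nonneg (u x t))
    linarith

lemma exists_isEnergyDensity_comp (h : IsControlledSolution e κ t₁ t₂ M K θ u u' b b')
    {F F' : ℝ → ℝ} (hF0 : ∀ s, 0 ≤ F s) (hF : ∀ s, HasDerivAt F (F' s) s) (hF' : Continuous F') :
    ∃ A B, IsEnergyDensity e t₁ t₂ A B (fun x t => F (θ x t)) (fun x t => F' (θ x t) * u x t)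
      (fun x t => F' (θ x t) * (b x t * u x t - levyOp κ (fun x => θ x t) x)) := by
  have hFc := continuous_of_hasDerivAt hF
  obtain ⟨G, hG⟩ := (isCompact_Icc (a := -M) (b := M)).exists_bound_of_continuousOn hFc.continuousOn
  obtain ⟨G', hG'⟩ :=
    (isCompact_Icc (a := -M) (b := M)).exists_bound_of_continuousOn hF'.continuousOn
  have hmem : ∀ t ∈ Icc t₁ t₂, ∀ x, θ x t ∈ Icc (-M) M := fun t ht x =>
    abs_le.1 ((h.isBddLipschitz t ht).abs_le x)
  have hx : ∀ t ∈ Icc t₁ t₂, ∀ x, HasDerivAt (fun x => F (θ x t)) (F' (θ x t) * u x t) x :=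
    fun t ht x => (hF (θ x t)).comp x (h.hasDerivAt_fst t ht x)
  refine ⟨max G (G' * M), G' * (K * M + 2 * M * ∫ y, min |y| 1 * κ y),
    { nonneg := fun _ _ _ => hF0 _
      isBddLipschitz := fun t ht => .of_hasDerivAt
        (fun x => (hG _ (hmem t ht x)).trans (le_max_left _ _)) (hx t ht)
        fun x => le_trans ?_ (le_max_right _ _)
      continuousOn := fun x => hFc.comp_continuousOn (h.continuousOn x)
      hasDerivAt_fst := fun t ht => hx t (Ioo_subset_Icc_self ht)
      hasDerivAt_snd := fun t ht x => (hF (θ x t)).comp t (h.hasDerivAt_snd t ht x)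
      measurable_deriv_snd := fun t ht => ?_
      abs_deriv_snd_le := fun t ht x => ?_ }⟩
  · rw [abs_mul]
    exact mul_le_mul (hG' _ (hmem t ht x)) ((h.isBddLipschitz_slope t ht).abs_le x) (abs_nonneg _)
      ((norm_nonneg _).trans (hG' _ (hmem t ht x)))
  · have ht' := Ioo_subset_Icc_self ht
    exact (hF'.comp (h.isBddLipschitz t ht').continuous).measurable.mul
      ((h.isDriftField t ht).measurable_mul_sub_levyOp h.isLevyKernel (h.isBddLipschitz t ht')
        (h.isBddLipschitz_slope t ht').continuous.measurable)
  · have ht' := Ioo_subset_Icc_self ht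
    rw [abs_mul, mul_assoc]
    exact mul_le_mul (hG' _ (hmem t ht' x))
      ((h.isDriftField t ht).abs_mul_sub_levyOp_le h.exponent_pos h.isLevyKernel
        (h.isBddLipschitz t ht') (h.isBddLipschitz_slope t ht').abs_le x)
      (abs_nonneg _) ((norm_nonneg _).trans (hG' _ (hmem t ht' x)))

theorem integral_comp_le_of_convex (h : IsControlledSolution e κ t₁ t₂ M K θ u u' b b')
    (hφ : IsWeight e φ) {F F' : ℝ → ℝ} (hF0 : ∀ s, 0 ≤ F s) (hF : ∀ s, HasDerivAt F (F' s) s)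
    (hF' : Continuous F') (hconvex : ∀ s r, F s - F r ≤ F' s * (s - r))
    {t : ℝ} (ht : t ∈ Icc t₁ t₂) :
    ∫ x, F (θ x t) * φ x ≤ Real.exp ((kernelConst e κ + 3 * K) * (t - t₁))
      * ∫ x, F (θ x t₁) * φ x := by
  obtain ⟨A, B, hQ⟩ := h.exists_isEnergyDensity_comp hF0 hF hF'
  have henergy := hQ.integral_le hφ h.isLevyKernel (k := 0) (S := 0) (ψ := fun _ _ => 0) h.nonneg
    le_rfl le_rfl h.isDriftField (fun t _ => by simp) (fun t ht x => ?_) (fun t _ => by simp) ht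
  · simpa using henergy
  · have ht' := Ioo_subset_Icc_self ht
    have hlevy := levyOp_le_mul_levyOp (x := x) (p := F' (θ x t)) h.isLevyKernel
      (h.isBddLipschitz t ht') (hQ.isBddLipschitz t ht') fun z => hconvex _ _
    linarith

end IsControlledSolution

/-! ### Squared positive parts -/

lemma hasDerivAt_max_zero_sq (s : ℝ) : HasDerivAt (fun s : ℝ => max s 0 ^ 2) (2 * max s 0) s := by
  rcases lt_trichotomy s 0 with hs | rfl | hs
  · rw [max_eq_right hs.le, mul_zero]
    refine (hasDerivAt_const s (0 : ℝ)).congr_of_eventuallyEq ?_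
    filter_upwards [Iio_mem_nhds hs] with r hr
    simp [max_eq_right (mem_Iio.1 hr).le]
  · rw [max_self, mul_zero, hasDerivAt_iff_isLittleO]
    refine Asymptotics.IsLittleO.of_bound fun ε hε => ?_
    filter_upwards [Metric.ball_mem_nhds (0 : ℝ) hε] with r hr
    rw [Metric.mem_ball, Real.dist_eq, sub_zero] at hr
    have hmax : max r 0 ≤ |r| := max_le (le_abs_self r) (abs_nonneg r)
    simp only [max_self, sub_zero, smul_zero, Real.norm_eq_abs]
    rw [show max r 0 ^ 2 - 0 ^ 2 = max r 0 ^ 2 by ring, abs_of_nonneg (sq_nonneg _)]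
    nlinarith [abs_nonneg r, le_max_right r 0]
  · rw [max_eq_left hs.le]
    refine HasDerivAt.congr_of_eventuallyEq (f := fun r => r ^ 2)
      ((hasDerivAt_pow 2 s).congr_deriv (by simp)) ?_
    filter_upwards [Ioi_mem_nhds hs] with r hr
    simp only [max_eq_left (mem_Ioi.1 hr).le]

lemma max_zero_sq_sub_le (s r : ℝ) : max s 0 ^ 2 - max r 0 ^ 2 ≤ 2 * max s 0 * (s - r) := by
  rcases le_total s 0 with hs | hs <;> rcases le_total r 0 with hr | hr <;>
    simp only [max_eq_left, max_eq_right, hs, hr] <;> nlinarith [sq_nonneg (s - r)]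

lemma IsControlledSolution.integral_max_zero_sq_le {e t₁ t₂ M K : ℝ} {κ φ : ℝ → ℝ}
    {θ u u' b b' : ℝ → ℝ → ℝ} (h : IsControlledSolution e κ t₁ t₂ M K θ u u' b b')
    (hφ : IsWeight e φ) (a d : ℝ) {t : ℝ} (ht : t ∈ Icc t₁ t₂) :
    ∫ x, max (a * θ x t + d) 0 ^ 2 * φ x ≤ Real.exp ((kernelConst e κ + 3 * K) * (t - t₁))
      * ∫ x, max (a * θ x t₁ + d) 0 ^ 2 * φ x := by
  refine h.integral_comp_le_of_convex hφ (F := fun s => max (a * s + d) 0 ^ 2)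
    (F' := fun s => 2 * max (a * s + d) 0 * a) (fun s => sq_nonneg _) (fun s => ?_) (by fun_prop)
    (fun s r => ?_) ht
  · have hlin : HasDerivAt (fun s => a * s + d) a s := by
      simpa using ((hasDerivAt_id s).const_mul a).add_const d
    exact (hasDerivAt_max_zero_sq (a * s + d)).comp s hlin
  · linarith [max_zero_sq_sub_le (a * s + d) (a * r + d)]

lemma tendsto_integral_max_zero_sq_mul {φ f : ℝ → ℝ} {m : ℝ} (hφ : Integrable φ)
    (hf : Measurable f) (hm : ∀ x, m < f x) :
    Tendsto (fun n : ℕ => ∫ x, max (1 - n * (f x - m)) 0 ^ 2 * φ x) atTop (𝓝 0) := by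
  suffices Tendsto (fun n : ℕ => ∫ x, max (1 - n * (f x - m)) 0 ^ 2 * φ x) atTop
      (𝓝 (∫ _ : ℝ, (0 : ℝ))) by rwa [integral_zero] at this
  refine tendsto_integral_of_dominated_convergence (fun x => ‖φ x‖)
    (fun n => (Measurable.aestronglyMeasurable (by fun_prop)).mul hφ.aestronglyMeasurable) hφ.norm
    (fun n => ae_of_all _ fun x => ?_) (ae_of_all _ fun x => ?_)
  · have hle : max (1 - (n : ℝ) * (f x - m)) 0 ≤ 1 :=
      max_le (by nlinarith [hm x, (Nat.cast_nonneg n : (0 : ℝ) ≤ n)]) zero_le_one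
    rw [norm_mul, Real.norm_eq_abs, abs_of_nonneg (sq_nonneg _)]
    exact mul_le_of_le_one_left (norm_nonneg _) (pow_le_one₀ (le_max_right _ _) hle)
  · have hlarge : ∀ᶠ n : ℕ in atTop, 1 ≤ n * (f x - m) :=
      (tendsto_natCast_atTop_atTop.atTop_mul_const (sub_pos.2 (hm x))).eventually_ge_atTop 1
    refine tendsto_const_nhds.congr' ?_
    filter_upwards [hlarge] with n hn
    simp [max_eq_right (sub_nonpos.2 hn)]

lemma setIntegral_le_integral_max_zero_sq_mul {φ f : ℝ → ℝ} {m A : ℝ} (hφ : Integrable φ)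
    (hφ0 : ∀ x, 0 ≤ φ x) (hf : IsBddLipschitz f A) (n : ℕ) :
    ∫ x in {x | f x ≤ m}, φ x ≤ ∫ x, max (1 - n * (f x - m)) 0 ^ 2 * φ x := by
  have hfc := hf.continuous
  have hbound : ∀ x, ‖max (1 - n * (f x - m)) 0 ^ 2‖ ≤ (1 + n * (A + |m|)) ^ 2 := fun x => by
    have hA := hf.nonneg
    rw [Real.norm_eq_abs, abs_of_nonneg (sq_nonneg _)]
    refine pow_le_pow_left₀ (le_max_right _ _) (max_le ?_ (by positivity)) 2
    nlinarith [neg_le_of_abs_le (hf.abs_le x), le_abs_self m]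
  have hi : Integrable fun x => max (1 - n * (f x - m)) 0 ^ 2 * φ x :=
    hφ.bdd_mul (by fun_prop : Continuous _).aestronglyMeasurable (ae_of_all _ hbound)
  refine (setIntegral_mono_on hφ.integrableOn hi.integrableOn
    (measurableSet_le hfc.measurable measurable_const) fun x hx => ?_).trans
    (setIntegral_le_integral hi (ae_of_all _ fun x => mul_nonneg (sq_nonneg _) (hφ0 x)))
  have hfx : f x ≤ m := hx
  have hone : 1 ≤ max (1 - n * (f x - m)) 0 := le_max_of_le_left (by nlinarith)
  exact le_mul_of_one_le_left (hφ0 x) (one_le_pow₀ hone)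

lemma ae_lt_of_setIntegral_nonpos {φ f : ℝ → ℝ} {m : ℝ} (hφ : Integrable φ) (hφ0 : ∀ x, 0 < φ x)
    (h : ∫ x in {x | f x ≤ m}, φ x ≤ 0) : ∀ᵐ x, m < f x := by
  have hsupp : Function.support φ = univ := eq_univ_of_forall fun x => (hφ0 x).ne'
  have hnull := (setIntegral_pos_iff_support_of_nonneg_ae
    (ae_of_all _ fun x => (hφ0 x).le) hφ.integrableOn).not.1 h.not_gt
  rw [hsupp, univ_inter, not_lt, nonpos_iff_eq_zero] at hnull
  simpa only [ae_iff, not_lt] using hnull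

lemma integral_mul_le_of_eq_zero {φ g : ℝ → ℝ} {C r : ℝ} (hφ0 : ∀ x, 0 ≤ φ x) (hφ1 : ∀ x, φ x ≤ 1)
    (hr : 0 ≤ r) (hg : ∀ x, |g x| ≤ C) (hsupp : ∀ x, r ≤ |x| → g x = 0) :
    ∫ x, g x * φ x ≤ C * (2 * r) := by
  rw [← setIntegral_eq_integral_of_forall_compl_eq_zero (s := Icc (-r) r) fun x hx => by
    rw [hsupp x (not_lt.1 fun hlt => hx (abs_le.1 hlt.le)), zero_mul]]
  have hnorm := norm_setIntegral_le_of_norm_le_const (μ := volume) (s := Icc (-r) r) (C := C)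
    (f := fun x => g x * φ x) measure_Icc_lt_top fun x _ => by
      rw [norm_mul, Real.norm_eq_abs, Real.norm_eq_abs, abs_of_nonneg (hφ0 x)]
      exact (mul_le_of_le_one_right (abs_nonneg _) (hφ1 x)).trans (hg x)
  rw [Real.volume_real_Icc_of_le (by linarith), sub_neg_eq_add, ← two_mul] at hnorm
  exact (le_abs_self _).trans hnorm

lemma le_integral_polyWeight_zero {e R : ℝ} (he : 0 < e) (he' : e ≤ 1 / 4) (hR : 1 ≤ R) :
    R ≤ ∫ x, polyWeight e 0 R x := by
  have hφ : IsWeight e (polyWeight e 0 R) := isWeight_polyWeight he he' le_rfl he.le hR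
  calc R = ∫ _ in Icc (-R) R, (1 / 2 : ℝ) := by
        rw [setIntegral_const, Real.volume_real_Icc_of_le (by linarith), smul_eq_mul]
        ring
    _ ≤ ∫ x in Icc (-R) R, polyWeight e 0 R x :=
        setIntegral_mono_on (integrableOn_const measure_Icc_lt_top.ne) hφ.integrable.integrableOn
          measurableSet_Icc fun x hx => by
            have hle := rpow_le_two_mul_polyWeight (ρ := 0) he he' hR (abs_le.2 hx)
            rw [neg_zero, Real.rpow_zero] at hle
            linarith
    _ ≤ _ := setIntegral_le_integral hφ.integrable (ae_of_all _ hφ.nonneg)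

namespace IsControlledSolution

variable {e t₁ t₂ M K : ℝ} {κ : ℝ → ℝ} {θ u u' b b' : ℝ → ℝ → ℝ}

theorem ae_lt_of_forall_lt (h : IsControlledSolution e κ t₁ t₂ M K θ u u' b b') {m : ℝ}
    (hm : ∀ x, m < θ x t₁) {t : ℝ} (ht : t ∈ Icc t₁ t₂) : ∀ᵐ x, m < θ x t := by
  have ht₁ : t₁ ∈ Icc t₁ t₂ := left_mem_Icc.2 (ht.1.trans ht.2)
  have hφ : IsWeight e (polyWeight e 0 1) :=
    isWeight_polyWeight h.exponent_pos h.exponent_le le_rfl h.exponent_pos.le le_rfl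
  refine ae_lt_of_setIntegral_nonpos hφ.integrable hφ.pos ?_
  have hlim := (tendsto_integral_max_zero_sq_mul hφ.integrable
    (h.isBddLipschitz t₁ ht₁).continuous.measurable hm).const_mul
    (Real.exp ((kernelConst e κ + 3 * K) * (t - t₁)))
  rw [mul_zero] at hlim
  refine ge_of_tendsto' hlim fun n => (setIntegral_le_integral_max_zero_sq_mul hφ.integrable
    hφ.nonneg (h.isBddLipschitz t ht) n).trans ?_
  have haffine : ∀ s, 1 - n * (s - m) = -(n : ℝ) * s + (1 + n * m) := fun s => by ring
  simpa only [haffine] using h.integral_max_zero_sq_le hφ (-n) (1 + n * m) ht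

theorem not_forall_eq_of_lt (h : IsControlledSolution e κ t₁ t₂ M K θ u u' b b') {m m' r : ℝ}
    (hm : m < m') (hr : 0 ≤ r) (hle : ∀ x, r ≤ |x| → θ x t₁ ≤ m) {t : ℝ} (ht : t ∈ Icc t₁ t₂) :
    ¬ ∀ x, θ x t = m' := by
  intro hconst
  have hθ := h.isBddLipschitz t₁ (left_mem_Icc.2 (ht.1.trans ht.2))
  have hM := hθ.nonneg
  have hbound : ∀ x, |max (1 * θ x t₁ + -m) 0 ^ 2| ≤ (M + |m|) ^ 2 := fun x => by
    rw [abs_of_nonneg (sq_nonneg _)]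
    refine pow_le_pow_left₀ (le_max_right _ _) (max_le ?_ (by positivity)) 2
    linarith [le_of_abs_le (hθ.abs_le x), neg_abs_le m]
  have hlinear : ∀ R, 1 ≤ R → (m' - m) ^ 2 * R
      ≤ Real.exp ((kernelConst e κ + 3 * K) * (t - t₁)) * ((M + |m|) ^ 2 * (2 * r)) := by
    intro R hR
    have hφ : IsWeight e (polyWeight e 0 R) :=
      isWeight_polyWeight h.exponent_pos h.exponent_le le_rfl h.exponent_pos.le hR
    calc (m' - m) ^ 2 * R ≤ (m' - m) ^ 2 * ∫ x, polyWeight e 0 R x :=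
          mul_le_mul_of_nonneg_left
            (le_integral_polyWeight_zero h.exponent_pos h.exponent_le hR) (sq_nonneg _)
      _ = ∫ x, max (1 * θ x t + -m) 0 ^ 2 * polyWeight e 0 R x := by
          simp only [hconst, one_mul, ← sub_eq_add_neg, max_eq_left (sub_pos.2 hm).le,
            integral_const_mul]
      _ ≤ _ := h.integral_max_zero_sq_le hφ 1 (-m) ht
      _ ≤ _ := mul_le_mul_of_nonneg_left (integral_mul_le_of_eq_zero hφ.nonneg
          (polyWeight_zero_le_one h.exponent_pos R) hr hbound fun x hx => by
            rw [max_eq_right (by linarith [hle x hx]), zero_pow two_ne_zero]) (Real.exp_pos _).le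
  obtain ⟨R, hR1, hR⟩ := ((eventually_ge_atTop 1).and
    ((tendsto_id.const_mul_atTop (pow_pos (sub_pos.2 hm) 2)).eventually_gt_atTop _)).exists
  exact (hlinear R hR1).not_gt hR

end IsControlledSolution

/-! ### The sign part of an odd function -/

lemma odd_of_hasDerivAt_of_even {f f' : ℝ → ℝ} (hd : ∀ x, HasDerivAt f (f' x) x)
    (heven : Function.Even f) : Function.Odd f' := fun x => by
  have hreflected := (hd (- -x)).comp (-x) (hasDerivAt_neg (-x))
  rw [show f ∘ Neg.neg = f from funext heven, neg_neg] at hreflected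
  linarith [(hd (-x)).unique hreflected]

/-- The part of `f` having the same sign as the variable. For an odd function which should be
nonpositive on the positive half-line, it measures the failure of being so. -/
noncomputable def signPart (f : ℝ → ℝ) (x : ℝ) : ℝ :=
  if 0 ≤ x then max (f x) 0 else -max (-f x) 0

section SignPart

variable {f f' : ℝ → ℝ} {A x : ℝ}

lemma signPart_of_nonneg (hx : 0 ≤ x) : signPart f x = max (f x) 0 := if_pos hx

lemma signPart_of_neg (hx : x < 0) : signPart f x = -max (-f x) 0 := if_neg (not_le.2 hx)

lemma signPart_mul_self (f : ℝ → ℝ) (x : ℝ) : signPart f x * f x = signPart f x ^ 2 := by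
  rcases le_or_gt 0 x with hx | hx <;> rcases le_total (f x) 0 with h | h <;>
    simp [signPart_of_nonneg, signPart_of_neg, hx, h, sq]

lemma abs_signPart_le (f : ℝ → ℝ) (x : ℝ) : |signPart f x| ≤ |f x| := by
  rcases le_or_gt 0 x with hx | hx <;> rcases le_total (f x) 0 with h | h <;>
    simp [signPart_of_nonneg, signPart_of_neg, hx, h]

lemma signPart_zero (h0 : f 0 = 0) : signPart f 0 = 0 := by simp [signPart, h0]

lemma odd_signPart (hodd : Function.Odd f) : Function.Odd (signPart f) := fun x => by
  rcases lt_trichotomy 0 x with hx | rfl | hx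
  · rw [signPart_of_neg (neg_lt_zero.2 hx), signPart_of_nonneg hx.le, hodd, neg_neg]
  · simp [signPart_zero hodd.map_zero]
  · rw [signPart_of_nonneg (neg_pos.2 hx).le, signPart_of_neg hx, hodd, neg_neg]

lemma signPart_eq_zero (hodd : Function.Odd f) (hf : ∀ x, 0 < x → f x ≤ 0) (x : ℝ) :
    signPart f x = 0 := by
  rcases lt_trichotomy 0 x with hx | rfl | hx
  · rw [signPart_of_nonneg hx.le, max_eq_right (hf x hx)]
  · exact signPart_zero hodd.map_zero
  · rw [signPart_of_neg hx, ← hodd, max_eq_right (hf _ (neg_pos.2 hx)), neg_zero]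

lemma IsBddLipschitz.abs_signPart_sub_le (hf : IsBddLipschitz f A) (h0 : f 0 = 0) {z : ℝ}
    (hx : 0 ≤ x) (hz : z < 0) : |signPart f x - signPart f z| ≤ A * |x - z| := by
  have hfx := (abs_signPart_le f x).trans (by simpa [h0] using hf.abs_sub_le x 0)
  have hfz := (abs_signPart_le f z).trans (by simpa [h0] using hf.abs_sub_le z 0)
  rw [abs_of_nonneg hx] at hfx
  rw [abs_of_neg hz] at hfz
  rw [abs_of_nonneg (by linarith : 0 ≤ x - z)]
  exact (abs_sub _ _).trans (by linarith)

lemma IsBddLipschitz.signPart (hf : IsBddLipschitz f A) (h0 : f 0 = 0) :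
    IsBddLipschitz (signPart f) A where
  abs_le x := (abs_signPart_le f x).trans (hf.abs_le x)
  abs_sub_le x z := by
    rcases le_or_gt 0 x with hx | hx <;> rcases le_or_gt 0 z with hz | hz
    · rw [signPart_of_nonneg hx, signPart_of_nonneg hz]
      exact (abs_max_sub_max_le_abs _ _ _).trans (hf.abs_sub_le x z)
    · exact hf.abs_signPart_sub_le h0 hx hz
    · rw [abs_sub_comm, abs_sub_comm x]
      exact hf.abs_signPart_sub_le h0 hz hx
    · rw [signPart_of_neg hx, signPart_of_neg hz, neg_sub_neg]
      exact (abs_max_sub_max_le_abs _ _ _).trans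
        (by simpa only [neg_sub_neg] using hf.abs_sub_le x z)

lemma hasDerivAt_sq_of_abs_le_mul {g : ℝ → ℝ} {a : ℝ} (hg : ∀ z, |g z| ≤ A * |z - a|) :
    HasDerivAt (fun x => g x ^ 2) 0 a := by
  have hga : g a = 0 := by simpa using hg a
  have hO : g =O[𝓝 a] fun z => z - a := .of_bound A (Eventually.of_forall hg)
  rw [hasDerivAt_iff_isLittleO]
  refine ((hO.pow 2).congr_left fun z => by simp [hga]).trans_isLittleO ?_
  have hsmall : (fun z => z - a) =o[𝓝 a] fun _ => (1 : ℝ) :=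
    (Asymptotics.isLittleO_one_iff ℝ).2 (by simpa using (continuous_sub_right a).tendsto a)
  simpa [sq] using (Asymptotics.isBigO_refl (fun z => z - a) (𝓝 a)).mul_isLittleO hsmall

lemma hasDerivAt_signPart_sq (hf : IsBddLipschitz f A) (h0 : f 0 = 0)
    (hd : ∀ x, HasDerivAt f (f' x) x) (x : ℝ) :
    HasDerivAt (fun x => signPart f x ^ 2) (2 * signPart f x * f' x) x := by
  rcases lt_trichotomy x 0 with hx | rfl | hx
  · rw [signPart_of_neg hx]
    refine (((hasDerivAt_max_zero_sq (-f x)).comp x (hd x).neg).congr_deriv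
      (by ring)).congr_of_eventuallyEq ?_
    filter_upwards [Iio_mem_nhds hx] with z hz
    simp [signPart_of_neg (mem_Iio.1 hz)]
  · rw [signPart_zero h0, mul_zero, zero_mul]
    exact hasDerivAt_sq_of_abs_le_mul fun z => by
      simpa [signPart_zero h0] using (hf.signPart h0).abs_sub_le z 0
  · rw [signPart_of_nonneg hx.le]
    refine ((hasDerivAt_max_zero_sq (f x)).comp x (hd x)).congr_of_eventuallyEq ?_
    filter_upwards [Ioi_mem_nhds hx] with z hz
    simp [signPart_of_nonneg (mem_Ioi.1 hz).le]

end SignPart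

section OddLevyOp

variable {e : ℝ} {κ f : ℝ → ℝ} {A x : ℝ}

lemma levyOp_neg (κ f : ℝ → ℝ) (x : ℝ) : levyOp κ (fun x => -f x) x = -levyOp κ f x := by
  simp only [levyOp]
  rw [← integral_neg]
  congr 1 with y
  ring

lemma odd_levyOp (hκ : IsLevyKernel e κ) (hodd : Function.Odd f) : Function.Odd (levyOp κ f) :=
  fun x => by rw [← levyOp_comp_neg hκ f x, funext hodd, levyOp_neg]

lemma integrable_mul_kernel_sub (hκ : IsLevyKernel e κ) (hf : IsBddLipschitz f A) (hx : f x = 0) :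
    Integrable fun z => f z * κ (z - x) := by
  refine ((hf.integrable_sub_mul_kernel hκ x).fun_neg.comp_sub_right x).congr
    (ae_of_all _ fun z => ?_)
  simp [hx]

lemma levyOp_eq_neg_integral (κ : ℝ → ℝ) (hx : f x = 0) :
    levyOp κ f x = -∫ z, f z * κ (z - x) := by
  rw [levyOp, ← integral_sub_right_eq_self _ x, ← integral_neg]
  simp [hx]

lemma two_mul_levyOp_of_odd (hκ : IsLevyKernel e κ) (hf : IsBddLipschitz f A)
    (hodd : Function.Odd f) (hx : f x = 0) :
    2 * levyOp κ f x = ∫ z, f z * (κ (z + x) - κ (z - x)) := by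
  have hreflect : ∀ z, f (-z) * κ (-z - x) = -(f z * κ (z + x)) := fun z => by
    rw [hodd, show -z - x = -(z + x) by ring, hκ.even, neg_mul]
  have hi := integrable_mul_kernel_sub hκ hf hx
  have hi' : Integrable fun z => f z * κ (z + x) := by
    simpa only [hreflect, neg_neg] using hi.comp_neg.fun_neg
  have hreflected : ∫ z, f z * κ (z - x) = -∫ z, f z * κ (z + x) := by
    rw [← integral_neg_eq_self, ← integral_neg]
    simp only [hreflect]
  simp only [mul_sub]
  rw [integral_sub hi' hi, levyOp_eq_neg_integral κ hx]
  linarith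

-- A point `z` on the same side of the origin as `x` is closer to `x` than its reflection `-z`.
lemma levyOp_nonneg_of_odd (hκ : IsLevyKernel e κ) (hf : IsBddLipschitz f A)
    (hodd : Function.Odd f) (hneg : ∀ z, 0 < z → f z ≤ 0) (hx : 0 ≤ x) (hfx : f x = 0) :
    0 ≤ levyOp κ f x := by
  suffices hae : ∀ᵐ z : ℝ, 0 ≤ f z * (κ (z + x) - κ (z - x)) by
    linarith [two_mul_levyOp_of_odd hκ hf hodd hfx, integral_nonneg_of_ae hae]
  filter_upwards [compl_mem_ae_iff.2 (measure_singleton x),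
    compl_mem_ae_iff.2 (measure_singleton (-x))] with z hzx hzx'
  have hsub : z - x ≠ 0 := sub_ne_zero.2 hzx
  have hadd : z + x ≠ 0 := fun h => hzx' (eq_neg_of_add_eq_zero_left h)
  rcases lt_trichotomy 0 z with hz | rfl | hz
  · exact mul_nonneg_of_nonpos_of_nonpos (hneg z hz)
      (sub_nonpos.2 (hκ.anti _ _ hsub (sq_le_sq.1 (by nlinarith))))
  · simp [hodd.map_zero]
  · have hfz := hneg (-z) (neg_pos.2 hz)
    rw [hodd] at hfz
    exact mul_nonneg (by linarith) (sub_nonneg.2 (hκ.anti _ _ hadd (sq_le_sq.1 (by nlinarith))))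

lemma signPart_mul_levyOp_signPart_le (hκ : IsLevyKernel e κ) (hf : IsBddLipschitz f A)
    (hodd : Function.Odd f) (hx : 0 ≤ x) :
    signPart f x * levyOp κ (signPart f) x ≤ signPart f x * levyOp κ f x := by
  have hP := hf.signPart hodd.map_zero
  rcases eq_or_ne (signPart f x) 0 with hzero | hne
  · rw [hzero, zero_mul, zero_mul]
  have hfx : f x = signPart f x := mul_left_cancel₀ hne (by rw [signPart_mul_self, sq])
  have hdiff := levyOp_nonneg_of_odd hκ (hf.sub hP)
    (fun z => by rw [hodd, odd_signPart hodd, neg_sub_neg, neg_sub])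
    (fun z hz => by rw [signPart_of_nonneg hz.le]; exact sub_nonpos.2 (le_max_left _ _)) hx
    (sub_eq_zero.2 hfx)
  rw [levyOp_sub hκ hf hP] at hdiff
  refine mul_le_mul_of_nonneg_left (by linarith) ?_
  rw [signPart_of_nonneg hx]
  exact le_max_right _ _

lemma levyOp_signPart_sq_le (hκ : IsLevyKernel e κ) (hf : IsBddLipschitz f A)
    (hodd : Function.Odd f) (x : ℝ) :
    levyOp κ (fun x => signPart f x ^ 2) x ≤ 2 * signPart f x * levyOp κ f x := by
  wlog hx : 0 ≤ x generalizing x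
  · have hreflected := this (-x) (neg_nonneg.2 (not_le.1 hx).le)
    simpa only [← levyOp_comp_neg hκ (fun x => signPart f x ^ 2), odd_signPart hodd _,
      odd_levyOp hκ hodd _, neg_sq, mul_neg, neg_mul, neg_neg] using hreflected
  have hP := hf.signPart hodd.map_zero
  have hsq := levyOp_le_mul_levyOp (x := x) (p := 2 * signPart f x) hκ hP hP.sq
    fun z => by nlinarith [sq_nonneg (signPart f x - signPart f z)]
  linarith [signPart_mul_levyOp_signPart_le hκ hf hodd hx]

end OddLevyOp

lemma eq_zero_of_integral_mul_nonpos {φ f : ℝ → ℝ} {A : ℝ} (hφ : Integrable φ)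
    (hφc : Continuous φ) (hφ0 : ∀ x, 0 < φ x) (hf : IsBddLipschitz f A) (hf0 : ∀ x, 0 ≤ f x)
    (h : ∫ x, f x * φ x ≤ 0) (x : ℝ) : f x = 0 := by
  have hnn : 0 ≤ fun x => f x * φ x := fun x => mul_nonneg (hf0 x) (hφ0 x).le
  have hae := (integral_eq_zero_iff_of_nonneg hnn (hf.integrable_mul hφ)).1
    (le_antisymm h (integral_nonneg hnn))
  have hzero := congrFun ((Continuous.ae_eq_iff_eq volume (hf.continuous.mul hφc)
    continuous_zero).1 hae) x
  simpa [(hφ0 x).ne'] using hzero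

namespace IsControlledSolution

variable {e t₁ t₂ M K : ℝ} {κ φ : ℝ → ℝ} {θ u u' b b' : ℝ → ℝ → ℝ}

lemma odd_slope (h : IsControlledSolution e κ t₁ t₂ M K θ u u' b b')
    (heven : ∀ t ∈ Icc t₁ t₂, ∀ x, θ (-x) t = θ x t) {t : ℝ} (ht : t ∈ Icc t₁ t₂) :
    Function.Odd fun x => u x t :=
  odd_of_hasDerivAt_of_even (h.hasDerivAt_fst t ht) (heven t ht)

lemma continuousOn_signPart (h : IsControlledSolution e κ t₁ t₂ M K θ u u' b b') (x : ℝ) :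
    ContinuousOn (fun t => signPart (fun x => u x t) x) (Icc t₁ t₂) := by
  rcases le_or_gt 0 x with hx | hx
  · simp only [signPart_of_nonneg hx]
    exact (h.continuousOn_slope x).sup continuousOn_const
  · simp only [signPart_of_neg hx]
    exact ((h.continuousOn_slope x).neg.sup continuousOn_const).neg

lemma hasDerivAt_signPart_sq_snd (h : IsControlledSolution e κ t₁ t₂ M K θ u u' b b') {t : ℝ}
    (ht : t ∈ Ioo t₁ t₂) (x : ℝ) :
    HasDerivAt (fun t => signPart (fun x => u x t) x ^ 2) (2 * signPart (fun x => u x t) x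
      * (b' x t * u x t + (b x t * u' x t - levyOp κ (fun x => u x t) x))) t := by
  rcases le_or_gt 0 x with hx | hx
  · simp only [signPart_of_nonneg hx]
    exact (hasDerivAt_max_zero_sq (u x t)).comp t (h.hasDerivAt_slope_snd t ht x)
  · simp only [signPart_of_neg hx, neg_sq]
    have hcomp := (hasDerivAt_max_zero_sq (-u x t)).comp t (h.hasDerivAt_slope_snd t ht x).neg
    rw [mul_neg, ← neg_mul, ← mul_neg] at hcomp
    exact hcomp

lemma exists_isEnergyDensity_signPart_sq (h : IsControlledSolution e κ t₁ t₂ M K θ u u' b b')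
    (hodd : ∀ t ∈ Icc t₁ t₂, Function.Odd fun x => u x t) :
    ∃ B, IsEnergyDensity e t₁ t₂ (2 * M * M) B (fun x t => signPart (fun x => u x t) x ^ 2)
      (fun x t => 2 * signPart (fun x => u x t) x * u' x t)
      (fun x t => 2 * signPart (fun x => u x t) x
        * (b' x t * u x t + (b x t * u' x t - levyOp κ (fun x => u x t) x))) :=
  have hP : ∀ t ∈ Icc t₁ t₂, IsBddLipschitz (signPart fun x => u x t) M := fun t ht =>
    (h.isBddLipschitz_slope t ht).signPart (hodd t ht).map_zero
  ⟨2 * M * (2 * K * M + 2 * M * ∫ y, min |y| 1 * κ y),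
    { nonneg := fun _ _ _ => sq_nonneg _
      isBddLipschitz := fun t ht => (hP t ht).sq
      continuousOn := fun x => (h.continuousOn_signPart x).pow 2
      hasDerivAt_fst := fun t ht => hasDerivAt_signPart_sq
        (h.isBddLipschitz_slope t (Ioo_subset_Icc_self ht))
        (hodd t (Ioo_subset_Icc_self ht)).map_zero
        (h.hasDerivAt_slope_fst t (Ioo_subset_Icc_self ht))
      hasDerivAt_snd := fun _ ht => h.hasDerivAt_signPart_sq_snd ht
      measurable_deriv_snd := fun t ht =>
        ((hP t (Ioo_subset_Icc_self ht)).continuous.measurable.const_mul 2).mul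
          (h.measurable_deriv_slope_snd ht)
      abs_deriv_snd_le := fun t ht x => by
        have hPt := hP t (Ioo_subset_Icc_self ht)
        have hM := hPt.nonneg
        rw [abs_mul, abs_mul, abs_two, mul_assoc (2 * M)]
        exact mul_le_mul (by linarith [hPt.abs_le x]) (h.abs_deriv_slope_snd_le ht x) (abs_nonneg _)
          (by positivity) }⟩

lemma integral_signPart_sq_le (h : IsControlledSolution e κ t₁ t₂ M K θ u u' b b')
    (hφ : IsWeight e φ) (hodd : ∀ t ∈ Icc t₁ t₂, Function.Odd fun x => u x t) {t : ℝ}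
    (ht : t ∈ Icc t₁ t₂) :
    ∫ x, signPart (fun x => u x t) x ^ 2 * φ x
      ≤ Real.exp ((kernelConst e κ + 3 * K + 2 * K) * (t - t₁))
        * ∫ x, signPart (fun x => u x t₁) x ^ 2 * φ x := by
  obtain ⟨B, hQ⟩ := h.exists_isEnergyDensity_signPart_sq hodd
  have henergy := hQ.integral_le hφ h.isLevyKernel (k := 2 * K) (S := 0)
    (ψ := fun x t => 2 * K * signPart (fun x => u x t) x ^ 2) h.nonneg (by linarith [h.nonneg])
    le_rfl h.isDriftField
    (fun t ht => by
      simpa only [mul_assoc] using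
        (hQ.integrable_mul hφ (Ioo_subset_Icc_self ht)).const_mul (2 * K))
    (fun t ht x => ?_)
    (fun t _ => by rw [← integral_const_mul, add_zero]; simp only [mul_assoc]; exact le_rfl) ht
  · simpa using henergy
  · have ht' := Ioo_subset_Icc_self ht
    have hlevy := levyOp_signPart_sq_le h.isLevyKernel (h.isBddLipschitz_slope t ht')
      (hodd t ht') x
    have hsq := signPart_mul_self (fun x => u x t) x
    have hstretch := mul_le_mul_of_nonneg_right
      (le_of_abs_le ((h.isDriftField t ht).abs_deriv_le x))
      (sq_nonneg (signPart (fun x => u x t) x))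
    linear_combination hlevy + 2 * hstretch + 2 * b' x t * hsq

theorem slope_nonpos (h : IsControlledSolution e κ t₁ t₂ M K θ u u' b b')
    (heven : ∀ t ∈ Icc t₁ t₂, ∀ x, θ (-x) t = θ x t) (hneg : ∀ x, 0 < x → u x t₁ ≤ 0) {t : ℝ}
    (ht : t ∈ Icc t₁ t₂) {x : ℝ} (hx : 0 < x) : u x t ≤ 0 := by
  have hodd : ∀ t ∈ Icc t₁ t₂, Function.Odd fun x => u x t := fun t ht => h.odd_slope heven ht
  have ht₁ : t₁ ∈ Icc t₁ t₂ := left_mem_Icc.2 (ht.1.trans ht.2)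
  have hφ : IsWeight e (polyWeight e 0 1) :=
    isWeight_polyWeight h.exponent_pos h.exponent_le le_rfl h.exponent_pos.le le_rfl
  have henergy := h.integral_signPart_sq_le hφ hodd ht
  simp only [signPart_eq_zero (hodd t₁ ht₁) hneg, ne_eq, OfNat.ofNat_ne_zero, not_false_eq_true,
    zero_pow, zero_mul, integral_zero, mul_zero] at henergy
  have hzero := eq_zero_of_integral_mul_nonpos hφ.integrable hφ.continuous hφ.pos
    ((h.isBddLipschitz_slope t ht).signPart (hodd t ht).map_zero).sq (fun _ => sq_nonneg _)
    henergy x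
  rw [signPart_of_nonneg hx.le, sq_eq_zero_iff] at hzero
  exact max_eq_right_iff.1 hzero

end IsControlledSolution

/-! ### Weighted estimates of the folded Hilbert transform -/

section NearPart

variable {e A B M s : ℝ} {φ g v w : ℝ → ℝ}

lemma integral_mul_symQuot (hg : Integrable g) (hw : IsBddLipschitz w B) (s : ℝ) :
    ∫ x, g x * symQuot w x s = ∫ x, w x * g (x + s) / s - w (x + s) * g x / s := by
  have hshift : ∀ r, Integrable fun x => w (x + r) * g x / s := fun r =>
    (hg.bdd_mul (hw.continuous.comp (continuous_add_const r)).aestronglyMeasurable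
      (ae_of_all _ fun x => hw.abs_le (x + r))).div_const s
  have hleft : Integrable fun x => w x * g (x + s) / s := by
    simpa using (hshift (-s)).comp_add_right s
  have htranslate : ∫ x, w (x + -s) * g x / s = ∫ x, w x * g (x + s) / s := by
    rw [← integral_add_right_eq_self _ s]
    simp
  rw [integral_sub hleft (hshift s), ← htranslate, ← integral_sub (hshift (-s)) (hshift s)]
  refine integral_congr_ae (ae_of_all _ fun x => ?_)
  simp only [symQuot, ← sub_eq_add_neg]
  ring

lemma IsWeight.abs_mul_sub_mul_div_le (hφ : IsWeight e φ) (hv : IsBddLipschitz v M) (hs : 0 < s)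
    (hs1 : s ≤ 1) (x : ℝ) : |(v (x + s) * φ (x + s) - v x * φ x) / s| ≤ 12 * M * φ x := by
  have hdist : |x - (x + s)| ≤ 1 := by rwa [sub_add_cancel_left, abs_neg, abs_of_pos hs]
  have hlip := hv.abs_sub_le (x + s) x
  have hlipφ := hφ.abs_sub_le hdist
  rw [add_sub_cancel_left, abs_of_pos hs] at hlip hlipφ
  have hM := hv.nonneg
  have hfst := mul_le_mul hlip (hφ.le_four_mul_of_abs_sub_le_one hdist) (hφ.nonneg _)
    (by positivity)
  have hsnd := mul_le_mul (hv.abs_le x) hlipφ (abs_nonneg _) hM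
  rw [abs_div, abs_of_pos hs, div_le_iff₀ hs]
  calc |v (x + s) * φ (x + s) - v x * φ x|
      = |(v (x + s) - v x) * φ (x + s) + v x * (φ (x + s) - φ x)| := by ring_nf
    _ ≤ |v (x + s) - v x| * φ (x + s) + |v x| * |φ (x + s) - φ x| := by
        rw [← abs_of_pos (hφ.pos (x + s)), ← abs_mul, ← abs_mul, abs_of_pos (hφ.pos (x + s))]
        exact abs_add_le _ _
    _ ≤ 12 * M * φ x * s := by linarith

lemma IsWeight.abs_mul_mul_sub_mul_div_le (hφ : IsWeight e φ) (hv : IsBddLipschitz v M)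
    (hs : 0 < s) (hs1 : s ≤ 1) (w : ℝ → ℝ) (x : ℝ) :
    |w x * w (x + s) * ((v (x + s) * φ (x + s) - v x * φ x) / s)|
      ≤ 6 * M * (w x ^ 2 * φ x) + 24 * M * (w (x + s) ^ 2 * φ (x + s)) := by
  have hM := hv.nonneg
  have hdist : |x + s - x| ≤ 1 := by rwa [add_sub_cancel_left, abs_of_pos hs]
  have hamgm : |w x * w (x + s)| ≤ w x ^ 2 / 2 + w (x + s) ^ 2 / 2 := by
    rw [abs_mul]
    linarith [two_mul_le_add_sq |w x| |w (x + s)|, sq_abs (w x), sq_abs (w (x + s))]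
  have hφx := hφ.le_four_mul_of_abs_sub_le_one hdist
  calc |w x * w (x + s) * ((v (x + s) * φ (x + s) - v x * φ x) / s)|
      ≤ (w x ^ 2 / 2 + w (x + s) ^ 2 / 2) * (12 * M * φ x) := by
        rw [abs_mul]
        exact mul_le_mul hamgm (hφ.abs_mul_sub_mul_div_le hv hs hs1 x) (abs_nonneg _)
          (by positivity)
    _ = 6 * M * (w x ^ 2 * φ x) + 6 * M * w (x + s) ^ 2 * φ x := by ring
    _ ≤ 6 * M * (w x ^ 2 * φ x) + 6 * M * w (x + s) ^ 2 * (4 * φ (x + s)) := by gcongr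
    _ = _ := by ring

lemma IsWeight.integrable_mul_mul (hφ : IsWeight e φ) (hw : IsBddLipschitz w B)
    (hv : IsBddLipschitz v M) : Integrable fun x => w x * v x * φ x :=
  (hw.mul hv).integrable_mul hφ.integrable

-- Translating one of the two terms of the symmetric quotient moves the difference onto `v * φ`.
lemma IsWeight.abs_integral_mul_symQuot_le (hφ : IsWeight e φ) (hw : IsBddLipschitz w B)
    (hv : IsBddLipschitz v M) (hs : 0 < s) (hs1 : s ≤ 1) :
    |∫ x, w x * v x * φ x * symQuot w x s| ≤ 30 * M * ∫ x, w x ^ 2 * φ x := by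
  have henergy : Integrable fun x => w x ^ 2 * φ x := hw.sq.integrable_mul hφ.integrable
  have henergy' : Integrable fun x => w (x + s) ^ 2 * φ (x + s) := henergy.comp_add_right s
  have hbound := norm_integral_le_of_norm_le
    (f := fun x => w x * w (x + s) * ((v (x + s) * φ (x + s) - v x * φ x) / s))
    ((henergy.const_mul (6 * M)).add (henergy'.const_mul (24 * M)))
    (ae_of_all volume (hφ.abs_mul_mul_sub_mul_div_le hv hs hs1 w))
  simp only [Pi.add_apply] at hbound
  rw [integral_add (henergy.const_mul _) (henergy'.const_mul _), integral_const_mul,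
    integral_const_mul, integral_add_right_eq_self fun x => w x ^ 2 * φ x] at hbound
  rw [integral_mul_symQuot (hφ.integrable_mul_mul hw hv) hw]
  calc |∫ x, w x * (w (x + s) * v (x + s) * φ (x + s)) / s - w (x + s) * (w x * v x * φ x) / s|
      = ‖∫ x, w x * w (x + s) * ((v (x + s) * φ (x + s) - v x * φ x) / s)‖ := by
        rw [Real.norm_eq_abs]
        congr 2 with x
        ring
    _ ≤ _ := hbound.trans_eq (by ring)

lemma IsWeight.integrable_prod_mul_symQuot (hφ : IsWeight e φ) (hw : IsBddLipschitz w B)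
    (hv : IsBddLipschitz v M) :
    Integrable (fun p : ℝ × ℝ => w p.1 * v p.1 * φ p.1 * symQuot w p.1 p.2)
      (volume.prod (volume.restrict (Ioc (0 : ℝ) 1))) := by
  have hwc := hw.continuous
  have hmeas : Measurable fun p : ℝ × ℝ => symQuot w p.1 p.2 :=
    (by fun_prop : Continuous fun p : ℝ × ℝ => w (p.1 - p.2) - w (p.1 + p.2)).measurable.div
      measurable_snd
  exact ((hφ.integrable_mul_mul hw hv).comp_fst _).mul_bdd hmeas.aestronglyMeasurable
    (ae_of_all _ fun p => hw.abs_symQuot_le p.1 p.2)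

lemma IsWeight.integrable_mul_integral_symQuot (hφ : IsWeight e φ) (hw : IsBddLipschitz w B)
    (hv : IsBddLipschitz v M) :
    Integrable fun x => w x * v x * φ x * ∫ s in (0 : ℝ)..1, symQuot w x s := by
  simp_rw [intervalIntegral.integral_of_le (zero_le_one' ℝ), ← integral_const_mul]
  exact (hφ.integrable_prod_mul_symQuot hw hv).integral_prod_left

lemma IsWeight.abs_integral_mul_integral_symQuot_le (hφ : IsWeight e φ) (hw : IsBddLipschitz w B)
    (hv : IsBddLipschitz v M) :
    |∫ x, w x * v x * φ x * ∫ s in (0 : ℝ)..1, symQuot w x s|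
      ≤ 30 * M * ∫ x, w x ^ 2 * φ x := by
  simp_rw [intervalIntegral.integral_of_le (zero_le_one' ℝ), ← integral_const_mul]
  rw [integral_integral_swap (hφ.integrable_prod_mul_symQuot hw hv), integral_const_mul]
  simpa using norm_setIntegral_le_of_norm_le_const (μ := volume) (s := Ioc (0 : ℝ) 1)
    (f := fun s => ∫ x, w x * v x * φ x * symQuot w x s) (by simp)
    fun s hs => hφ.abs_integral_mul_symQuot_le hw hv hs.1 hs.2

end NearPart

section FarPart

variable {e B E L l s : ℝ} {w : ℝ → ℝ}

-- Peetre's inequality.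
lemma one_add_sq_rpow_neg_le (he : 0 ≤ e) (he' : e ≤ 1) (x s : ℝ) :
    (1 + s ^ 2) ^ (-e) ≤ 2 * (1 + x ^ 2) ^ e * (1 + (x - s) ^ 2) ^ (-e) := by
  have hx := one_add_sq_pos x
  have hs := one_add_sq_pos s
  have hz := one_add_sq_pos (x - s)
  have hle : (1 + (x - s) ^ 2) ^ e ≤ 2 * ((1 + x ^ 2) ^ e * (1 + s ^ 2) ^ e) :=
    calc (1 + (x - s) ^ 2) ^ e ≤ (2 * ((1 + x ^ 2) * (1 + s ^ 2))) ^ e :=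
          Real.rpow_le_rpow hz.le (by nlinarith [sq_nonneg (x + s), sq_nonneg (x * s)]) he
      _ = 2 ^ e * ((1 + x ^ 2) ^ e * (1 + s ^ 2) ^ e) := by
          rw [Real.mul_rpow two_pos.le (by positivity), Real.mul_rpow hx.le hs.le]
      _ ≤ 2 ^ (1 : ℝ) * ((1 + x ^ 2) ^ e * (1 + s ^ 2) ^ e) := by
          gcongr
          exact one_le_two
      _ = _ := by rw [Real.rpow_one]
  rw [Real.rpow_neg hs.le, Real.rpow_neg hz.le, ← div_eq_mul_inv,
    le_div_iff₀ (Real.rpow_pos_of_pos hz e), inv_mul_le_iff₀ (Real.rpow_pos_of_pos hs e)]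
  linarith

lemma one_le_two_mul_rpow_half_mul (he : e ≤ 1 / 4) (hs : 1 ≤ s) :
    1 ≤ 2 * s ^ (1 / 2 : ℝ) * (1 + s ^ 2) ^ (-e) := by
  have hs2 := one_add_sq_pos s
  have hle : (1 + s ^ 2) ^ e ≤ 2 * s ^ (1 / 2 : ℝ) :=
    calc (1 + s ^ 2) ^ e ≤ (1 + s ^ 2) ^ (1 / 4 : ℝ) :=
          Real.rpow_le_rpow_of_exponent_le (one_le_one_add_sq s) he
      _ ≤ (2 * s ^ 2) ^ (1 / 4 : ℝ) :=
          Real.rpow_le_rpow hs2.le (by nlinarith) (by norm_num)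
      _ = 2 ^ (1 / 4 : ℝ) * s ^ (1 / 2 : ℝ) := by
          rw [Real.mul_rpow two_pos.le (sq_nonneg s), ← Real.rpow_natCast,
            ← Real.rpow_mul (by linarith)]
          norm_num
      _ ≤ 2 ^ (1 : ℝ) * s ^ (1 / 2 : ℝ) := by gcongr <;> norm_num
      _ = _ := by rw [Real.rpow_one]
  rwa [Real.rpow_neg hs2.le, ← div_eq_mul_inv, one_le_div (Real.rpow_pos_of_pos hs2 e)]

lemma abs_div_le_mul_sq_add {p : ℝ} (hp : 0 < p) (hl : 0 < l) (hs : 0 < s) (a : ℝ) :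
    |a| / s ≤ l / 2 * (p * a ^ 2) + 1 / (2 * l * p * s ^ 2) := by
  have hsquare : l / 2 * (p * a ^ 2) + 1 / (2 * l * p * s ^ 2) - |a| / s
      = (l * p * |a| * s - 1) ^ 2 / (2 * l * p * s ^ 2) := by
    rw [← sq_abs a]
    field_simp
    ring
  have hnonneg : 0 ≤ (l * p * |a| * s - 1) ^ 2 / (2 * l * p * s ^ 2) := by positivity
  linarith

lemma abs_div_le_polyWeight_add {R x : ℝ} (he : 0 < e) (he' : e ≤ 1 / 4) (hs : 1 ≤ s)
    (hR : |x| + s ≤ R) (hl : 0 < l) (a : ℝ) :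
    |a| / s ≤ 2 * l * (1 + x ^ 2) ^ e * (a ^ 2 * polyWeight e e R (x - s))
      + 1 / l * s ^ (-(3 / 2) : ℝ) := by
  have hs0 : 0 < s := by linarith
  have hp : 0 < (1 + s ^ 2) ^ (-e) := Real.rpow_pos_of_pos (one_add_sq_pos s) _
  have hxs : |x - s| ≤ R := (abs_sub _ _).trans (by rwa [abs_of_pos hs0])
  have hweight : (1 + s ^ 2) ^ (-e)
      ≤ 2 * (1 + x ^ 2) ^ e * (2 * polyWeight e e R (x - s)) :=
    (one_add_sq_rpow_neg_le he.le (by linarith) x s).trans <| mul_le_mul_of_nonneg_left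
      (rpow_le_two_mul_polyWeight he he' (by linarith [abs_nonneg x]) hxs) (by positivity)
  have htail : 1 / (2 * l * (1 + s ^ 2) ^ (-e) * s ^ 2) ≤ 1 / l * s ^ (-(3 / 2) : ℝ) := by
    have hpow : s ^ (-(3 / 2) : ℝ) * s ^ 2 = s ^ (1 / 2 : ℝ) := by
      rw [← Real.rpow_natCast, ← Real.rpow_add hs0]
      norm_num
    rw [div_le_iff₀ (by positivity)]
    calc (1 : ℝ) ≤ 2 * s ^ (1 / 2 : ℝ) * (1 + s ^ 2) ^ (-e) := one_le_two_mul_rpow_half_mul he' hs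
      _ = 1 / l * s ^ (-(3 / 2) : ℝ) * (2 * l * (1 + s ^ 2) ^ (-e) * s ^ 2) := by
          rw [← hpow]
          field_simp
  calc |a| / s ≤ l / 2 * ((1 + s ^ 2) ^ (-e) * a ^ 2) + 1 / (2 * l * (1 + s ^ 2) ^ (-e) * s ^ 2) :=
        abs_div_le_mul_sq_add hp hl hs0 a
    _ ≤ l / 2 * (2 * (1 + x ^ 2) ^ e * (2 * polyWeight e e R (x - s)) * a ^ 2)
          + 1 / l * s ^ (-(3 / 2) : ℝ) := by gcongr
    _ = _ := by ring

lemma IsBddLipschitz.intervalIntegrable_abs_div (hw : IsBddLipschitz w B) (x : ℝ) (hL : 1 ≤ L) :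
    IntervalIntegrable (fun s => |w (x - s)| / s) volume 1 L := by
  have hwc := hw.continuous
  refine ContinuousOn.intervalIntegrable (ContinuousOn.div (by fun_prop) continuousOn_id ?_)
  rw [uIcc_of_le hL]
  exact fun s hs => (one_pos.trans_le hs.1).ne'

lemma integral_rpow_neg_three_halves_le (hL : 1 ≤ L) :
    ∫ s in (1 : ℝ)..L, s ^ (-(3 / 2) : ℝ) ≤ 2 := by
  rw [integral_rpow (Or.inr ⟨by norm_num, by simp [uIcc_of_le hL]⟩), Real.one_rpow,
    div_le_iff_of_neg (by norm_num)]
  have hnonneg : 0 ≤ L ^ (-(3 / 2) + 1 : ℝ) := by positivity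
  linarith

lemma IsBddLipschitz.integral_abs_div_le (hw : IsBddLipschitz w B) (he : 0 < e) (he' : e ≤ 1 / 4)
    (hE : ∀ R, 1 ≤ R → ∫ x, w x ^ 2 * polyWeight e e R x ≤ E) (x : ℝ) (hL : 1 ≤ L) (hl : 0 < l) :
    ∫ s in (1 : ℝ)..L, |w (x - s)| / s ≤ 2 * l * ((1 + x ^ 2) ^ e * E) + 2 / l := by
  have hR : 1 ≤ |x| + L := by linarith [abs_nonneg x]
  have hφ := isWeight_polyWeight he he' he.le le_rfl hR
  have hshift : Integrable fun s => w (x - s) ^ 2 * polyWeight e e (|x| + L) (x - s) :=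
    (hw.sq.integrable_mul hφ.integrable).comp_sub_left x
  have hpow : IntervalIntegrable (fun s : ℝ => s ^ (-(3 / 2) : ℝ)) volume 1 L :=
    intervalIntegral.intervalIntegrable_rpow (Or.inr (by simp [uIcc_of_le hL]))
  have henergy : ∫ s in (1 : ℝ)..L, w (x - s) ^ 2 * polyWeight e e (|x| + L) (x - s) ≤ E := by
    rw [intervalIntegral.integral_of_le hL]
    refine (setIntegral_le_integral hshift (ae_of_all _ fun s =>
      mul_nonneg (sq_nonneg _) (hφ.nonneg _))).trans ?_
    rw [integral_sub_left_eq_self fun z => w z ^ 2 * polyWeight e e (|x| + L) z]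
    exact hE _ hR
  calc ∫ s in (1 : ℝ)..L, |w (x - s)| / s
      ≤ ∫ s in (1 : ℝ)..L, (2 * l * (1 + x ^ 2) ^ e
          * (w (x - s) ^ 2 * polyWeight e e (|x| + L) (x - s)) + 1 / l * s ^ (-(3 / 2) : ℝ)) :=
        intervalIntegral.integral_mono_on hL (hw.intervalIntegrable_abs_div x hL)
          ((hshift.intervalIntegrable.const_mul _).add (hpow.const_mul _)) fun s hs =>
            abs_div_le_polyWeight_add he he' hs.1 (by linarith [hs.2]) hl _
    _ = 2 * l * (1 + x ^ 2) ^ e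
          * (∫ s in (1 : ℝ)..L, w (x - s) ^ 2 * polyWeight e e (|x| + L) (x - s))
          + 1 / l * ∫ s in (1 : ℝ)..L, s ^ (-(3 / 2) : ℝ) := by
        rw [intervalIntegral.integral_add (hshift.intervalIntegrable.const_mul _)
          (hpow.const_mul _), intervalIntegral.integral_const_mul,
          intervalIntegral.integral_const_mul]
    _ ≤ 2 * l * (1 + x ^ 2) ^ e * E + 1 / l * 2 := by
        gcongr
        exact integral_rpow_neg_three_halves_le hL
    _ = _ := by ring

lemma IsBddLipschitz.abs_integral_symQuot_le_add (hw : IsBddLipschitz w B) (x : ℝ) (hL : 1 ≤ L) :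
    |∫ s in (1 : ℝ)..L, symQuot w x s|
      ≤ (∫ s in (1 : ℝ)..L, |w (x - s)| / s) + ∫ s in (1 : ℝ)..L, |w (x + s)| / s := by
  have hminus := hw.intervalIntegrable_abs_div x hL
  have hplus : IntervalIntegrable (fun s => |w (x + s)| / s) volume 1 L := by
    simpa [add_comm] using hw.comp_neg.intervalIntegrable_abs_div (-x) hL
  rw [← intervalIntegral.integral_add hminus hplus]
  refine (intervalIntegral.abs_integral_le_integral_abs hL).trans
    (intervalIntegral.integral_mono_on hL (hw.intervalIntegrable_symQuot x 1 L).abs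
      (hminus.add hplus) fun s hs => ?_)
  have hs0 : 0 < s := one_pos.trans_le hs.1
  rw [symQuot, abs_div, abs_of_pos hs0, ← add_div]
  gcongr
  exact abs_sub _ _

lemma IsBddLipschitz.sq_integral_symQuot_le (hw : IsBddLipschitz w B) (he : 0 < e)
    (he' : e ≤ 1 / 4) (hE0 : 0 < E)
    (hE : ∀ R, 1 ≤ R → ∫ x, w x ^ 2 * polyWeight e e R x ≤ E) (x : ℝ) (hL : 1 ≤ L) :
    (∫ s in (1 : ℝ)..L, symQuot w x s) ^ 2 ≤ 64 * ((1 + x ^ 2) ^ e * E) := by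
  set P := (1 + x ^ 2) ^ e * E with hP
  have hP0 : 0 < P := mul_pos (Real.rpow_pos_of_pos (one_add_sq_pos x) e) hE0
  have hsqrt := Real.sqrt_pos.2 hP0
  have hE' : ∀ R, 1 ≤ R → ∫ x, w (-x) ^ 2 * polyWeight e e R x ≤ E := fun R hR =>
    ((isWeight_polyWeight he he' he.le le_rfl hR).integral_comp_neg_mul (fun x => w x ^ 2)).trans_le
      (hE R hR)
  have hminus := hw.integral_abs_div_le he he' hE x hL (inv_pos.2 hsqrt)
  have hplus := hw.comp_neg.integral_abs_div_le he he' hE' (-x) hL (inv_pos.2 hsqrt)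
  simp only [neg_sub, neg_sq, sub_neg_eq_add, add_comm _ x] at hplus
  rw [← hP] at hminus hplus
  have hbalance : 2 * (√P)⁻¹ * P + 2 / (√P)⁻¹ = 4 * √P := by
    nth_rw 2 [← Real.mul_self_sqrt hP0.le]
    field_simp
    norm_num
  have habs : |∫ s in (1 : ℝ)..L, symQuot w x s| ≤ 8 * √P := by
    linarith [hw.abs_integral_symQuot_le_add x hL]
  calc (∫ s in (1 : ℝ)..L, symQuot w x s) ^ 2
      = |∫ s in (1 : ℝ)..L, symQuot w x s| ^ 2 := (sq_abs _).symm
    _ ≤ (8 * √P) ^ 2 := pow_le_pow_left₀ (abs_nonneg _) habs 2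
    _ = 64 * P := by
        rw [mul_pow, Real.sq_sqrt hP0.le]
        norm_num

end FarPart

/-! ### Propagation of evenness over short times -/

section SourceTerm

variable {e B E M S R : ℝ} {c v w : ℝ → ℝ}

lemma two_mul_abs_integral_mul_mul_mul_le (he : 0 < e) (he' : e ≤ 1 / 4) (hR : 1 ≤ R)
    (hw : IsBddLipschitz w B) (hv : IsBddLipschitz v M) (hc : ∀ x, c x ^ 2 ≤ S * (1 + x ^ 2) ^ e) :
    2 * |∫ x, w x * c x * v x * polyWeight e e R x|
      ≤ (∫ x, w x ^ 2 * polyWeight e e R x) + S * ∫ x, v x ^ 2 * polyWeight e 0 R x := by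
  have hφ := isWeight_polyWeight he he' he.le le_rfl hR
  have hφ₀ := isWeight_polyWeight he he' le_rfl he.le hR
  have hw2 := (hw.sq.integrable_mul hφ.integrable).const_mul (1 / 2)
  have hv2 := (hv.sq.integrable_mul hφ₀.integrable).const_mul (S / 2)
  have hpt : ∀ x, ‖w x * c x * v x * polyWeight e e R x‖
      ≤ 1 / 2 * (w x ^ 2 * polyWeight e e R x) + S / 2 * (v x ^ 2 * polyWeight e 0 R x) :=
    fun x => by
      have hp := hφ.nonneg x
      calc ‖w x * c x * v x * polyWeight e e R x‖ = |w x| * |c x * v x| * polyWeight e e R x := by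
            rw [Real.norm_eq_abs, abs_mul, mul_assoc (w x), abs_mul, abs_of_nonneg hp]
        _ ≤ (1 / 2 * w x ^ 2 + 1 / 2 * (c x ^ 2 * v x ^ 2)) * polyWeight e e R x := by
            gcongr
            linarith [two_mul_le_add_sq |w x| |c x * v x|, sq_abs (w x), sq_abs (c x * v x),
              mul_pow (c x) (v x) 2]
        _ ≤ (1 / 2 * w x ^ 2 + 1 / 2 * (S * (1 + x ^ 2) ^ e * v x ^ 2)) * polyWeight e e R x := by
            gcongr
            exact hc x
        _ = _ := by
            rw [← rpow_mul_polyWeight]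
            ring
  have hle := norm_integral_le_of_norm_le (hw2.add hv2) (ae_of_all volume hpt)
  rw [integral_add' hw2 hv2, integral_const_mul, integral_const_mul, Real.norm_eq_abs] at hle
  linarith

lemma HasFoldedHilbert.sq_sub_integral_le {x a : ℝ} (h : HasFoldedHilbert w x a)
    (hw : IsBddLipschitz w B) (he : 0 < e) (he' : e ≤ 1 / 4) (hE0 : 0 < E)
    (hE : ∀ R, 1 ≤ R → ∫ x, w x ^ 2 * polyWeight e e R x ≤ E) :
    (a - ∫ s in (0 : ℝ)..1, symQuot w x s) ^ 2 ≤ 64 * ((1 + x ^ 2) ^ e * E) := by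
  have hlim : Tendsto (fun L => (∫ s in (1 : ℝ)..L, symQuot w x s) ^ 2) atTop
      (𝓝 ((a - ∫ s in (0 : ℝ)..1, symQuot w x s) ^ 2)) := by
    refine ((h.sub_const _).congr fun L => ?_).pow 2
    rw [sub_eq_iff_eq_add', intervalIntegral.integral_add_adjacent_intervals
      (hw.intervalIntegrable_symQuot x 0 1) (hw.intervalIntegrable_symQuot x 1 L)]
  refine le_of_tendsto hlim ?_
  filter_upwards [eventually_ge_atTop 1] with L hL
  exact hw.sq_integral_symQuot_le he he' hE0 hE x hL

/- Splitting the Hilbert transform `c` of `w` at distance `1`, the near part gains a derivative by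
symmetrization and the far part is controlled pointwise by the energy of `w`. -/
lemma two_mul_abs_integral_mul_hilbert_mul_le (he : 0 < e) (he' : e ≤ 1 / 4) (hR : 1 ≤ R)
    (hw : IsBddLipschitz w B) (hv : IsBddLipschitz v M)
    (hc : ∀ x, HasFoldedHilbert w x (Real.pi * c x))
    (hi : Integrable fun x => w x * c x * v x * polyWeight e e R x) (hE0 : 0 < E)
    (hE : ∀ R, 1 ≤ R → ∫ x, w x ^ 2 * polyWeight e e R x ≤ E) :
    2 * |∫ x, w x * c x * v x * polyWeight e e R x|
      ≤ (30 * M + 1) * (∫ x, w x ^ 2 * polyWeight e e R x)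
        + 64 * E * ∫ x, v x ^ 2 * polyWeight e 0 R x := by
  have hpi := Real.pi_gt_three
  have hφ := isWeight_polyWeight he he' he.le le_rfl hR
  set near : ℝ → ℝ := fun x => ∫ s in (0 : ℝ)..1, symQuot w x s
  set far : ℝ → ℝ := fun x => c x - near x / Real.pi with hfar
  have hinear : Integrable fun x => 1 / Real.pi * (w x * v x * polyWeight e e R x * near x) :=
    (hφ.integrable_mul_integral_symQuot hw hv).const_mul _
  have hsplit : ∫ x, w x * c x * v x * polyWeight e e R x
      = 1 / Real.pi * (∫ x, w x * v x * polyWeight e e R x * near x)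
        + ∫ x, w x * far x * v x * polyWeight e e R x := by
    rw [← sub_eq_iff_eq_add', ← integral_const_mul, ← integral_sub hi hinear]
    congr 1 with x
    ring
  have hnear_le : 2 * |1 / Real.pi * ∫ x, w x * v x * polyWeight e e R x * near x|
      ≤ 30 * M * ∫ x, w x ^ 2 * polyWeight e e R x := by
    rw [abs_mul, abs_of_pos (by positivity), ← mul_assoc]
    refine le_trans (mul_le_of_le_one_left (abs_nonneg _) ?_)
      (hφ.abs_integral_mul_integral_symQuot_le hw hv)
    rw [mul_one_div, div_le_one Real.pi_pos]
    linarith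
  have hfar_sq : ∀ x, far x ^ 2 ≤ 64 * E * (1 + x ^ 2) ^ e := fun x =>
    calc far x ^ 2 = (Real.pi * c x - near x) ^ 2 / Real.pi ^ 2 := by
          rw [hfar]
          field_simp
      _ ≤ (Real.pi * c x - near x) ^ 2 := div_le_self (sq_nonneg _) (by nlinarith)
      _ ≤ 64 * ((1 + x ^ 2) ^ e * E) := (hc x).sq_sub_integral_le hw he he' hE0 hE
      _ = _ := by ring
  have hfar_le := two_mul_abs_integral_mul_mul_mul_le he he' hR hw hv hfar_sq
  rw [hsplit]
  linarith [abs_add_le (1 / Real.pi * ∫ x, w x * v x * polyWeight e e R x * near x)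
    (∫ x, w x * far x * v x * polyWeight e e R x)]

end SourceTerm

/-- Twice the odd part of `f`, which measures the failure of `f` to be even. -/
def evenDefect (f : ℝ → ℝ) (x : ℝ) : ℝ := f x - f (-x)

section EvenDefect

variable {e A a a' x : ℝ} {κ f f' : ℝ → ℝ}

lemma IsBddLipschitz.evenDefect (hf : IsBddLipschitz f A) :
    IsBddLipschitz (evenDefect f) (A + A) :=
  hf.sub hf.comp_neg

lemma hasDerivAt_evenDefect (hd : ∀ x, HasDerivAt f (f' x) x) (x : ℝ) :
    HasDerivAt (evenDefect f) (f' x + f' (-x)) x :=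
  ((hd x).sub ((hd (-x)).comp x (hasDerivAt_neg x))).congr_deriv (by ring)

lemma levyOp_evenDefect (hκ : IsLevyKernel e κ) (hf : IsBddLipschitz f A) (x : ℝ) :
    levyOp κ (evenDefect f) x = levyOp κ f x - levyOp κ f (-x) := by
  rw [← levyOp_comp_neg hκ f x]
  exact levyOp_sub hκ hf hf.comp_neg x

lemma HasFoldedHilbert.evenDefect (h : HasFoldedHilbert f x a) (h' : HasFoldedHilbert f (-x) a')
    (hf : IsBddLipschitz f A) : HasFoldedHilbert (evenDefect f) x (a + a') := by
  refine (h.add h').congr fun R => ?_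
  rw [← intervalIntegral.integral_add (hf.intervalIntegrable_symQuot _ _ _)
    (hf.intervalIntegrable_symQuot _ _ _)]
  congr 1 with s
  simp only [symQuot, _root_.evenDefect]
  ring_nf

end EvenDefect

namespace IsControlledSolution

variable {e t₁ t₂ M K : ℝ} {κ φ : ℝ → ℝ} {θ u u' b b' : ℝ → ℝ → ℝ}

lemma sq_drift_add_le (h : IsControlledSolution e κ t₁ t₂ M K θ u u' b b') {t : ℝ}
    (ht : t ∈ Ioo t₁ t₂) (x : ℝ) : (b x t + b (-x) t) ^ 2 ≤ 4 * K ^ 2 * (1 + x ^ 2) ^ e := by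
  have hx := (h.isDriftField t ht).abs_le x
  have hx' := (h.isDriftField t ht).abs_le (-x)
  rw [neg_sq] at hx'
  have hsq : ((1 + x ^ 2) ^ (e / 2)) ^ 2 = (1 + x ^ 2) ^ e := by
    rw [← Real.rpow_natCast, ← Real.rpow_mul (one_add_sq_pos x).le]
    norm_num
  calc (b x t + b (-x) t) ^ 2 = |b x t + b (-x) t| ^ 2 := (sq_abs _).symm
    _ ≤ (2 * K * (1 + x ^ 2) ^ (e / 2)) ^ 2 :=
        pow_le_pow_left₀ (abs_nonneg _) ((abs_add_le _ _).trans (by linarith)) 2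
    _ = 4 * K ^ 2 * (1 + x ^ 2) ^ e := by
        rw [mul_pow, hsq]
        ring

lemma integrable_evenDefect_mul_mul (h : IsControlledSolution e κ t₁ t₂ M K θ u u' b b')
    (hφ : IsWeight e φ) {t : ℝ} (ht : t ∈ Ioo t₁ t₂) :
    Integrable fun x =>
      evenDefect (fun x => θ x t) x * (b x t + b (-x) t) * u (-x) t * φ x := by
  have ht' := Ioo_subset_Icc_self ht
  have hb := (h.isDriftField t ht).integrable_mul hφ
  have hsum : Integrable fun x => (b x t + b (-x) t) * φ x :=
    (hb.add hb.comp_neg).congr (ae_of_all _ fun x => by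
      simp only [Pi.add_apply, hφ.apply_neg, add_mul])
  refine (((h.isBddLipschitz t ht').evenDefect.mul
    (h.isBddLipschitz_slope t ht').comp_neg).integrable_mul hsum).congr (ae_of_all _ fun x => ?_)
  ring

lemma exists_isEnergyDensity_sq_evenDefect
    (h : IsControlledSolution e κ t₁ t₂ M K θ u u' b b') :
    ∃ A B, IsEnergyDensity e t₁ t₂ A B (fun x t => evenDefect (fun x => θ x t) x ^ 2)
      (fun x t => 2 * evenDefect (fun x => θ x t) x * (u x t + u (-x) t))
      (fun x t => 2 * evenDefect (fun x => θ x t) x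
        * ((b x t * u x t - levyOp κ (fun x => θ x t) x)
          - (b (-x) t * u (-x) t - levyOp κ (fun x => θ x t) (-x)))) := by
  set D := K * M + 2 * M * ∫ y, min |y| 1 * κ y
  refine ⟨2 * (M + M) * (M + M), 2 * (M + M) * (D + D),
    { nonneg := fun _ _ _ => sq_nonneg _
      isBddLipschitz := fun t ht => (h.isBddLipschitz t ht).evenDefect.sq
      continuousOn := fun x => ((h.continuousOn x).sub (h.continuousOn (-x))).pow 2
      hasDerivAt_fst := fun t ht x => ((hasDerivAt_evenDefect
        (h.hasDerivAt_fst t (Ioo_subset_Icc_self ht)) x).pow 2).congr_deriv (by simp)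
      hasDerivAt_snd := fun t ht x =>
        (((h.hasDerivAt_snd t ht x).sub (h.hasDerivAt_snd t ht (-x))).pow 2).congr_deriv
          (by simp [evenDefect])
      measurable_deriv_snd := fun t ht => ?_
      abs_deriv_snd_le := fun t ht x => ?_ }⟩
  · have ht' := Ioo_subset_Icc_self ht
    have hmeas := (h.isDriftField t ht).measurable_mul_sub_levyOp h.isLevyKernel
      (h.isBddLipschitz t ht') (h.isBddLipschitz_slope t ht').continuous.measurable
    exact ((h.isBddLipschitz t ht').evenDefect.continuous.measurable.const_mul 2).mul
      (hmeas.sub (hmeas.comp measurable_neg))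
  · have ht' := Ioo_subset_Icc_self ht
    have hw := (h.isBddLipschitz t ht').evenDefect
    have hM := (h.isBddLipschitz t ht').nonneg
    have hbound := (h.isDriftField t ht).abs_mul_sub_levyOp_le h.exponent_pos h.isLevyKernel
      (h.isBddLipschitz t ht') (h.isBddLipschitz_slope t ht').abs_le
    have hx' := hbound (-x)
    rw [neg_sq] at hx'
    rw [abs_mul, abs_mul, abs_two, mul_assoc (2 * (M + M)), add_mul D]
    exact mul_le_mul (by linarith [hw.abs_le x])
      ((abs_sub _ _).trans (add_le_add (hbound x) hx')) (abs_nonneg _) (by positivity)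

theorem integral_sq_evenDefect_le (h : IsControlledSolution e κ t₁ t₂ M K θ u u' b b')
    (heven : ∀ x, θ (-x) t₁ = θ x t₁) (hφ : IsWeight e φ) {k S : ℝ} (hk : 0 ≤ k) (hS : 0 ≤ S)
    (hsource : ∀ t ∈ Ioo t₁ t₂,
      2 * |∫ x, evenDefect (fun x => θ x t) x * (b x t + b (-x) t) * u (-x) t * φ x|
        ≤ k * (∫ x, evenDefect (fun x => θ x t) x ^ 2 * φ x) + S) {t : ℝ} (ht : t ∈ Icc t₁ t₂) :
    ∫ x, evenDefect (fun x => θ x t) x ^ 2 * φ x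
      ≤ Real.exp ((kernelConst e κ + 3 * K + k) * (t₂ - t₁)) * (S * (t₂ - t₁)) := by
  obtain ⟨A, B, hQ⟩ := h.exists_isEnergyDensity_sq_evenDefect
  have henergy := hQ.integral_le hφ h.isLevyKernel h.nonneg hk hS h.isDriftField (ψ := fun x t =>
      -2 * (evenDefect (fun x => θ x t) x * (b x t + b (-x) t) * u (-x) t))
    (fun t ht => by
      simpa only [mul_assoc] using (h.integrable_evenDefect_mul_mul hφ ht).const_mul (-2))
    (fun t ht x => ?_) (fun t ht => ?_) ht
  · have hzero : ∀ x, evenDefect (fun x => θ x t₁) x = 0 := fun x => by simp [evenDefect, heven]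
    simp only [hzero, ne_eq, OfNat.ofNat_ne_zero, not_false_eq_true, zero_pow, zero_mul,
      integral_zero, zero_add] at henergy
    have hkernel := h.isLevyKernel.kernelConst_nonneg
    have hK := h.nonneg
    have ht₂ := ht.2
    have hlen : 0 ≤ t - t₁ := sub_nonneg.2 ht.1
    exact henergy.trans (by gcongr)
  · have ht' := Ioo_subset_Icc_self ht
    have hw := (h.isBddLipschitz t ht').evenDefect
    have hlevy := levyOp_le_mul_levyOp (x := x) (p := 2 * evenDefect (fun x => θ x t) x)
      h.isLevyKernel hw hw.sq fun z => by
        nlinarith [sq_nonneg (evenDefect (fun x => θ x t) x - evenDefect (fun x => θ x t) z)]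
    rw [levyOp_evenDefect h.isLevyKernel (h.isBddLipschitz t ht')] at hlevy
    linarith
  · refine le_trans ?_ (hsource t ht)
    simp only [mul_assoc (-2 : ℝ)]
    rw [integral_const_mul, ← abs_two, ← abs_mul, abs_two, neg_mul]
    exact neg_le_abs _

theorem exists_integral_sq_evenDefect_le (h : IsControlledSolution e κ t₁ t₂ M K θ u u' b b')
    (heven : ∀ x, θ (-x) t₁ = θ x t₁) {V : ℝ} (hV0 : 0 ≤ V)
    (hV : ∀ t ∈ Icc t₁ t₂, ∀ R, 1 ≤ R → ∫ x, u x t ^ 2 * polyWeight e 0 R x ≤ V) :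
    ∃ E, 0 < E ∧ ∀ t ∈ Icc t₁ t₂, ∀ R, 1 ≤ R →
      ∫ x, evenDefect (fun x => θ x t) x ^ 2 * polyWeight e e R x ≤ E := by
  refine ⟨max 1 (Real.exp ((kernelConst e κ + 3 * K + 1) * (t₂ - t₁))
    * (4 * K ^ 2 * V * (t₂ - t₁))), one_pos.trans_le (le_max_left _ _), fun t ht R hR =>
    le_max_of_le_right ?_⟩
  have hφ := isWeight_polyWeight h.exponent_pos h.exponent_le h.exponent_pos.le le_rfl hR
  have hφ₀ := isWeight_polyWeight h.exponent_pos h.exponent_le le_rfl h.exponent_pos.le hR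
  refine h.integral_sq_evenDefect_le heven hφ zero_le_one (by positivity) (fun s hs => ?_) ht
  have hs' := Ioo_subset_Icc_self hs
  have hsource := two_mul_abs_integral_mul_mul_mul_le h.exponent_pos h.exponent_le hR
    (h.isBddLipschitz s hs').evenDefect (h.isBddLipschitz_slope s hs').comp_neg
    (h.sq_drift_add_le hs)
  rw [hφ₀.integral_comp_neg_mul fun x => u x s ^ 2] at hsource
  have hVs := mul_le_mul_of_nonneg_left (hV s hs' R hR) (by positivity : 0 ≤ 4 * K ^ 2)
  linarith

lemma integral_sq_evenDefect_halve (h : IsControlledSolution e κ t₁ t₂ M K θ u u' b b')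
    (heven : ∀ x, θ (-x) t₁ = θ x t₁) {V E : ℝ} (hV0 : 0 ≤ V)
    (hV : ∀ t ∈ Icc t₁ t₂, ∀ R, 1 ≤ R → ∫ x, u x t ^ 2 * polyWeight e 0 R x ≤ V)
    (hδ : Real.exp ((kernelConst e κ + 3 * K + (30 * M + 1)) * (t₂ - t₁))
      * (64 * V * (t₂ - t₁)) ≤ 1 / 2) (hE0 : 0 < E)
    (hE : ∀ t ∈ Icc t₁ t₂, ∀ R, 1 ≤ R →
      ∫ x, evenDefect (fun x => θ x t) x ^ 2 * polyWeight e e R x ≤ E) {t : ℝ}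
    (ht : t ∈ Icc t₁ t₂) {R : ℝ} (hR : 1 ≤ R) :
    ∫ x, evenDefect (fun x => θ x t) x ^ 2 * polyWeight e e R x ≤ E * (1 / 2) := by
  have hM := (h.isBddLipschitz t ht).nonneg
  have hφ := isWeight_polyWeight h.exponent_pos h.exponent_le h.exponent_pos.le le_rfl hR
  have hφ₀ := isWeight_polyWeight h.exponent_pos h.exponent_le le_rfl h.exponent_pos.le hR
  have hsource : ∀ s ∈ Ioo t₁ t₂, 2 * |∫ x, evenDefect (fun x => θ x s) x
        * (b x s + b (-x) s) * u (-x) s * polyWeight e e R x|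
      ≤ (30 * M + 1) * (∫ x, evenDefect (fun x => θ x s) x ^ 2 * polyWeight e e R x)
        + 64 * E * V := fun s hs => by
    have hs' := Ioo_subset_Icc_self hs
    have hθ := h.isBddLipschitz s hs'
    have hle := two_mul_abs_integral_mul_hilbert_mul_le h.exponent_pos h.exponent_le hR
      hθ.evenDefect (h.isBddLipschitz_slope s hs').comp_neg
      (c := fun x => b x s + b (-x) s) (fun x => by
        rw [mul_add]
        exact (h.hasFoldedHilbert s hs' x).evenDefect (h.hasFoldedHilbert s hs' (-x)) hθ)
      (h.integrable_evenDefect_mul_mul hφ hs) hE0 (hE s hs')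
    rw [hφ₀.integral_comp_neg_mul fun x => u x s ^ 2] at hle
    exact hle.trans (by gcongr; exact hV s hs' R hR)
  calc ∫ x, evenDefect (fun x => θ x t) x ^ 2 * polyWeight e e R x
      ≤ Real.exp ((kernelConst e κ + 3 * K + (30 * M + 1)) * (t₂ - t₁))
        * (64 * E * V * (t₂ - t₁)) :=
        h.integral_sq_evenDefect_le heven hφ (by positivity) (by positivity) hsource ht
    _ = E * (Real.exp ((kernelConst e κ + 3 * K + (30 * M + 1)) * (t₂ - t₁))
        * (64 * V * (t₂ - t₁))) := by ring
    _ ≤ E * (1 / 2) := by gcongr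

theorem even_of_exp_mul_le (h : IsControlledSolution e κ t₁ t₂ M K θ u u' b b')
    (heven : ∀ x, θ (-x) t₁ = θ x t₁) {V : ℝ} (hV0 : 0 ≤ V)
    (hV : ∀ t ∈ Icc t₁ t₂, ∀ R, 1 ≤ R → ∫ x, u x t ^ 2 * polyWeight e 0 R x ≤ V)
    (hδ : Real.exp ((kernelConst e κ + 3 * K + (30 * M + 1)) * (t₂ - t₁))
      * (64 * V * (t₂ - t₁)) ≤ 1 / 2) {t : ℝ} (ht : t ∈ Icc t₁ t₂) (x : ℝ) :
    θ (-x) t = θ x t := by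
  obtain ⟨E, hE0, hE⟩ := h.exists_integral_sq_evenDefect_le heven hV0 hV
  have hiter : ∀ n : ℕ, ∀ t ∈ Icc t₁ t₂, ∀ R, 1 ≤ R →
      ∫ x, evenDefect (fun x => θ x t) x ^ 2 * polyWeight e e R x ≤ E * (1 / 2) ^ n := by
    intro n
    induction n with
    | zero => simpa using hE
    | succ n ih =>
      intro t ht R hR
      rw [pow_succ, ← mul_assoc]
      exact h.integral_sq_evenDefect_halve heven hV0 hV hδ (by positivity) ih ht hR
  have hlim : Tendsto (fun n : ℕ => E * (1 / 2 : ℝ) ^ n) atTop (𝓝 0) := by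
    simpa using (tendsto_pow_atTop_nhds_zero_of_lt_one (r := (1 / 2 : ℝ)) (by norm_num)
      (by norm_num)).const_mul E
  have hzero := ge_of_tendsto' hlim fun n => hiter n t ht 1 le_rfl
  have hφ := isWeight_polyWeight h.exponent_pos h.exponent_le h.exponent_pos.le le_rfl le_rfl
  have hsq := eq_zero_of_integral_mul_nonpos hφ.integrable hφ.continuous hφ.pos
    (h.isBddLipschitz t ht).evenDefect.sq (fun _ => sq_nonneg _) hzero x
  rw [sq_eq_zero_iff, evenDefect, sub_eq_zero] at hsq
  exact hsq.symm

end IsControlledSolution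

/-! ### Continuation of evenness -/

lemma antitoneOn_Ici_of_hasDerivAt_nonpos {f f' : ℝ → ℝ} {a : ℝ}
    (hd : ∀ x, HasDerivAt f (f' x) x) (hneg : ∀ x, a < x → f' x ≤ 0) : AntitoneOn f (Ici a) :=
  antitoneOn_of_deriv_nonpos (convex_Ici a) (continuous_of_hasDerivAt hd).continuousOn
    (fun x _ => (hd x).differentiableAt.differentiableWithinAt) fun x hx => by
      rw [interior_Ici] at hx
      rw [(hd x).deriv]
      exact hneg x hx

lemma strictAntiOn_Ici_of_hasDerivAt_neg {f f' : ℝ → ℝ} {a : ℝ}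
    (hd : ∀ x, HasDerivAt f (f' x) x) (hneg : ∀ x, a < x → f' x < 0) : StrictAntiOn f (Ici a) :=
  strictAntiOn_of_deriv_neg (convex_Ici a) (continuous_of_hasDerivAt hd).continuousOn
    fun x hx => by
      rw [interior_Ici] at hx
      rw [(hd x).deriv]
      exact hneg x hx

lemma exists_tendsto_atTop_of_antitoneOn_Ici {f : ℝ → ℝ} {a m : ℝ} (hf : AntitoneOn f (Ici a))
    (hm : ∀ x, m ≤ f x) : ∃ l, Tendsto f atTop (𝓝 l) := by
  have hanti : Antitone fun x => f (max x a) := fun x z hxz =>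
    hf (mem_Ici.2 (le_max_right _ _)) (mem_Ici.2 (le_max_right _ _)) (max_le_max_right a hxz)
  have hbdd : BddBelow (range fun x => f (max x a)) := ⟨m, forall_mem_range.2 fun _ => hm _⟩
  refine ⟨_, (tendsto_atTop_ciInf hanti hbdd).congr' ?_⟩
  filter_upwards [eventually_ge_atTop a] with x hx
  rw [max_eq_left hx]

lemma integrable_of_even_of_integrableOn_Ioi {f : ℝ → ℝ} (heven : Function.Even f)
    (hf : IntegrableOn f (Ioi 0)) : Integrable f := by
  have hIio : IntegrableOn (fun x => f (-x)) (Iio 0) :=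
    (neg_zero (G := ℝ) ▸ hf : IntegrableOn f (Ioi (-0))).comp_neg_Iio
  rw [← integrableOn_univ, ← Iic_union_Ioi (a := (0 : ℝ))]
  refine IntegrableOn.union ?_ hf
  rw [integrableOn_Iic_iff_integrableOn_Iio]
  exact hIio.congr_fun (fun x _ => heven x) measurableSet_Iio

lemma IsBddLipschitz.integrable_sq_deriv_of_even_of_nonpos {f f' : ℝ → ℝ} {A : ℝ}
    (hf : IsBddLipschitz f A) (hd : ∀ x, HasDerivAt f (f' x) x) (heven : Function.Even f)
    (hneg : ∀ x, 0 < x → f' x ≤ 0) : Integrable fun x => f' x ^ 2 := by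
  obtain ⟨l, hl⟩ := exists_tendsto_atTop_of_antitoneOn_Ici
    (antitoneOn_Ici_of_hasDerivAt_nonpos hd hneg) fun x => neg_le_of_abs_le (hf.abs_le x)
  have hf' : IntegrableOn f' (Ioi 0) :=
    integrableOn_Ioi_deriv_of_nonpos' (fun x _ => hd x) hneg hl
  refine integrable_of_even_of_integrableOn_Ioi (fun x => ?_) ?_
  · rw [odd_of_hasDerivAt_of_even hd heven x, neg_sq]
  · simp only [pow_two]
    exact hf'.bdd_mul hf'.aestronglyMeasurable (ae_of_all _ (hf.abs_deriv_le hd))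

lemma apply_abs_of_even {f : ℝ → ℝ} (heven : Function.Even f) (x : ℝ) : f |x| = f x := by
  rcases abs_choice x with hx | hx <;> rw [hx]
  exact heven x

lemma forall_pos_of_even_of_antitoneOn {f : ℝ → ℝ} (heven : Function.Even f)
    (hanti : AntitoneOn f (Ici 0)) (hpos : ∀ᵐ x, 0 < f x) (x : ℝ) : 0 < f x := by
  obtain ⟨z, hz, hxz⟩ : ∃ z, 0 < f z ∧ |x| < z := by
    by_contra! hcon
    have hnull : volume (Ioi |x|) = 0 := measure_mono_null
      (fun z hz hz' => (hcon z hz').not_gt hz) (ae_iff.1 hpos)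
    simp at hnull
  rw [← apply_abs_of_even heven x]
  exact hz.trans_le (hanti (abs_nonneg x) ((abs_nonneg x).trans hxz.le) hxz.le)

namespace IsControlledSolution

variable {e t₁ t₂ M K : ℝ} {κ : ℝ → ℝ} {θ u u' b b' : ℝ → ℝ → ℝ}

lemma exists_integral_sq_slope_le_of_even (h : IsControlledSolution e κ t₁ t₂ M K θ u u' b b')
    (ht : t₁ ≤ t₂) (heven : ∀ x, θ (-x) t₁ = θ x t₁) (hneg : ∀ x, 0 < x → u x t₁ ≤ 0) :
    ∃ V, 0 ≤ V ∧ ∀ t ∈ Icc t₁ t₂, ∀ R, 1 ≤ R → ∫ x, u x t ^ 2 * polyWeight e 0 R x ≤ V := by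
  have ht₁ : t₁ ∈ Icc t₁ t₂ := left_mem_Icc.2 ht
  have hsq : Integrable fun x => u x t₁ ^ 2 :=
    (h.isBddLipschitz t₁ ht₁).integrable_sq_deriv_of_even_of_nonpos (h.hasDerivAt_fst t₁ ht₁)
      heven hneg
  refine ⟨Real.exp ((kernelConst e κ + 3 * K + 2 * K) * (t₂ - t₁)) * ∫ x, u x t₁ ^ 2,
    by positivity, fun t ht R hR => ?_⟩
  have hφ : IsWeight e (polyWeight e 0 R) :=
    isWeight_polyWeight h.exponent_pos h.exponent_le le_rfl h.exponent_pos.le hR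
  have hweight : ∫ x, u x t₁ ^ 2 * polyWeight e 0 R x ≤ ∫ x, u x t₁ ^ 2 :=
    integral_mono ((h.isBddLipschitz_slope t₁ ht₁).sq.integrable_mul hφ.integrable) hsq fun x =>
      mul_le_of_le_one_right (sq_nonneg _) (polyWeight_zero_le_one h.exponent_pos R x)
  have hk := h.isLevyKernel.kernelConst_nonneg
  have hK := h.nonneg
  refine (h.integral_sq_slope_le hφ ht).trans (mul_le_mul ?_ hweight
    (integral_nonneg fun x => mul_nonneg (sq_nonneg _) (hφ.nonneg x)) (Real.exp_pos _).le)
  gcongr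
  exact ht.2

lemma exists_slope_ne_zero (h : IsControlledSolution e κ t₁ t₂ M K θ u u' b b')
    (heven : ∀ x, θ (-x) t₁ = θ x t₁) (hneg : ∀ x, 0 < x → u x t₁ < 0) {t : ℝ}
    (ht : t ∈ Icc t₁ t₂) : ∃ x, u x t ≠ 0 := by
  have ht₁ : t₁ ∈ Icc t₁ t₂ := left_mem_Icc.2 (ht.1.trans ht.2)
  by_contra! hu
  have hθ := h.hasDerivAt_fst t ht
  have hconst : ∀ x, θ x t = θ 0 t := fun x =>
    is_const_of_deriv_eq_zero (fun x => (hθ x).differentiableAt)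
      (fun x => by rw [(hθ x).deriv, hu]) x 0
  have hanti : StrictAntiOn (fun x => θ x t₁) (Ici 0) :=
    strictAntiOn_Ici_of_hasDerivAt_neg (h.hasDerivAt_fst t₁ ht₁) hneg
  have habs : ∀ x, θ |x| t₁ = θ x t₁ := apply_abs_of_even (f := fun x => θ x t₁) heven
  by_cases hle : ∀ x, θ 0 t ≤ θ x t₁
  · have hlt : ∀ x, θ 0 t < θ x t₁ := fun x =>
      calc θ 0 t ≤ θ (|x| + 1) t₁ := hle _
        _ < θ |x| t₁ := hanti (abs_nonneg x) (by positivity : 0 ≤ |x| + 1) (lt_add_one _)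
        _ = θ x t₁ := habs x
    obtain ⟨x, hx⟩ := (h.ae_lt_of_forall_lt hlt ht).exists
    exact hx.ne (hconst x).symm
  · push Not at hle
    obtain ⟨x₁, hx₁⟩ := hle
    refine h.not_forall_eq_of_lt hx₁ (abs_nonneg x₁) (fun x hx => ?_) ht hconst
    rw [← habs x, ← habs x₁]
    exact hanti.antitoneOn (mem_Ici.2 (abs_nonneg _)) (mem_Ici.2 (abs_nonneg _)) hx

end IsControlledSolution

namespace IsSmoothSolution

variable {e t₁ t₂ M : ℝ} {κ : ℝ → ℝ} {θ u u' b b' : ℝ → ℝ → ℝ}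

lemma abs_drift_sub_le (h : IsSmoothSolution e κ t₁ t₂ M θ u u' b b') {t : ℝ}
    (ht : t ∈ Icc t₁ t₂) (x : ℝ) :
    |b x t - b 0 t| ≤ (8 * M + 4 * M / e) * (1 + x ^ 2) ^ (e / 2) := by
  have hgrowth := abs_sub_apply_zero_le_rpow (h.isBddLipschitz t ht) (h.isBddLipschitz_slope t ht)
    (h.hasDerivAt_fst t ht) (h.hasFoldedHilbert t ht) h.exponent_pos x
  rw [← mul_sub, abs_mul, abs_of_pos Real.pi_pos] at hgrowth
  exact (le_mul_of_one_le_left (abs_nonneg _) (by linarith [Real.pi_gt_three])).trans hgrowth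

lemma isControlledSolution (h : IsSmoothSolution e κ t₁ t₂ M θ u u' b b') (ht : t₁ ≤ t₂) {K₀ : ℝ}
    (hK₀ : 0 ≤ K₀) (hb : ∀ t ∈ Ioo t₁ t₂, |b 0 t| ≤ K₀) :
    IsControlledSolution e κ t₁ t₂ M (K₀ + (8 * M + 4 * M / e)) θ u u' b b' := by
  have he := h.exponent_pos
  have hM := (h.isBddLipschitz t₁ (left_mem_Icc.2 ht)).nonneg
  have hMe : 0 ≤ 4 * M / e := by positivity
  refine
    { h with
      nonneg := by positivity
      isDriftField := fun t ht =>
        { hasDerivAt := h.hasDerivAt_drift t ht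
          abs_le := fun x => ?_
          abs_deriv_le := fun x => (h.abs_deriv_drift_le t ht x).trans (by linarith) } }
  calc |b x t| = |b 0 t + (b x t - b 0 t)| := by rw [add_sub_cancel]
    _ ≤ K₀ + (8 * M + 4 * M / e) * (1 + x ^ 2) ^ (e / 2) :=
        (abs_add_le _ _).trans (add_le_add (hb t ht)
          (h.abs_drift_sub_le (Ioo_subset_Icc_self ht) x))
    _ ≤ K₀ * (1 + x ^ 2) ^ (e / 2) + (8 * M + 4 * M / e) * (1 + x ^ 2) ^ (e / 2) := by
        gcongr
        exact le_mul_of_one_le_right hK₀ (one_le_one_add_sq_rpow (by positivity) x)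
    _ = _ := by ring

lemma drift_zero_of_even (h : IsSmoothSolution e κ t₁ t₂ M θ u u' b b') {t : ℝ}
    (ht : t ∈ Icc t₁ t₂) (heven : ∀ x, θ (-x) t = θ x t) : b 0 t = 0 := by
  have hquot : ∀ s, symQuot (fun x => θ x t) 0 s = 0 := fun s => by simp [symQuot, heven]
  have hlim := h.hasFoldedHilbert t ht 0
  simp only [HasFoldedHilbert, hquot, intervalIntegral.integral_zero] at hlim
  simpa [Real.pi_ne_zero] using tendsto_nhds_unique hlim tendsto_const_nhds

lemma isControlledSolution_of_even (h : IsSmoothSolution e κ t₁ t₂ M θ u u' b b') (ht : t₁ ≤ t₂)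
    (heven : ∀ t ∈ Icc t₁ t₂, ∀ x, θ (-x) t = θ x t) :
    IsControlledSolution e κ t₁ t₂ M (8 * M + 4 * M / e) θ u u' b b' := by
  have hcontrolled := h.isControlledSolution ht le_rfl fun t ht => by
    have ht' := Ioo_subset_Icc_self ht
    rw [h.drift_zero_of_even ht' (heven t ht'), abs_zero]
  rwa [zero_add] at hcontrolled

/-- Where `u x t` is away from zero, the equation expresses the drift through `∂ₜθ` and `Lθ`. -/
lemma abs_drift_le_div (h : IsSmoothSolution e κ t₁ t₂ M θ u u' b b') {t x a D : ℝ}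
    (ht : t ∈ Icc t₁ t₂) (ha : 0 < a) (hu : a ≤ |u x t|)
    (hD : |b x t * u x t - levyOp κ (fun x => θ x t) x| ≤ D) :
    |b x t| ≤ (D + 2 * M * ∫ y, min |y| 1 * κ y) / a := by
  rw [le_div_iff₀ ha]
  calc |b x t| * a ≤ |b x t| * |u x t| := mul_le_mul_of_nonneg_left hu (abs_nonneg _)
    _ = |(b x t * u x t - levyOp κ (fun x => θ x t) x) + levyOp κ (fun x => θ x t) x| := by
        rw [sub_add_cancel, abs_mul]
    _ ≤ _ := (abs_add_le _ _).trans
        (add_le_add hD ((h.isBddLipschitz t ht).abs_levyOp_le h.isLevyKernel x))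

lemma exists_abs_drift_zero_le_of_slope_ne_zero (h : IsSmoothSolution e κ t₁ t₂ M θ u u' b b')
    {s x : ℝ} (hs : s ∈ Ico t₁ t₂) (hx : u x s ≠ 0) :
    ∃ r ∈ Ioc s t₂, ∃ K₀, ∀ t ∈ Ioo s r, |b 0 t| ≤ K₀ := by
  obtain ⟨D, hD⟩ := h.exists_abs_deriv_snd_le x
  have hpos : 0 < |u x s| / 2 := half_pos (abs_pos.2 hx)
  have hev : ∀ᶠ t in 𝓝[≥] s, |u x s| / 2 < |u x t| := by
    have hcont : Tendsto (fun t => u x t) (𝓝[Icc s t₂] s) (𝓝 (u x s)) :=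
      (h.continuousOn_slope x s ⟨hs.1, hs.2.le⟩).mono (Icc_subset_Icc_left hs.1)
    rw [nhdsWithin_Icc_eq_nhdsGE hs.2] at hcont
    exact hcont.abs.eventually (lt_mem_nhds (half_lt_self (abs_pos.2 hx)))
  obtain ⟨r, hr, hrs⟩ := (mem_nhdsGE_iff_exists_mem_Ioc_Ico_subset hs.2).1 hev
  refine ⟨r, hr, (D + 2 * M * ∫ y, min |y| 1 * κ y) / (|u x s| / 2)
    + (8 * M + 4 * M / e) * (1 + x ^ 2) ^ (e / 2), fun t ht => ?_⟩
  have htI : t ∈ Ioo t₁ t₂ := ⟨hs.1.trans_lt ht.1, ht.2.trans_le hr.2⟩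
  have htI' := Ioo_subset_Icc_self htI
  calc |b 0 t| = |b x t - (b x t - b 0 t)| := by rw [sub_sub_cancel]
    _ ≤ |b x t| + |b x t - b 0 t| := abs_sub _ _
    _ ≤ _ := add_le_add
        (h.abs_drift_le_div htI' hpos (hrs ⟨ht.1.le, ht.2⟩).le (hD t htI))
        (h.abs_drift_sub_le htI' x)

lemma exists_isControlledSolution_beyond (h : IsSmoothSolution e κ t₁ t₂ M θ u u' b b') {s : ℝ}
    (hs : s ∈ Ico t₁ t₂) (heven : ∀ t ∈ Icc t₁ s, ∀ x, θ (-x) t = θ x t)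
    (hneg : ∀ x, 0 < x → u x t₁ < 0) :
    ∃ r ∈ Ioc s t₂, ∃ K, IsControlledSolution e κ t₁ r M K θ u u' b b' := by
  obtain ⟨x, hx⟩ :=
    ((h.mono le_rfl hs.2.le).isControlledSolution_of_even hs.1 heven).exists_slope_ne_zero
      (heven t₁ (left_mem_Icc.2 hs.1)) hneg (right_mem_Icc.2 hs.1)
  obtain ⟨r, hr, K₀, hK₀⟩ := h.exists_abs_drift_zero_le_of_slope_ne_zero hs hx
  refine ⟨r, hr, _, (h.mono le_rfl hr.2).isControlledSolution (hs.1.trans hr.1.le)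
    (le_max_left 0 K₀) fun t ht => ?_⟩
  rcases le_or_gt t s with hts | hts
  · rw [h.drift_zero_of_even ⟨ht.1.le, hts.trans hs.2.le⟩ (heven t ⟨ht.1.le, hts⟩), abs_zero]
    exact le_max_left _ _
  · exact (hK₀ t ⟨hts, ht.2⟩).trans (le_max_right _ _)

lemma eventually_even (h : IsSmoothSolution e κ t₁ t₂ M θ u u' b b') {s : ℝ}
    (hs : s ∈ Ico t₁ t₂) (heven : ∀ t ∈ Icc t₁ s, ∀ x, θ (-x) t = θ x t)
    (hneg : ∀ x, 0 < x → u x t₁ < 0) : ∀ᶠ t in 𝓝[>] s, ∀ x, θ (-x) t = θ x t := by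
  obtain ⟨r, hr, K, hD⟩ := h.exists_isControlledSolution_beyond hs heven hneg
  obtain ⟨V, hV0, hV⟩ := hD.exists_integral_sq_slope_le_of_even (hs.1.trans hr.1.le)
    (heven t₁ (left_mem_Icc.2 hs.1)) fun x hx => (hneg x hx).le
  have hlim : Tendsto (fun q => Real.exp ((kernelConst e κ + 3 * K + (30 * M + 1)) * (q - s))
      * (64 * V * (q - s))) (𝓝[>] s) (𝓝 0) := by
    refine (Continuous.tendsto' ?_ s 0 (by simp)).mono_left nhdsWithin_le_nhds
    fun_prop
  filter_upwards [hlim.eventually (ge_mem_nhds one_half_pos), Ioc_mem_nhdsGT hr.1] with q hq hqI x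
  exact (hD.mono hs.1 hqI.2).even_of_exp_mul_le (heven s (right_mem_Icc.2 hs.1)) hV0
    (fun t ht => hV t ⟨hs.1.trans ht.1, ht.2.trans hqI.2⟩) hq (right_mem_Icc.2 hqI.1.le) x

theorem even (h : IsSmoothSolution e κ t₁ t₂ M θ u u' b b') (heven : ∀ x, θ (-x) t₁ = θ x t₁)
    (hneg : ∀ x, 0 < x → u x t₁ < 0) : ∀ t ∈ Icc t₁ t₂, ∀ x, θ (-x) t = θ x t := by
  have hclosed : IsClosed ({t | ∀ x, θ (-x) t = θ x t} ∩ Icc t₁ t₂) := by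
    rw [ofPred_forall, iInter_inter]
    refine isClosed_iInter fun x => ?_
    rw [inter_comm]
    exact isClosed_Icc.isClosed_eq (h.continuousOn (-x)) (h.continuousOn x)
  exact hclosed.Icc_subset_of_forall_mem_nhdsGT_of_Icc_subset heven fun s hs hsub =>
    h.eventually_even hs hsub hneg

theorem pos_even_antitoneOn (h : IsSmoothSolution e κ t₁ t₂ M θ u u' b b')
    (hpos : ∀ x, 0 < θ x t₁) (heven : ∀ x, θ (-x) t₁ = θ x t₁) (hneg : ∀ x, 0 < x → u x t₁ < 0)
    {t : ℝ} (ht : t ∈ Icc t₁ t₂) :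
    (∀ x, 0 < θ x t) ∧ (∀ x, θ (-x) t = θ x t) ∧ AntitoneOn (fun x => θ x t) (Ioi 0) := by
  have hev := h.even heven hneg
  have hD := h.isControlledSolution_of_even (ht.1.trans ht.2) hev
  have hanti : AntitoneOn (fun x => θ x t) (Ici 0) :=
    antitoneOn_Ici_of_hasDerivAt_nonpos (h.hasDerivAt_fst t ht) fun x hx =>
      hD.slope_nonpos hev (fun x hx => (hneg x hx).le) ht hx
  exact ⟨forall_pos_of_even_of_antitoneOn (hev t ht) hanti (hD.ae_lt_of_forall_lt hpos ht),
    hev t ht, hanti.mono Ioi_subset_Ici_self⟩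

end IsSmoothSolution

/-! ### The kernels of the fractional dissipation -/

lemma IsLevyKernel.of_le {d e : ℝ} {κ : ℝ → ℝ} (hκ : IsLevyKernel e κ) (hde : d ≤ e) :
    IsLevyKernel d κ :=
  { hκ with
    tail := fun y hy => (hκ.tail y hy).trans (by
      gcongr
      exact one_le_one_add_sq y) }

lemma isLevyKernel_zero {e : ℝ} : IsLevyKernel e fun _ => 0 where
  measurable := measurable_const
  nonneg _ := le_rfl
  even _ := rfl
  anti _ _ _ _ := le_rfl
  tail y _ := by positivity
  integrable := by simp

section RpowKernel

variable {α : ℝ}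

lemma inv_abs_rpow_le_two_mul_one_add_sq_rpow (hα0 : 0 ≤ α) (hα : α ≤ 1 / 2) {y : ℝ}
    (hy : 1 ≤ |y|) :
    (|y| ^ (1 + 2 * α))⁻¹ ≤ 2 * (1 + y ^ 2) ^ (-(1 / 2 + 2 * (α / 2))) := by
  have hy0 : 0 < |y| := one_pos.trans_le hy
  have hbase : 0 < (1 + y ^ 2) ^ (1 / 2 + 2 * (α / 2)) :=
    Real.rpow_pos_of_pos (one_add_sq_pos y) _
  rw [Real.rpow_neg (one_add_sq_pos y).le, ← div_eq_mul_inv, le_div_iff₀ hbase,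
    inv_mul_le_iff₀ (by positivity)]
  calc (1 + y ^ 2) ^ (1 / 2 + 2 * (α / 2)) ≤ (2 * |y| ^ 2) ^ (1 / 2 + 2 * (α / 2)) := by
        gcongr
        rw [sq_abs]
        nlinarith [sq_abs y]
    _ = 2 ^ (1 / 2 + 2 * (α / 2)) * |y| ^ (1 + 2 * α) := by
        rw [Real.mul_rpow (by norm_num) (by positivity), ← Real.rpow_natCast_mul hy0.le]
        congr 2
        push_cast
        ring
    _ ≤ 2 ^ (1 : ℝ) * |y| ^ (1 + 2 * α) := by
        gcongr
        · norm_num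
        · linarith
    _ = |y| ^ (1 + 2 * α) * 2 := by rw [Real.rpow_one, mul_comm]

lemma integrable_min_abs_one_mul_inv_abs_rpow (hα0 : 0 < α) (hα : α < 1 / 2) :
    Integrable fun y : ℝ => min |y| 1 * (|y| ^ (1 + 2 * α))⁻¹ := by
  refine integrable_of_even_of_integrableOn_Ioi (fun y => by simp only [abs_neg]) ?_
  rw [← Ioc_union_Ioi_eq_Ioi zero_le_one]
  refine IntegrableOn.union ?_ ?_
  · have hnear : IntegrableOn (fun y : ℝ => y ^ (-(2 * α))) (Ioc 0 1) :=
      (intervalIntegrable_iff_integrableOn_Ioc_of_le zero_le_one).1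
        (intervalIntegral.intervalIntegrable_rpow' (by linarith))
    refine hnear.congr_fun (fun y hy => ?_) measurableSet_Ioc
    beta_reduce
    rw [abs_of_pos hy.1, min_eq_left hy.2, Real.rpow_add hy.1, Real.rpow_one, mul_inv,
      mul_inv_cancel_left₀ hy.1.ne', Real.rpow_neg hy.1.le]
  · have hfar : IntegrableOn (fun y : ℝ => y ^ (-(1 + 2 * α))) (Ioi 1) :=
      integrableOn_Ioi_rpow_of_lt (by linarith) one_pos
    refine hfar.congr_fun (fun y hy => ?_) measurableSet_Ioi
    have hy0 : 0 < y := one_pos.trans hy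
    beta_reduce
    rw [abs_of_pos hy0, min_eq_right (mem_Ioi.1 hy).le, one_mul, Real.rpow_neg hy0.le]

lemma isLevyKernel_inv_abs_rpow (hα0 : 0 < α) (hα : α < 1 / 2) :
    IsLevyKernel (α / 2) fun y => (|y| ^ (1 + 2 * α))⁻¹ where
  measurable := by fun_prop
  nonneg _ := by positivity
  even _ := by rw [abs_neg]
  anti y z hy hyz := by
    have := abs_pos.2 hy
    gcongr
  tail _ := inv_abs_rpow_le_two_mul_one_add_sq_rpow hα0.le hα.le
  integrable := integrable_min_abs_one_mul_inv_abs_rpow hα0 hα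

end RpowKernel

lemma tendsto_setIntegral_levyOp {e A : ℝ} {κ f : ℝ → ℝ} (hκ : IsLevyKernel e κ)
    (hf : IsBddLipschitz f A) (x : ℝ) :
    Tendsto (fun ε => ∫ y in {y : ℝ | ε < |y|}, (f x - f (x + y)) * κ y) (𝓝[>] 0)
      (𝓝 (levyOp κ f x)) := by
  have hm : ∀ ε : ℝ, MeasurableSet {y : ℝ | ε < |y|} := fun ε =>
    (isOpen_lt continuous_const continuous_abs).measurableSet
  have hint := hf.integrable_sub_mul_kernel hκ x
  simp only [← integral_indicator (hm _)]
  refine tendsto_integral_filter_of_dominated_convergence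
    (fun y => ‖(f x - f (x + y)) * κ y‖)
    (Eventually.of_forall fun ε => hint.aestronglyMeasurable.indicator (hm ε))
    (Eventually.of_forall fun ε => ae_of_all _ fun y => norm_indicator_le_norm_self _ _)
    hint.norm (ae_of_all _ fun y => tendsto_const_nhds.congr' ?_)
  rcases eq_or_ne y 0 with rfl | hy
  · exact Eventually.of_forall fun ε => by simp [indicator]
  · filter_upwards [Ioo_mem_nhdsGT (abs_pos.2 hy)] with ε hε
    exact (indicator_of_mem (s := {y : ℝ | ε < |y|}) hε.2 fun y => (f x - f (x + y)) * κ y).symm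

/-! ### Smoothness on a slab -/

section Slab

variable {f : ℝ × ℝ → ℝ} {a b : ℝ}

lemma contDiff_slab_fst {n : WithTop ℕ∞} (hf : ContDiffOn ℝ n f (univ ×ˢ Icc a b)) {t : ℝ}
    (ht : t ∈ Icc a b) : ContDiff ℝ n fun x => f (x, t) :=
  contDiffOn_univ.1 (hf.comp (by fun_prop) fun x _ => ⟨mem_univ x, ht⟩)

lemma continuousOn_slab_snd (hf : ContinuousOn f (univ ×ˢ Icc a b)) (x : ℝ) :
    ContinuousOn (fun t => f (x, t)) (Icc a b) :=
  hf.comp (by fun_prop) fun _ ht => ⟨mem_univ x, ht⟩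

lemma continuousOn_fderivWithin_slab_apply (hab : a < b)
    (hf : ContDiffOn ℝ 1 f (univ ×ˢ Icc a b)) (v : ℝ × ℝ) (x : ℝ) :
    ContinuousOn (fun t => fderivWithin ℝ f (univ ×ˢ Icc a b) (x, t) v) (Icc a b) :=
  continuousOn_slab_snd ((hf.continuousOn_fderivWithin
    (uniqueDiffOn_univ.prod (uniqueDiffOn_Icc hab)) le_rfl).clm_apply continuousOn_const) x

lemma hasDerivAt_slab_fst (hf : DifferentiableOn ℝ f (univ ×ˢ Icc a b)) {t : ℝ}
    (ht : t ∈ Icc a b) (x : ℝ) :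
    HasDerivAt (fun x => f (x, t)) (fderivWithin ℝ f (univ ×ˢ Icc a b) (x, t) (1, 0)) x := by
  have hline : HasDerivWithinAt (fun x => (x, t)) ((1 : ℝ), (0 : ℝ)) univ x :=
    ((hasDerivAt_id x).prodMk (hasDerivAt_const x t)).hasDerivWithinAt
  exact hasDerivWithinAt_univ.1 ((hf (x, t) ⟨mem_univ x, ht⟩).hasFDerivWithinAt
    |>.comp_hasDerivWithinAt x hline fun _ _ => mk_mem_prod (mem_univ _) ht)

lemma hasDerivWithinAt_slab_snd (hf : DifferentiableOn ℝ f (univ ×ˢ Icc a b)) {t : ℝ}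
    (ht : t ∈ Icc a b) (x : ℝ) :
    HasDerivWithinAt (fun t => f (x, t)) (fderivWithin ℝ f (univ ×ˢ Icc a b) (x, t) (0, 1))
      (Icc a b) t := by
  have hline : HasDerivWithinAt (fun t => (x, t)) ((0 : ℝ), (1 : ℝ)) (Icc a b) t :=
    ((hasDerivAt_const t x).prodMk (hasDerivAt_id t)).hasDerivWithinAt
  exact (hf (x, t) ⟨mem_univ x, ht⟩).hasFDerivWithinAt.comp_hasDerivWithinAt t hline
    fun _ hs => mk_mem_prod (mem_univ _) hs

lemma continuousOn_deriv_slab_fst (hab : a < b) (hf : ContDiffOn ℝ 1 f (univ ×ˢ Icc a b)) (x : ℝ) :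
    ContinuousOn (fun t => deriv (fun x => f (x, t)) x) (Icc a b) :=
  (continuousOn_fderivWithin_slab_apply hab hf (1, 0) x).congr fun _ ht =>
    (hasDerivAt_slab_fst (hf.differentiableOn one_ne_zero) ht x).deriv

lemma exists_abs_deriv_slab_snd_le (hab : a < b) (hf : ContDiffOn ℝ 1 f (univ ×ˢ Icc a b))
    (x : ℝ) : ∃ D, ∀ t ∈ Ioo a b, |deriv (fun t => f (x, t)) t| ≤ D := by
  obtain ⟨D, hD⟩ := isCompact_Icc.exists_bound_of_continuousOn
    (continuousOn_fderivWithin_slab_apply hab hf (0, 1) x)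
  refine ⟨D, fun t ht => ?_⟩
  have ht' := Ioo_subset_Icc_self ht
  rw [((hasDerivWithinAt_slab_snd (hf.differentiableOn one_ne_zero) ht' x).hasDerivAt
    (Icc_mem_nhds ht.1 ht.2)).deriv]
  exact hD t ht'

lemma hasDerivAt_partial_comm {x t w' : ℝ} {u w : ℝ → ℝ} (hf : ContDiffAt ℝ 2 f (x, t))
    (hu : ∀ᶠ s in 𝓝 t, HasDerivAt (fun z => f (z, s)) (u s) x)
    (hw : ∀ᶠ z in 𝓝 x, HasDerivAt (fun s => f (z, s)) (w z) t) (hw' : HasDerivAt w w' x) :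
    HasDerivAt u w' t := by
  have hd : ∀ᶠ p in 𝓝 (x, t), HasFDerivAt f (fderiv ℝ f p) p :=
    (hf.eventually (by simp)).mono fun p hp => (hp.differentiableAt two_ne_zero).hasFDerivAt
  have hu' : u =ᶠ[𝓝 t] fun s => fderiv ℝ f (x, s) (1, 0) := by
    filter_upwards [hu, (Continuous.prodMk_right x).tendsto t |>.eventually hd] with s hs hds
    exact hs.unique (hds.comp_hasDerivAt x ((hasDerivAt_id x).prodMk (hasDerivAt_const x s)))
  have hw'' : w =ᶠ[𝓝 x] fun z => fderiv ℝ f (z, t) (0, 1) := by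
    filter_upwards [hw, (Continuous.prodMk_left t).tendsto x |>.eventually hd] with z hz hdz
    exact hz.unique (hdz.comp_hasDerivAt t ((hasDerivAt_const t z).prodMk (hasDerivAt_id t)))
  have hd2 : HasFDerivAt (fderiv ℝ f) (fderiv ℝ (fderiv ℝ f) (x, t)) (x, t) :=
    ((hf.fderiv_right (m := 1) (by norm_num)).differentiableAt one_ne_zero).hasFDerivAt
  have hx : HasDerivAt (fun z => fderiv ℝ f (z, t) (0, 1))
      (fderiv ℝ (fderiv ℝ f) (x, t) (1, 0) (0, 1)) x :=
    (ContinuousLinearMap.apply ℝ ℝ ((0 : ℝ), (1 : ℝ))).hasFDerivAt.comp_hasDerivAt x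
      (hd2.comp_hasDerivAt x ((hasDerivAt_id x).prodMk (hasDerivAt_const x t)))
  have ht : HasDerivAt (fun s => fderiv ℝ f (x, s) (1, 0))
      (fderiv ℝ (fderiv ℝ f) (x, t) (0, 1) (1, 0)) t :=
    (ContinuousLinearMap.apply ℝ ℝ ((1 : ℝ), (0 : ℝ))).hasFDerivAt.comp_hasDerivAt t
      (hd2.comp_hasDerivAt t ((hasDerivAt_const t x).prodMk (hasDerivAt_id t)))
  have hsymm : IsSymmSndFDerivAt ℝ f (x, t) := hf.isSymmSndFDerivAt (by simp)
  rw [hw'.unique (hx.congr_of_eventuallyEq hw''), hsymm.eq]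
  exact ht.congr_of_eventuallyEq hu'

end Slab

/-! ### Preservation of monotonicity -/

lemma isBddLipschitz_and_deriv_of_contDiff_two {f : ℝ → ℝ} {M : ℝ} (hf : ContDiff ℝ 2 f)
    (hM : ∀ j ≤ 2, ∀ x, |iteratedDeriv j f x| ≤ M) :
    IsBddLipschitz f M ∧ IsBddLipschitz (deriv f) M := by
  have h0 := hM 0 zero_le_two
  have h1 := hM 1 one_le_two
  have h2 := hM 2 le_rfl
  simp only [iteratedDeriv_zero] at h0
  simp only [iteratedDeriv_one] at h1
  simp only [iteratedDeriv_succ, iteratedDeriv_zero] at h2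
  have hdiff := hf.differentiable_deriv_two
  exact ⟨.of_hasDerivAt h0 (fun x => (hf.differentiable two_ne_zero x).hasDerivAt) h1,
    .of_hasDerivAt h1 (fun x => (hdiff x).hasDerivAt) h2⟩

lemma IsBddLipschitz.exists_hasDerivAt_hilbert {f f' H : ℝ → ℝ} {A : ℝ} (hf : IsBddLipschitz f A)
    (hf' : IsBddLipschitz f' A) (hd : ∀ x, HasDerivAt f (f' x) x)
    (hH : ∀ x, HasFoldedHilbert f x (Real.pi * H x)) :
    ∃ H' : ℝ → ℝ, (∀ x, HasDerivAt H (H' x) x) ∧ ∀ x, |H' x| ≤ 6 * A := by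
  obtain ⟨V', hV', hV'A⟩ := exists_hasDerivAt_of_hasFoldedHilbert hf hf' hd hH
  refine ⟨fun x => Real.pi⁻¹ * V' x, fun x => ?_, fun x => ?_⟩
  · simpa only [inv_mul_cancel_left₀ Real.pi_ne_zero] using (hV' x).const_mul Real.pi⁻¹
  · rw [abs_mul, abs_of_pos (inv_pos.2 Real.pi_pos), inv_mul_le_iff₀ Real.pi_pos]
    nlinarith [hV'A x, hf.nonneg, Real.pi_gt_three]

section SlabSolution

variable {e a b : ℝ} {κ : ℝ → ℝ} {θ Hθ : ℝ → ℝ → ℝ}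

lemma exists_forall_isBddLipschitz_slab
    (hsmooth : ContDiffOn ℝ 2 (fun p : ℝ × ℝ => θ p.1 p.2) (univ ×ˢ Icc a b))
    (hderivbdd : ∀ j ≤ 2, ∃ M, ∀ x, ∀ t ∈ Icc a b, |iteratedDeriv j (fun x' => θ x' t) x| ≤ M) :
    ∃ M, ∀ t ∈ Icc a b, IsBddLipschitz (fun x => θ x t) M ∧
      IsBddLipschitz (deriv fun x => θ x t) M := by
  choose! M hM using hderivbdd
  obtain ⟨A, hA⟩ := (finite_Iic 2).image M |>.bddAbove
  exact ⟨A, fun t ht => isBddLipschitz_and_deriv_of_contDiff_two (contDiff_slab_fst hsmooth ht)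
    fun j hj x => (hM j hj x t ht).trans (hA (mem_image_of_mem M hj))⟩

lemma hasDerivAt_slope_snd_of_hasDerivAt {A t : ℝ} {H' : ℝ → ℝ} (hκ : IsLevyKernel e κ)
    (ht : t ∈ Ioo a b)
    (hsmooth : ContDiffOn ℝ 2 (fun p : ℝ × ℝ => θ p.1 p.2) (univ ×ˢ Icc a b))
    (hf : IsBddLipschitz (fun x => θ x t) A)
    (hf' : IsBddLipschitz (deriv fun x => θ x t) A)
    (hH : ∀ x, HasDerivAt (fun x => Hθ x t) (H' x) x)
    (hPDE : ∀ x, HasDerivAt (fun s => θ x s)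
      (Hθ x t * deriv (fun x' => θ x' t) x - levyOp κ (fun x' => θ x' t) x) t) (x : ℝ) :
    HasDerivAt (fun s => deriv (fun x' => θ x' s) x)
      (H' x * deriv (fun x' => θ x' t) x + (Hθ x t * deriv (deriv fun x' => θ x' t) x -
        levyOp κ (deriv fun x' => θ x' t) x)) t := by
  have hslice := contDiff_slab_fst hsmooth (Ioo_subset_Icc_self ht)
  have hθ : ∀ z, HasDerivAt (fun x' => θ x' t) (deriv (fun x' => θ x' t) z) z := fun z =>
    (hslice.differentiable two_ne_zero z).hasDerivAt
  have hu : HasDerivAt (deriv fun x' => θ x' t) (deriv (deriv fun x' => θ x' t) x) x :=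
    (hslice.differentiable_deriv_two x).hasDerivAt
  have hslope : ∀ᶠ s in 𝓝 t, HasDerivAt (fun z => θ z s) (deriv (fun x' => θ x' s) x) x := by
    filter_upwards [Icc_mem_nhds ht.1 ht.2] with s hs
    exact ((contDiff_slab_fst hsmooth hs).differentiable two_ne_zero x).hasDerivAt
  rw [← add_sub_assoc]
  exact hasDerivAt_partial_comm
    (hsmooth.contDiffAt (prod_mem_nhds univ_mem (Icc_mem_nhds ht.1 ht.2))) hslope
    (Eventually.of_forall hPDE) (((hH x).mul hu).sub (hasDerivAt_levyOp hκ hf hf' hθ x))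

lemma exists_isSmoothSolution (he : 0 < e) (he' : e ≤ 1 / 4) (hκ : IsLevyKernel e κ) (hab : a < b)
    (hsmooth : ContDiffOn ℝ 2 (fun p : ℝ × ℝ => θ p.1 p.2) (univ ×ˢ Icc a b))
    (hderivbdd : ∀ j ≤ 2, ∃ M, ∀ x, ∀ t ∈ Icc a b, |iteratedDeriv j (fun x' => θ x' t) x| ≤ M)
    (hHilbert : ∀ t ∈ Icc a b, ∀ x, HilbertPVAt (fun x' => θ x' t) x (Real.pi * Hθ x t))
    (hPDE : ∀ x, ∀ t ∈ Ioo a b, HasDerivAt (fun s => θ x s)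
      (Hθ x t * deriv (fun x' => θ x' t) x - levyOp κ (fun x' => θ x' t) x) t) :
    ∃ M u' H', IsSmoothSolution e κ a b M θ (fun x t => deriv (fun x' => θ x' t) x) u' Hθ H' := by
  obtain ⟨M, hM⟩ := exists_forall_isBddLipschitz_slab hsmooth hderivbdd
  have hsmooth₁ : ContDiffOn ℝ 1 (fun p : ℝ × ℝ => θ p.1 p.2) (univ ×ˢ Icc a b) :=
    hsmooth.of_le one_le_two
  have hθ : ∀ t ∈ Icc a b, ∀ x, HasDerivAt (fun x => θ x t) (deriv (fun x => θ x t) x) x :=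
    fun t ht x => ((contDiff_slab_fst hsmooth ht).differentiable two_ne_zero x).hasDerivAt
  have hfolded : ∀ t ∈ Icc a b, ∀ x, HasFoldedHilbert (fun x => θ x t) x (Real.pi * Hθ x t) :=
    fun t ht x => (hHilbert t ht x).hasFoldedHilbert (hM t ht).1
  have hdrift : ∀ t ∈ Icc a b, ∃ H' : ℝ → ℝ,
      (∀ x, HasDerivAt (fun x => Hθ x t) (H' x) x) ∧ ∀ x, |H' x| ≤ 6 * M := fun t ht =>
    (hM t ht).1.exists_hasDerivAt_hilbert (hM t ht).2 (hθ t ht) (hfolded t ht)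
  choose! H' hH' hH'M using hdrift
  refine ⟨M, fun x t => deriv (deriv fun x' => θ x' t) x, fun x t => H' t x, ?_⟩
  exact
    { exponent_pos := he
      exponent_le := he'
      isLevyKernel := hκ
      continuousOn := continuousOn_slab_snd hsmooth.continuousOn
      continuousOn_slope := continuousOn_deriv_slab_fst hab hsmooth₁
      hasDerivAt_fst := hθ
      hasDerivAt_slope_fst := fun t ht x =>
        ((contDiff_slab_fst hsmooth ht).differentiable_deriv_two x).hasDerivAt
      isBddLipschitz := fun t ht => (hM t ht).1
      isBddLipschitz_slope := fun t ht => (hM t ht).2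
      hasFoldedHilbert := hfolded
      hasDerivAt_snd := fun t ht x => hPDE x t ht
      hasDerivAt_slope_snd := fun t ht =>
        have ht' := Ioo_subset_Icc_self ht
        hasDerivAt_slope_snd_of_hasDerivAt hκ ht hsmooth (hM t ht').1 (hM t ht').2 (hH' t ht')
          fun x => hPDE x t ht
      hasDerivAt_drift := fun t ht => hH' t (Ioo_subset_Icc_self ht)
      abs_deriv_drift_le := fun t ht => hH'M t (Ioo_subset_Icc_self ht)
      exists_abs_deriv_snd_le := fun x => (exists_abs_deriv_slab_snd_le hab hsmooth₁ x).imp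
        fun D hD t ht => (hPDE x t ht).deriv ▸ hD t ht }

end SlabSolution

theorem ccf_monotonicity_preservation_general {e T : ℝ} {κ : ℝ → ℝ} (he : 0 < e)
    (hκ : IsLevyKernel e κ) {θ Hθ Lθ : ℝ → ℝ → ℝ}
    (hsmooth : ContDiffOn ℝ 2 (fun p : ℝ × ℝ => θ p.1 p.2) (univ ×ˢ Icc 0 T))
    (hderivbdd : ∀ j ≤ 2, ∃ M, ∀ x, ∀ t ∈ Icc 0 T, |iteratedDeriv j (fun x' => θ x' t) x| ≤ M)
    (hHilbert : ∀ t ∈ Icc 0 T, ∀ x, HilbertPVAt (fun x' => θ x' t) x (Real.pi * Hθ x t))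
    (hL : ∀ t ∈ Icc 0 T, ∀ x,
      Tendsto (fun ε => ∫ y in {y : ℝ | ε < |y|}, (θ x t - θ (x + y) t) * κ y) (𝓝[>] 0)
        (𝓝 (Lθ x t)))
    (hPDE : ∀ x, ∀ t ∈ Icc 0 T, HasDerivWithinAt (fun s => θ x s)
      (Hθ x t * deriv (fun x' => θ x' t) x - Lθ x t) (Icc 0 T) t)
    (hpos0 : ∀ x, 0 < θ x 0) (heven0 : ∀ x, θ (-x) 0 = θ x 0)
    (hmono0 : ∀ x > 0, deriv (fun x' => θ x' 0) x < 0) :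
    ∀ t ∈ Icc 0 T, (∀ x, 0 < θ x t) ∧ (∀ x, θ (-x) t = θ x t) ∧
      AntitoneOn (fun x => θ x t) (Ioi 0) := by
  intro t ht
  rcases (ht.1.trans ht.2).eq_or_lt with rfl | hT
  · obtain rfl : t = 0 := le_antisymm ht.2 ht.1
    have hθ : ∀ x, HasDerivAt (fun x => θ x 0) (deriv (fun x => θ x 0) x) x := fun x =>
      ((contDiff_slab_fst hsmooth ht).differentiable two_ne_zero x).hasDerivAt
    exact ⟨hpos0, heven0,
      ((strictAntiOn_Ici_of_hasDerivAt_neg hθ hmono0).mono Ioi_subset_Ici_self).antitoneOn⟩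
  obtain ⟨M, hM⟩ := exists_forall_isBddLipschitz_slab hsmooth hderivbdd
  have hL' : ∀ t ∈ Icc 0 T, ∀ x, Lθ x t = levyOp κ (fun x' => θ x' t) x := fun t ht x =>
    tendsto_nhds_unique (hL t ht x) (tendsto_setIntegral_levyOp hκ (hM t ht).1 x)
  obtain ⟨_, _, _, hsol⟩ := exists_isSmoothSolution (lt_min he (by norm_num))
    (min_le_right e (1 / 4)) (hκ.of_le (min_le_left e (1 / 4))) hT hsmooth hderivbdd hHilbert
    fun x t ht =>
      have ht' := Ioo_subset_Icc_self ht
      hL' t ht' x ▸ (hPDE x t ht').hasDerivAt (Icc_mem_nhds ht.1 ht.2)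
  exact hsol.pos_even_antitoneOn hpos0 heven0 hmono0 ht

/-- **Preservation of positivity, evenness and monotonicity for the CCF equation
(Lemma ccfmon).** If `0 ≤ α < 1/2` and `θ` is a smooth bounded solution (with bounded
spatial derivatives) of `∂_t θ = (Hθ)∂_x θ − L_α θ` on `[0,T]` whose initial data is smooth,
bounded, positive, even, and strictly monotone decaying on `(0,∞)`, then `θ(·,t)` remains
positive, even, and monotone decaying on `(0,∞)` for all `t ∈ [0,T]`. -/
theorem ccf_monotonicity_preservation (α T : ℝ) (hα0 : 0 ≤ α) (hα : α < 1/2) (hT : 0 ≤ T)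
    (θ Hθ Lθ : ℝ → ℝ → ℝ)
    (hsmooth : ContDiffOn ℝ (⊤ : ℕ∞) (fun p : ℝ × ℝ => θ p.1 p.2) (univ ×ˢ Icc 0 T))
    (hbdd : ∃ M, ∀ x, ∀ t ∈ Icc (0:ℝ) T, |θ x t| ≤ M)
    (hderivbdd : ∀ j : ℕ, ∃ M, ∀ x, ∀ t ∈ Icc (0:ℝ) T,
      |iteratedDeriv j (fun x' => θ x' t) x| ≤ M)
    (hHilbert : ∀ t ∈ Icc (0:ℝ) T, ∀ x,
      HilbertPVAt (fun x' => θ x' t) x (Real.pi * Hθ x t))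
    (hL0 : α = 0 → ∀ x t, Lθ x t = 0)
    (hLpos : 0 < α → ∀ t ∈ Icc (0:ℝ) T, ∀ x,
      Tendsto (fun ε => ∫ y in {y : ℝ | ε < |y|},
          (θ x t - θ (x + y) t) / |y| ^ (1 + 2*α))
        (nhdsWithin 0 (Ioi 0)) (nhds (Lθ x t)))
    (hPDE : ∀ x, ∀ t ∈ Icc (0:ℝ) T,
      HasDerivWithinAt (fun s => θ x s)
        (Hθ x t * deriv (fun x' => θ x' t) x - Lθ x t) (Icc 0 T) t)
    (hpos0 : ∀ x, 0 < θ x 0)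
    (heven0 : ∀ x, θ (-x) 0 = θ x 0)
    (hmono0 : ∀ x > (0:ℝ), deriv (fun x' => θ x' 0) x < 0) :
    ∀ t ∈ Icc (0:ℝ) T,
      (∀ x, 0 < θ x t) ∧ (∀ x, θ (-x) t = θ x t) ∧
      AntitoneOn (fun x => θ x t) (Ioi 0) := by
  have hsmooth₂ := hsmooth.of_le (m := 2) (by norm_cast)
  rcases hα0.eq_or_lt with rfl | hα0
  · have hL : ∀ t ∈ Icc 0 T, ∀ x,
        Tendsto (fun ε => ∫ y in {y : ℝ | ε < |y|}, (θ x t - θ (x + y) t) * 0) (𝓝[>] 0)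
          (𝓝 (Lθ x t)) := by simp [hL0 rfl]
    exact ccf_monotonicity_preservation_general one_pos isLevyKernel_zero hsmooth₂
      (fun j _ => hderivbdd j) hHilbert hL hPDE hpos0 heven0 hmono0
  · exact ccf_monotonicity_preservation_general (half_pos hα0)
      (isLevyKernel_inv_abs_rpow hα0 hα) hsmooth₂ (fun j _ => hderivbdd j) hHilbert (hLpos hα0)
      hPDE hpos0 heven0 hmono0
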